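/- arXiv:2010.00478 — 3 statements merged into one kernel-verified Lean document; each statement's English description precedes it below -/
import Mathlib

section
/- Let d be a positive integer and let μ₁, …, μ_d be finite measures on ℝ^d, each absolutely continuous with respect to the Lebesgue measure. Then there exist a nonzero vector v ∈ ℝ^d and a real number α such that for every i = 1, …, d, μ_i({x : ⟨x, v⟩ ≤ α}) = μ_i({x : ⟨x, v⟩ ≥ α}); that is, the hyperplane {x : ⟨x, v⟩ = α} splits each measure into two halves. -/
open MeasureTheory
open scoped RealInnerProductSpace
open Module
theorem hs_char_aux (A : Type) [CommRing A] [Algebra ℝ A] (k : ℕ) :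
    ∀ (M : Type) [AddCommGroup M] [Module ℝ M] [Module A M] [IsScalarTower ℝ A M]
    [Module.Finite ℝ M], finrank ℝ M = k → Odd k → Nonempty (A →ₐ[ℝ] ℝ) := by
  induction k using Nat.strong_induction_on with
  | _ k ih =>
  intro M _ _ _ _ _ hk hodd
  have : IsArtinian A M := isArtinian_of_tower ℝ inferInstance
  have hnt : Nontrivial M := by
    apply Module.nontrivial_of_finrank_pos (R := ℝ)
    rw [hk]; exact hodd.pos
  obtain ⟨S, hS⟩ := IsAtomic.exists_atom (Submodule A M)
  have hS' : IsSimpleModule A S := isSimpleModule_iff_isAtom.2 hS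
  obtain ⟨I, hI, ⟨e⟩⟩ := isSimpleModule_iff_quot_maximal.1 hS'
  let : Field (A ⧸ I) := Ideal.Quotient.field I
  have hfS : Module.Finite ℝ S := Module.Finite.of_injective (S.subtype.restrictScalars ℝ) S.injective_subtype
  have hf : Module.Finite ℝ (A ⧸ I) := Module.Finite.equiv (e.restrictScalars ℝ)
  have hd1 : finrank ℝ S = finrank ℝ (A ⧸ I) := LinearEquiv.finrank_eq (e.restrictScalars ℝ)
  rcases Real.nonempty_algEquiv_or (A ⧸ I) with ⟨⟨f⟩⟩ | ⟨⟨f⟩⟩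
  · exact ⟨(f : (A ⧸ I) →ₐ[ℝ] ℝ).comp (Ideal.Quotient.mkₐ ℝ I)⟩
  · have h2 : finrank ℝ S = 2 := by
      rw [hd1, LinearEquiv.finrank_eq f.toLinearEquiv, Complex.finrank_real_complex]
    have h3 : finrank ℝ (M ⧸ S) + finrank ℝ S = finrank ℝ M :=
      Submodule.finrank_quotient_add_finrank (S.restrictScalars ℝ)
    have hfq : Module.Finite ℝ (M ⧸ S) :=
      Module.Finite.of_surjective (S.mkQ.restrictScalars ℝ) S.mkQ_surjective
    refine ih (finrank ℝ (M ⧸ S)) (by omega) (M ⧸ S) rfl ?_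
    rw [← hk, ← h3, h2] at hodd
    exact (Nat.odd_add.1 hodd).2 (by decide)


open MvPolynomial in
theorem hs_degree_monomial {n : ℕ} (a : Fin n →₀ ℕ) (c : ℝ) :
    (monomial a c).totalDegree ≤ a.degree := by
  classical
  refine (totalDegree_monomial_le a c).trans ?_
  rw [Finsupp.degree_apply]; rfl

def hsRest (n d k : ℕ) : Set (Fin n →₀ ℕ) := {a | ∃ i : Fin n, i.val < k ∧ d ≤ a i}

open Classical MvPolynomial in
noncomputable def hsb {n : ℕ} (d : ℕ) (h : Fin n → MvPolynomial (Fin n) ℝ) (a : Fin n →₀ ℕ) :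
    MvPolynomial (Fin n) ℝ :=
  if hh : ∃ i, d ≤ a i ∧ ∀ j < i, a j < d then
    monomial (a - Finsupp.single hh.choose d) 1 * h hh.choose else 0

open Classical MvPolynomial in
noncomputable def hsB {n : ℕ} (d : ℕ) (h : Fin n → MvPolynomial (Fin n) ℝ) (k : ℕ) :
    MvPolynomial (Fin n) ℝ →ₗ[ℝ] MvPolynomial (Fin n) ℝ :=
  (basisMonomials (Fin n) ℝ).constr ℝ (fun a => if a ∈ hsRest n d k then hsb d h a else 0)

open Classical MvPolynomial in
theorem hsB_monomial {n : ℕ} (d : ℕ) (h : Fin n → MvPolynomial (Fin n) ℝ) (k : ℕ)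
    (a : Fin n →₀ ℕ) :
    hsB d h k (monomial a 1) = if a ∈ hsRest n d k then hsb d h a else 0 := by
  have := (basisMonomials (Fin n) ℝ).constr_basis ℝ
    (fun a => if a ∈ hsRest n d k then hsb d h a else 0) a
  rwa [coe_basisMonomials] at this

open MvPolynomial in
theorem hsb_eq {n : ℕ} (d : ℕ) (h : Fin n → MvPolynomial (Fin n) ℝ) (a : Fin n →₀ ℕ)
    (i : Fin n) (hi : d ≤ a i) (hj : ∀ j < i, a j < d) :
    hsb d h a = monomial (a - Finsupp.single i d) 1 * h i := by
  have hh : ∃ i, d ≤ a i ∧ ∀ j < i, a j < d := ⟨i, hi, hj⟩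
  have : hh.choose = i := by
    have h1 := hh.choose_spec
    rcases lt_trichotomy hh.choose i with h2 | h2 | h2
    · have := hj _ h2; omega
    · exact h2
    · have := h1.2 _ h2; omega
  rw [hsb, dif_pos hh, this]

theorem hsRest_first {n d k : ℕ} {a : Fin n →₀ ℕ} (ha : a ∈ hsRest n d k) :
    ∃ i : Fin n, i.val < k ∧ d ≤ a i ∧ ∀ j < i, a j < d := by
  classical
  obtain ⟨i, hik, hi⟩ := ha
  let s := Finset.univ.filter (fun i : Fin n => d ≤ a i)
  have hs : s.Nonempty := ⟨i, by simp [s, hi]⟩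
  refine ⟨s.min' hs, ?_, ?_, ?_⟩
  · have := s.min'_le i (by simp [s, hi])
    exact lt_of_le_of_lt this hik
  · have := s.min'_mem hs
    simpa [s] using this
  · intro j hj
    by_contra hc
    have := s.min'_le j (by simp [s]; omega)
    exact absurd hj (not_lt.2 this)

open MvPolynomial in
theorem hsb_degree {n : ℕ} (d : ℕ) (h : Fin n → MvPolynomial (Fin n) ℝ)
    (hdeg : ∀ i, (h i).totalDegree ≤ d) (a : Fin n →₀ ℕ) :
    (hsb d h a).totalDegree ≤ a.degree := by
  by_cases hh : ∃ i, d ≤ a i ∧ ∀ j < i, a j < d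
  · obtain ⟨i, hi, hj⟩ := hh
    rw [hsb_eq d h a i hi hj]
    refine (totalDegree_mul _ _).trans ?_
    have h1 := hs_degree_monomial (a - Finsupp.single i d) 1
    have h2 := hdeg i
    have h3 : a = (a - Finsupp.single i d) + Finsupp.single i d := by
      ext j
      by_cases hji : i = j
      · subst hji; simp; omega
      · simp [hji]
    have h4 : a.degree = (a - Finsupp.single i d).degree + d := by
      conv_lhs => rw [h3]
      rw [map_add]; simp
    omega
  · rw [hsb, dif_neg hh]; simp

open MvPolynomial in
theorem hsB_degree {n : ℕ} (d : ℕ) (h : Fin n → MvPolynomial (Fin n) ℝ)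
    (hdeg : ∀ i, (h i).totalDegree ≤ d) (k m : ℕ) (p : MvPolynomial (Fin n) ℝ)
    (hp : p ∈ restrictTotalDegree (Fin n) ℝ m) :
    hsB d h k p ∈ restrictTotalDegree (Fin n) ℝ m := by
  classical
  rw [p.as_sum, map_sum]
  refine Submodule.sum_mem _ fun a ha => ?_
  have h1 : (monomial a) (coeff a p) = (coeff a p) • (monomial a (1:ℝ)) := by
    rw [smul_monomial]; simp
  rw [h1, map_smul]
  refine Submodule.smul_mem _ _ ?_
  rw [hsB_monomial]
  split_ifs
  · rw [mem_restrictTotalDegree] at hp ⊢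
    refine (hsb_degree d h hdeg a).trans (le_trans ?_ hp)
    have := le_totalDegree ha
    rw [Finsupp.degree_apply]; exact this
  · exact Submodule.zero_mem _

open MvPolynomial in
noncomputable def hsPsi {n : ℕ} (d : ℕ) (h : Fin n → MvPolynomial (Fin n) ℝ) (s : ℝ) (k : ℕ) :
    MvPolynomial (Fin n) ℝ →ₗ[ℝ] MvPolynomial (Fin n) ℝ :=
  hsB d h k + s • LinearMap.id

open MvPolynomial in
theorem hs_exists_s {n : ℕ} (d : ℕ) (h : Fin n → MvPolynomial (Fin n) ℝ)
    (hdeg : ∀ i, (h i).totalDegree ≤ d) (ε : ℝ) (hε : 0 < ε) :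
    ∃ s : ℝ, 0 < s ∧ s < ε ∧ ∀ k, Function.Bijective (hsPsi d h s k) := by
  let T (k m : ℕ) : Module.End ℝ (restrictTotalDegree (Fin n) ℝ m) :=
    (hsB d h k).restrict (hsB_degree d h hdeg k m)
  let bad : Set ℝ := ⋃ k, ⋃ m, {x | (T k m).HasEigenvalue x}
  have hbad : bad.Countable :=
    Set.countable_iUnion fun k => Set.countable_iUnion fun m =>
      (Module.End.finite_hasEigenvalue (T k m)).countable
  have hex : ∃ x ∈ Set.Ioo (-ε) 0, x ∉ bad := by
    by_contra! hc
    have h1 : (Set.Ioo (-ε) (0:ℝ)).Countable := hbad.mono hc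
    have h2 := (Cardinal.mk_Ioo_real (show -ε < 0 by linarith))
    have h3 := Cardinal.le_aleph0_iff_set_countable.2 h1
    rw [h2] at h3
    exact absurd h3 (not_le.2 Cardinal.aleph0_lt_continuum)
  obtain ⟨x, ⟨hx1, hx2⟩, hxb⟩ := hex
  have hinj : ∀ k, Function.Injective (hsPsi d h (-x) k) := by
    intro k
    rw [← LinearMap.ker_eq_bot, LinearMap.ker_eq_bot']
    intro p hp
    by_contra hp0
    apply hxb
    simp only [bad, Set.mem_iUnion]
    have hpm : p ∈ restrictTotalDegree (Fin n) ℝ p.totalDegree := by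
      rw [mem_restrictTotalDegree]
    refine ⟨k, p.totalDegree, ?_⟩
    refine Module.End.hasEigenvalue_of_hasEigenvector (x := ⟨p, hpm⟩) ?_
    rw [Module.End.hasEigenvector_iff, Module.End.mem_eigenspace_iff]
    refine ⟨?_, ?_⟩
    · apply Subtype.ext
      have : hsB d h k p + (-x) • p = 0 := hp
      show hsB d h k p = x • p
      rw [neg_smul] at this
      exact eq_of_sub_eq_zero (by rw [sub_eq_add_neg]; exact this)
    · intro h0; exact hp0 (congrArg Subtype.val h0)
  refine ⟨-x, by linarith, by linarith, fun k => ⟨hinj k, ?_⟩⟩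
  intro p
  have hpm : p ∈ restrictTotalDegree (Fin n) ℝ p.totalDegree := by
    rw [mem_restrictTotalDegree]
  have hpres : ∀ q ∈ restrictTotalDegree (Fin n) ℝ p.totalDegree,
      hsPsi d h (-x) k q ∈ restrictTotalDegree (Fin n) ℝ p.totalDegree := fun q hq =>
    Submodule.add_mem _ (hsB_degree d h hdeg k _ q hq) (Submodule.smul_mem _ _ hq)
  have hs : Function.Surjective ((hsPsi d h (-x) k).restrict hpres) := by
    rw [← LinearMap.injective_iff_surjective]
    intro u v huv
    exact Subtype.ext (hinj k (congrArg Subtype.val huv))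
  obtain ⟨q, hq⟩ := hs ⟨p, hpm⟩
  exact ⟨q, congrArg Subtype.val hq⟩

open MvPolynomial in
noncomputable def hsRS (n d k : ℕ) : Submodule ℝ (MvPolynomial (Fin n) ℝ) :=
  Submodule.span ℝ ((fun a => monomial a (1:ℝ)) '' hsRest n d k)

open MvPolynomial in
noncomputable def hsNS (n d k : ℕ) : Submodule ℝ (MvPolynomial (Fin n) ℝ) :=
  Submodule.span ℝ ((fun a => monomial a (1:ℝ)) '' (hsRest n d k)ᶜ)

open MvPolynomial in
theorem hs_compl (n d k : ℕ) : IsCompl (hsRS n d k) (hsNS n d k) := by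
  have hb := (basisMonomials (Fin n) ℝ).linearIndependent
  have hs := (basisMonomials (Fin n) ℝ).span_eq
  rw [coe_basisMonomials] at hb hs
  refine ⟨hb.disjoint_span_image disjoint_compl_right, ?_⟩
  rw [codisjoint_iff, hsRS, hsNS, ← Submodule.span_union, ← Set.image_union,
    Set.union_compl_self, Set.image_univ, hs]

open MvPolynomial in
theorem hs_finrank_NS (n d : ℕ) : finrank ℝ (hsNS n d n) = d ^ n ∧
    Module.Finite ℝ (hsNS n d n) := by
  let e : ((hsRest n d n)ᶜ : Set (Fin n →₀ ℕ)) ≃ (Fin n → Fin d) :=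
    { toFun := fun a i => ⟨a.1 i, by
        have := a.2
        simp only [hsRest, Set.mem_compl_iff, Set.mem_ofPred_eq, not_exists, not_and, not_le] at this
        exact this i i.2⟩
      invFun := fun f => ⟨Finsupp.equivFunOnFinite.symm (fun i => (f i).val), by
        simp only [hsRest, Set.mem_compl_iff, Set.mem_ofPred_eq, not_exists, not_and, not_le]
        intro i _
        exact (f i).2⟩
      left_inv := fun a => by ext i; simp
      right_inv := fun f => by ext i; simp }
  have hb := (basisMonomials (Fin n) ℝ).linearIndependent
  rw [coe_basisMonomials] at hb
  have hb2 := hb.comp (fun a : ((hsRest n d n)ᶜ : Set (Fin n →₀ ℕ)) => a.1) Subtype.val_injective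
  have B := (Basis.span hb2).reindex e
  have hset : Set.range ((fun s => (monomial s) (1:ℝ)) ∘ fun a : ((hsRest n d n)ᶜ : Set (Fin n →₀ ℕ)) => a.1)
    = ((fun a => monomial a (1:ℝ)) '' (hsRest n d n)ᶜ) := by
    rw [Set.range_comp, Subtype.range_coe]
  rw [hset] at B
  refine ⟨?_, Module.Finite.of_basis B⟩
  have := finrank_eq_card_basis B
  rw [hsNS, this]; simp

open MvPolynomial in
noncomputable def hsg {n : ℕ} (d : ℕ) (h : Fin n → MvPolynomial (Fin n) ℝ) (s : ℝ) (i : Fin n) :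
    MvPolynomial (Fin n) ℝ := C s * X i ^ d + h i

open MvPolynomial in
theorem hsPsi_rest {n : ℕ} (d : ℕ) (h : Fin n → MvPolynomial (Fin n) ℝ) (s : ℝ) (k : ℕ)
    (a : Fin n →₀ ℕ) (i : Fin n) (hik : i.val < k) (hi : ∀ j < i, a j < d) :
    hsPsi d h s k (monomial (a + Finsupp.single i d) 1) = monomial a 1 * hsg d h s i := by
  have hm : a + Finsupp.single i d ∈ hsRest n d k := ⟨i, hik, by simp⟩
  show hsB d h k _ + s • _ = _
  rw [hsB_monomial, if_pos hm, hsb_eq d h _ i (by simp)]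
  · rw [add_tsub_cancel_right, hsg, mul_add, add_comm]
    congr 1
    rw [LinearMap.id_apply, X_pow_eq_monomial, C_mul_monomial, monomial_mul, smul_monomial]
    simp
  · intro j hj
    have : j ≠ i := hj.ne
    simp [this.symm, hi j hj]

open MvPolynomial in
theorem hsPsi_NS {n : ℕ} (d : ℕ) (h : Fin n → MvPolynomial (Fin n) ℝ) (s : ℝ) (k : ℕ)
    (p : MvPolynomial (Fin n) ℝ) (hp : p ∈ hsNS n d k) : hsPsi d h s k p = s • p := by
  have : ∀ p ∈ hsNS n d k, hsB d h k p = 0 := by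
    intro p hp
    induction hp using Submodule.span_induction with
    | mem x hx =>
      obtain ⟨a, ha, rfl⟩ := hx
      rw [hsB_monomial, if_neg ha]
    | zero => simp
    | add x y _ _ hx hy => rw [map_add, hx, hy, add_zero]
    | smul c x _ hx => rw [map_smul, hx, smul_zero]
  show hsB d h k p + s • p = _
  rw [this p hp, zero_add]

noncomputable def hsI {n : ℕ} (d : ℕ) (h : Fin n → MvPolynomial (Fin n) ℝ) (s : ℝ) (k : ℕ) :
    Ideal (MvPolynomial (Fin n) ℝ) := Ideal.span (hsg d h s '' {i | i.val < k})

open MvPolynomial in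
theorem hsPsi_RS {n : ℕ} (d : ℕ) (h : Fin n → MvPolynomial (Fin n) ℝ) (s : ℝ) (k : ℕ)
    (p : MvPolynomial (Fin n) ℝ) (hp : p ∈ hsRS n d k) :
    hsPsi d h s k p ∈ hsI d h s k ∧ p ∈ hsRS n d (k+1) ∧ hsPsi d h s (k+1) p = hsPsi d h s k p := by
  induction hp using Submodule.span_induction with
  | mem x hx =>
    obtain ⟨a, ha, rfl⟩ := hx
    obtain ⟨i, hik, hi, hj⟩ := hsRest_first ha
    have h3 : a = (a - Finsupp.single i d) + Finsupp.single i d := by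
      ext j
      by_cases hji : i = j
      · subst hji; simp; omega
      · simp [hji]
    have hj' : ∀ j < i, (a - Finsupp.single i d) j < d := by
      intro j hji
      have := hj j hji
      rw [Finsupp.tsub_apply]; omega
    refine ⟨?_, Submodule.subset_span ⟨a, ?_, rfl⟩, ?_⟩
    · dsimp only
      rw [h3, hsPsi_rest d h s k _ i hik hj']
      exact Ideal.mul_mem_left _ _ (Ideal.subset_span ⟨i, hik, rfl⟩)
    · exact ⟨i, by omega, hi⟩
    · dsimp only
      rw [h3, hsPsi_rest d h s k _ i hik hj', hsPsi_rest d h s (k+1) _ i (by omega) hj']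
  | zero => simp
  | add x y _ _ hx hy =>
    simp only [map_add]
    exact ⟨Ideal.add_mem _ hx.1 hy.1, Submodule.add_mem _ hx.2.1 hy.2.1, by rw [hx.2.2, hy.2.2]⟩
  | smul c x _ hx =>
    simp only [map_smul]
    refine ⟨?_, Submodule.smul_mem _ _ hx.2.1, by rw [hx.2.2]⟩
    rw [smul_eq_C_mul]; exact Ideal.mul_mem_left _ _ hx.1

open MvPolynomial in
theorem hsPsi_step {n : ℕ} (d : ℕ) (h : Fin n → MvPolynomial (Fin n) ℝ) (s : ℝ) (i : Fin n)
    (p : MvPolynomial (Fin n) ℝ) (hp : p ∈ hsNS n d i.val) :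
    ∃ q ∈ hsRS n d (i.val + 1), hsPsi d h s (i.val+1) q = p * hsg d h s i := by
  induction hp using Submodule.span_induction with
  | mem x hx =>
    obtain ⟨a, ha, rfl⟩ := hx
    refine ⟨monomial (a + Finsupp.single i d) 1, Submodule.subset_span ⟨_, ⟨i, by omega, by simp⟩, rfl⟩, ?_⟩
    rw [hsPsi_rest d h s _ a i (by omega)]
    intro j hj
    simp only [hsRest, Set.mem_compl_iff, Set.mem_ofPred_eq, not_exists, not_and, not_le] at ha
    exact ha j hj
  | zero => exact ⟨0, Submodule.zero_mem _, by simp⟩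
  | add x y _ _ hx hy =>
    obtain ⟨q, hq, e⟩ := hx
    obtain ⟨q', hq', e'⟩ := hy
    exact ⟨q + q', Submodule.add_mem _ hq hq', by rw [map_add, e, e', add_mul]⟩
  | smul c x _ hx =>
    obtain ⟨q, hq, e⟩ := hx
    exact ⟨c • q, Submodule.smul_mem _ _ hq, by rw [map_smul, e, smul_mul_assoc]⟩

open MvPolynomial in
theorem hsI_le {n : ℕ} (d : ℕ) (h : Fin n → MvPolynomial (Fin n) ℝ) (s : ℝ)
    (hs : ∀ k, Function.Bijective (hsPsi d h s k)) (k : ℕ) (hk : k ≤ n) :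
    ∀ y ∈ hsI d h s k, ∃ q ∈ hsRS n d k, hsPsi d h s k q = y := by
  induction k with
  | zero =>
    intro y hy
    have : y = 0 := by simpa [hsI] using hy
    exact ⟨0, Submodule.zero_mem _, by rw [this]; simp⟩
  | succ k ih =>
    intro y hy
    let i : Fin n := ⟨k, hk⟩
    have hset : {j : Fin n | j.val < k + 1} = insert i {j : Fin n | j.val < k} := by
      ext j
      simp only [Set.mem_ofPred_eq, Set.mem_insert_iff, Fin.ext_iff, i]
      omega
    rw [hsI, hset, Set.image_insert_eq, Ideal.mem_span_insert] at hy
    obtain ⟨c, z, hz, rfl⟩ := hy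
    obtain ⟨p, hp⟩ := (hs k).2 c
    have hpt : p ∈ hsRS n d k ⊔ hsNS n d k := by
      rw [(hs_compl n d k).sup_eq_top]; trivial
    obtain ⟨r, hr, w, hw, rfl⟩ := Submodule.mem_sup.1 hpt
    have h1 := (hsPsi_RS d h s k r hr).1
    have hz' : hsPsi d h s k r * hsg d h s i + z ∈ hsI d h s k :=
      Ideal.add_mem _ (Ideal.mul_mem_right _ _ h1) hz
    obtain ⟨q, hq, e⟩ := ih (by omega) _ hz'
    obtain ⟨q', hq', e'⟩ := hsPsi_step d h s i (s • w) (Submodule.smul_mem _ _ hw)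
    have h2 := hsPsi_RS d h s k q hq
    refine ⟨q + q', Submodule.add_mem _ h2.2.1 hq', ?_⟩
    rw [map_add, h2.2.2, e, e', ← hp, map_add, hsPsi_NS d h s k w hw]
    ring

open MvPolynomial in
theorem hs_poly {n : ℕ} (d : ℕ) (hd : Odd d) (h : Fin n → MvPolynomial (Fin n) ℝ)
    (hdeg : ∀ i, (h i).totalDegree ≤ d) (ε : ℝ) (hε : 0 < ε) :
    ∃ s : ℝ, 0 < s ∧ s < ε ∧ ∃ x : Fin n → ℝ, ∀ i, s * x i ^ d + eval x (h i) = 0 := by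
  obtain ⟨s, hs0, hsε, hs⟩ := hs_exists_s d h hdeg ε hε
  refine ⟨s, hs0, hsε, ?_⟩
  let I := hsI d h s n
  let e : MvPolynomial (Fin n) ℝ ≃ₗ[ℝ] MvPolynomial (Fin n) ℝ :=
    LinearEquiv.ofBijective (hsPsi d h s n) (hs n)
  have hmap : Submodule.map (e : MvPolynomial (Fin n) ℝ →ₗ[ℝ] MvPolynomial (Fin n) ℝ) (hsRS n d n)
      = I.restrictScalars ℝ := by
    ext y
    constructor
    · rintro ⟨q, hq, rfl⟩
      exact (hsPsi_RS d h s n q hq).1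
    · intro hy
      obtain ⟨q, hq, e⟩ := hsI_le d h s hs n le_rfl y hy
      exact ⟨q, hq, e⟩
  let E1 := Submodule.Quotient.equiv _ _ e hmap
  let E2 := Submodule.quotientEquivOfIsCompl _ _ (hs_compl n d n)
  let E : hsNS n d n ≃ₗ[ℝ] (MvPolynomial (Fin n) ℝ ⧸ I) := E2.symm.trans E1
  obtain ⟨hr, hf⟩ := hs_finrank_NS n d
  have hf' : Module.Finite ℝ (MvPolynomial (Fin n) ℝ ⧸ I) := Module.Finite.equiv E
  have hr' : finrank ℝ (MvPolynomial (Fin n) ℝ ⧸ I) = d ^ n := by rw [← E.finrank_eq, hr]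
  obtain ⟨χ⟩ := hs_char_aux (MvPolynomial (Fin n) ℝ ⧸ I) (d ^ n) (MvPolynomial (Fin n) ℝ ⧸ I)
    hr' hd.pow
  let φ := χ.comp (Ideal.Quotient.mkₐ ℝ I)
  refine ⟨fun i => φ (X i), fun i => ?_⟩
  have h1 : φ (hsg d h s i) = 0 := by
    have : Ideal.Quotient.mkₐ ℝ I (hsg d h s i) = 0 :=
      Ideal.Quotient.eq_zero_iff_mem.2 (Ideal.subset_span ⟨i, i.2, rfl⟩)
    show χ (Ideal.Quotient.mkₐ ℝ I (hsg d h s i)) = 0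
    rw [this, map_zero]
  have h2 : ∀ p, φ p = eval (fun i => φ (X i)) p := by
    intro p
    have : φ p = aeval (φ ∘ X) p := DFunLike.congr_fun (aeval_unique φ) p
    rw [this, ← coe_aeval_eq_eval]
    rfl
  rw [h2, hsg] at h1
  simpa using h1

theorem hs_approx {m : Type} [Fintype m] (S : Set (m → ℝ)) (hS : IsCompact S)
    (f : (m → ℝ) → ℝ) (hf : ContinuousOn f S) (ε : ℝ) (hε : 0 < ε) :
    ∃ p : MvPolynomial m ℝ, ∀ y ∈ S, |MvPolynomial.eval y p - f y| < ε := by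
  have : CompactSpace S := isCompact_iff_compactSpace.1 hS
  let co : m → C(S, ℝ) := fun j => ⟨fun y => y.1 j, (continuous_apply j).comp continuous_subtype_val⟩
  let Φ : MvPolynomial m ℝ →ₐ[ℝ] C(S, ℝ) := MvPolynomial.aeval co
  have hsep : Φ.range.SeparatesPoints := by
    intro x y hxy
    have : ∃ j, x.1 j ≠ y.1 j := by
      by_contra! hc
      exact hxy (Subtype.ext (funext hc))
    obtain ⟨j, hj⟩ := this
    refine ⟨co j, ⟨co j, ⟨MvPolynomial.X j, ?_⟩, rfl⟩, hj⟩
    simp [Φ]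
  obtain ⟨⟨g, ⟨p, hp⟩⟩, hg⟩ :=
    ContinuousMap.exists_mem_subalgebra_near_continuous_of_separatesPoints Φ.range hsep
      (fun y : S => f y.1) (continuousOn_iff_continuous_domRestrict.1 hf) ε hε
  refine ⟨p, fun y hy => ?_⟩
  have h1 := hg ⟨y, hy⟩
  rw [Real.norm_eq_abs] at h1
  have h2 : g ⟨y, hy⟩ = MvPolynomial.eval y p := by
    rw [← hp]
    let ev : C(S, ℝ) →ₐ[ℝ] ℝ := ContinuousMap.evalAlgHom ℝ ℝ (⟨y, hy⟩ : S)
    have h3 : ev.comp Φ = MvPolynomial.aeval y := by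
      ext j
      simp [ev, Φ, co]
    have h4 := DFunLike.congr_fun h3 p
    rw [← MvPolynomial.coe_aeval_eq_eval]
    exact h4
  rw [← h2]; exact h1

open MvPolynomial in
theorem hs_homog_mono {n : ℕ} (d : ℕ) (hd : Odd d) (a : Option (Fin n) →₀ ℕ) (c : ℝ)
    (ha : a.degree ≤ d) :
    ∃ h : MvPolynomial (Fin n) ℝ, h.totalDegree ≤ d ∧
      ∀ (x : Fin n → ℝ) (r : ℝ), 0 < r → r ^ 2 = 1 + ∑ j, x j ^ 2 →
        eval x h = r ^ d * ((eval (fun o : Option (Fin n) => o.elim 1 x / r) (monomial a c)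
          - eval (-(fun o : Option (Fin n) => o.elim 1 x / r)) (monomial a c)) / 2) := by
  have hneg : ∀ y : Option (Fin n) → ℝ, eval (-y) (monomial a c) =
      (-1) ^ a.degree * eval y (monomial a c) := by
    intro y
    rw [eval_monomial, eval_monomial, Finsupp.prod_fintype _ _ (by simp),
      Finsupp.prod_fintype _ _ (by simp)]
    have : a.degree = ∑ i, a i := Finsupp.degree_eq_sum a
    rw [this, ← Finset.prod_pow_eq_pow_sum, mul_left_comm, ← Finset.prod_mul_distrib]
    congr 1
    refine Finset.prod_congr rfl fun i _ => ?_
    rw [Pi.neg_apply, neg_pow]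
  have hdegsum : a.degree = a none + ∑ j : Fin n, a (some j) := by
    rw [Finsupp.degree_eq_sum, Fintype.sum_option]
  rcases Nat.even_or_odd a.degree with he | ho
  · refine ⟨0, by simp, ?_⟩
    intro x r hr hr2
    rw [hneg, he.neg_one_pow]; simp
  · obtain ⟨e, he⟩ : ∃ e, d = a.degree + 2 * e := by
      have : Even (d - a.degree) := Nat.Odd.sub_odd hd ho
      obtain ⟨e, he⟩ := this
      exact ⟨e, by omega⟩
    refine ⟨C c * (∏ j, X j ^ a (some j)) * (1 + ∑ j, X j ^ 2) ^ e, ?_, ?_⟩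
    · have h1 : (∏ j : Fin n, (X j : MvPolynomial (Fin n) ℝ) ^ a (some j)).totalDegree
          ≤ ∑ j, a (some j) := by
        refine (totalDegree_finsetProd _ _).trans (Finset.sum_le_sum fun j _ => ?_)
        rw [totalDegree_X_pow]
      have h2 : (1 + ∑ j : Fin n, (X j : MvPolynomial (Fin n) ℝ) ^ 2).totalDegree ≤ 2 := by
        refine (totalDegree_add _ _).trans (max_le (by simp) ?_)
        refine totalDegree_finsetSum_le fun j _ => ?_
        rw [totalDegree_X_pow]
      have h3 := totalDegree_pow (1 + ∑ j : Fin n, (X j : MvPolynomial (Fin n) ℝ) ^ 2) e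
      have h4 := totalDegree_mul (C c * (∏ j : Fin n, (X j : MvPolynomial (Fin n) ℝ) ^ a (some j)))
        ((1 + ∑ j : Fin n, (X j : MvPolynomial (Fin n) ℝ) ^ 2) ^ e)
      have h5 := totalDegree_mul (C c) (∏ j : Fin n, (X j : MvPolynomial (Fin n) ℝ) ^ a (some j))
      rw [totalDegree_C] at h5
      have h6 := Nat.mul_le_mul_left e h2
      omega
    · intro x r hr hr2
      rw [hneg, ho.neg_one_pow, eval_monomial, Finsupp.prod_fintype _ _ (by simp),
        Fintype.prod_option]
      simp only [Option.elim_none, Option.elim_some, div_pow, Finset.prod_div_distrib,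
        Finset.prod_pow_eq_pow_sum, one_pow, map_mul, map_prod, map_pow, map_add, map_sum, eval_X,
        eval_C, map_one]
      rw [← hr2, he, hdegsum]
      field_simp
      ring

open MvPolynomial in
theorem hs_homog {n : ℕ} (d : ℕ) (hd : Odd d) (p : MvPolynomial (Option (Fin n)) ℝ)
    (hp : p.totalDegree ≤ d) :
    ∃ h : MvPolynomial (Fin n) ℝ, h.totalDegree ≤ d ∧
      ∀ (x : Fin n → ℝ) (r : ℝ), 0 < r → r ^ 2 = 1 + ∑ j, x j ^ 2 →
        eval x h = r ^ d * ((eval (fun o : Option (Fin n) => o.elim 1 x / r) p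
          - eval (-(fun o : Option (Fin n) => o.elim 1 x / r)) p) / 2) := by
  have hex : ∀ a : Option (Fin n) →₀ ℕ, ∃ h : MvPolynomial (Fin n) ℝ, a ∈ p.support →
      (h.totalDegree ≤ d ∧
      ∀ (x : Fin n → ℝ) (r : ℝ), 0 < r → r ^ 2 = 1 + ∑ j, x j ^ 2 →
        eval x h = r ^ d * ((eval (fun o : Option (Fin n) => o.elim 1 x / r) (monomial a (coeff a p))
          - eval (-(fun o : Option (Fin n) => o.elim 1 x / r)) (monomial a (coeff a p))) / 2)) := by
    intro a
    by_cases ha : a ∈ p.support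
    · have h1 : a.degree ≤ d := by
        have := le_totalDegree ha
        rw [Finsupp.degree_apply]; exact le_trans this hp
      obtain ⟨h, hh⟩ := hs_homog_mono d hd a (coeff a p) h1
      exact ⟨h, fun _ => hh⟩
    · exact ⟨0, fun h => absurd h ha⟩
  choose H hH using hex
  refine ⟨∑ a ∈ p.support, H a, totalDegree_finsetSum_le fun a ha => (hH a ha).1, ?_⟩
  intro x r hr hr2
  rw [map_sum]
  conv_rhs => rw [p.as_sum]
  rw [map_sum, map_sum, ← Finset.sum_sub_distrib, Finset.sum_div, Finset.mul_sum]
  exact Finset.sum_congr rfl fun a ha => (hH a ha).2 x r hr hr2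

theorem hs_borsuk_ulam (n : ℕ) (S : Set (Option (Fin n) → ℝ)) (hS : S = {y | ∑ o, y o ^ 2 = 1})
    (f : Fin n → (Option (Fin n) → ℝ) → ℝ) (hf : ∀ i, ContinuousOn (f i) S)
    (hodd : ∀ i, ∀ y ∈ S, f i (-y) = - f i y) : ∃ y ∈ S, ∀ i, f i y = 0 := by
  have hcomp : IsCompact S := by
    refine Metric.isCompact_of_isClosed_isBounded ?_ ?_
    · rw [hS]
      exact isClosed_eq (by fun_prop) (by fun_prop)
    · refine (Metric.isBounded_closedBall (x := (0 : Option (Fin n) → ℝ)) (r := 1)).subset ?_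
      intro y hy
      rw [hS] at hy
      rw [mem_closedBall_zero_iff, pi_norm_le_iff_of_nonneg zero_le_one]
      intro o
      have h1 : y o ^ 2 ≤ ∑ o, y o ^ 2 :=
        Finset.single_le_sum (f := fun o => y o ^ 2) (fun _ _ => sq_nonneg _) (Finset.mem_univ o)
      have h2 : ∑ o, y o ^ 2 = 1 := hy
      rw [h2] at h1
      rw [Real.norm_eq_abs]
      exact (sq_le_one_iff_abs_le_one _).1 h1
  have key : ∀ ε : ℝ, 0 < ε → ∃ y ∈ S, ∀ i, |f i y| ≤ 2 * ε := by
    intro ε hε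
    choose p hp using fun i => hs_approx S hcomp (f i) (hf i) ε hε
    let D := Finset.univ.sup (fun i => (p i).totalDegree)
    let d := 2 * D + 1
    have hd : Odd d := ⟨D, rfl⟩
    have hpd : ∀ i, (p i).totalDegree ≤ d := by
      intro i
      have : (p i).totalDegree ≤ D :=
        Finset.le_sup (f := fun i => (p i).totalDegree) (Finset.mem_univ i)
      omega
    choose h hdeg hh using fun i => hs_homog d hd (p i) (hpd i)
    obtain ⟨s, hs0, hsε, x, hx⟩ := hs_poly d hd h hdeg ε hε
    have hpos : 0 < 1 + ∑ j, x j ^ 2 := by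
      have : 0 ≤ ∑ j, x j ^ 2 := Finset.sum_nonneg fun _ _ => sq_nonneg _
      linarith
    let r := Real.sqrt (1 + ∑ j, x j ^ 2)
    have hr : 0 < r := Real.sqrt_pos.2 hpos
    have hr2 : r ^ 2 = 1 + ∑ j, x j ^ 2 := Real.sq_sqrt hpos.le
    let y : Option (Fin n) → ℝ := fun o => o.elim 1 x / r
    have hyS : y ∈ S := by
      rw [hS]
      show ∑ o, y o ^ 2 = 1
      rw [Fintype.sum_option]
      simp only [y, Option.elim_none, Option.elim_some, div_pow, ← Finset.sum_div]
      rw [one_pow, ← add_div, ← hr2, div_self (by positivity)]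
    have hyS' : -y ∈ S := by
      rw [hS] at hyS ⊢
      simpa using hyS
    refine ⟨y, hyS, fun i => ?_⟩
    have e1 := hh i x r hr hr2
    have e2 := hx i
    have e3 := hp i y hyS
    have e4 := hp i (-y) hyS'
    rw [hodd i y hyS] at e4
    change MvPolynomial.eval x (h i) = r ^ d *
      ((MvPolynomial.eval y (p i) - MvPolynomial.eval (-y) (p i)) / 2) at e1
    set u := MvPolynomial.eval y (p i)
    set w := MvPolynomial.eval (-y) (p i)
    have hxr : |x i| ≤ r := by
      refine abs_le_of_sq_le_sq ?_ hr.le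
      rw [hr2]
      have : x i ^ 2 ≤ ∑ j, x j ^ 2 :=
        Finset.single_le_sum (f := fun o => x o ^ 2) (fun _ _ => sq_nonneg _) (Finset.mem_univ i)
      linarith
    have hrd : 0 < r ^ d := by positivity
    have e5 : r ^ d * |(u - w) / 2| ≤ r ^ d * ε := by
      have : r ^ d * ((u - w) / 2) = - (s * x i ^ d) := by linarith
      have h' : r ^ d * |(u - w) / 2| = s * |x i| ^ d := by
        have h'' : r ^ d * |(u - w) / 2| = |r ^ d * ((u - w) / 2)| := by
          rw [abs_mul, abs_of_pos hrd]
        rw [h'', this, abs_neg, abs_mul, abs_pow, abs_of_pos hs0]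
      rw [h']
      have := pow_le_pow_left₀ (abs_nonneg (x i)) hxr d
      calc s * |x i| ^ d ≤ ε * r ^ d := by gcongr
        _ = _ := mul_comm _ _
    have e6 := le_of_mul_le_mul_left e5 hrd
    rw [abs_le] at e6 ⊢
    rw [abs_lt] at e3 e4
    constructor <;> linarith [e6.1, e6.2, e3.1, e3.2, e4.1, e4.2]
  have hne : S.Nonempty := by
    obtain ⟨y, hy, _⟩ := key 1 one_pos
    exact ⟨y, hy⟩
  obtain ⟨y, hy, hmin⟩ := hcomp.exists_isMinOn hne
    (f := fun y => ∑ i, |f i y|) (continuousOn_finsetSum _ fun i _ => (hf i).abs)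
  refine ⟨y, hy, fun i => ?_⟩
  have hle : |f i y| ≤ 0 := by
    refine le_of_forall_pos_le_add fun δ hδ => ?_
    have hn : (0:ℝ) < n := by
      have := i.pos
      exact_mod_cast this
    obtain ⟨z, hz, hzf⟩ := key (δ / (2 * n)) (by positivity)
    have h1 : ∑ i, |f i y| ≤ ∑ i, |f i z| := hmin hz
    have h2 : ∑ i, |f i z| ≤ ∑ i : Fin n, 2 * (δ / (2 * n)) := Finset.sum_le_sum fun i _ => hzf i
    have h3 : |f i y| ≤ ∑ i, |f i y| :=
      Finset.single_le_sum (f := fun i => |f i y|) (fun _ _ => abs_nonneg _) (Finset.mem_univ i)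
    have h4 : ∑ i : Fin n, 2 * (δ / (2 * n)) = δ := by
      rw [Finset.sum_const, Finset.card_univ, Fintype.card_fin, nsmul_eq_mul]
      field_simp
    linarith
  exact abs_nonpos_iff.1 hle

theorem hs_hyperplane {d : ℕ} (v : EuclideanSpace ℝ (Fin d)) (hv : v ≠ 0) (α : ℝ) :
    volume {x : EuclideanSpace ℝ (Fin d) | ⟪x, v⟫ = α} = 0 := by
  by_cases hne : ∃ x0 : EuclideanSpace ℝ (Fin d), ⟪x0, v⟫ = α
  · obtain ⟨x0, hx0⟩ := hne
    let K := AffineSubspace.mk' x0 (ℝ ∙ v)ᗮ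
    have hK : K ≠ ⊤ := by
      intro h
      have : v + x0 ∈ K := by rw [h]; trivial
      rw [AffineSubspace.mem_mk', Submodule.mem_orthogonal_singleton_iff_inner_right] at this
      simp at this
      exact hv this
    refine measure_mono_null ?_ (Measure.addHaar_affineSubspace volume K hK)
    intro x hx
    have hx' : ⟪x, v⟫ = α := hx
    show x ∈ K
    rw [AffineSubspace.mem_mk', Submodule.mem_orthogonal_singleton_iff_inner_left, vsub_eq_sub,
      inner_sub_left, hx', hx0, sub_self]
  · have : {x : EuclideanSpace ℝ (Fin d) | ⟪x, v⟫ = α} = ∅ := by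
      ext x
      simp only [Set.mem_ofPred_eq, Set.mem_empty_iff_false, iff_false]
      exact fun h => hne ⟨x, h⟩
    rw [this, measure_empty]

noncomputable def hsv {d : ℕ} (y : Option (Fin d) → ℝ) : EuclideanSpace ℝ (Fin d) :=
  WithLp.toLp 2 (fun j => y (some j))

theorem hsv_continuous {d : ℕ} : Continuous (hsv : (Option (Fin d) → ℝ) → _) := by
  unfold hsv
  fun_prop

theorem hsv_neg {d : ℕ} (y : Option (Fin d) → ℝ) : hsv (-y) = - hsv y := by
  ext j; simp [hsv]

def hsA {d : ℕ} (y : Option (Fin d) → ℝ) : Set (EuclideanSpace ℝ (Fin d)) :=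
  {x | ⟪x, hsv y⟫ ≤ y none}

theorem hsA_meas {d : ℕ} (y : Option (Fin d) → ℝ) : MeasurableSet (hsA y) :=
  (isClosed_le (by fun_prop) continuous_const).measurableSet

theorem hsA_cont {d : ℕ} (μ : Measure (EuclideanSpace ℝ (Fin d))) [IsFiniteMeasure μ]
    (hac : μ ≪ volume) (y : Option (Fin d) → ℝ) (hy : ∑ o, y o ^ 2 = 1) :
    ContinuousAt (fun y => μ.real (hsA y)) y := by
  have hae : ∀ᵐ x ∂μ, ⟪x, hsv y⟫ ≠ y none := by
    by_cases hv : hsv y = 0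
    · refine Filter.Eventually.of_forall fun x h => ?_
      rw [hv, inner_zero_right] at h
      have h2 : ∀ j, y (some j) = 0 := fun j => by
        have := congrArg (fun w : EuclideanSpace ℝ (Fin d) => w j) hv
        simpa [hsv] using this
      rw [Fintype.sum_option, ← h] at hy
      simp [h2] at hy
    · have := hac (hs_hyperplane (hsv y) hv (y none))
      rw [ae_iff]
      simpa using this
  have ht : Filter.Tendsto (fun z => μ (hsA z)) (nhds y) (nhds (μ (hsA y))) := by
    refine tendsto_measure_of_ae_tendsto_indicator_of_isFiniteMeasure (nhds y) (hsA_meas y)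
      (fun z => hsA_meas z) ?_
    filter_upwards [hae] with x hx
    have hc1 : Continuous fun z : Option (Fin d) → ℝ => ⟪x, hsv z⟫ :=
      Continuous.inner continuous_const hsv_continuous
    have hc2 : Continuous fun z : Option (Fin d) → ℝ => z none := continuous_apply _
    rcases lt_or_gt_of_ne hx with h | h
    · filter_upwards [hc1.continuousAt.eventually_lt hc2.continuousAt h] with z hz
      exact ⟨fun _ => h.le, fun _ => hz.le⟩
    · filter_upwards [hc2.continuousAt.eventually_lt hc1.continuousAt h] with z hz
      exact ⟨fun h' => absurd hz (not_lt.2 h'), fun h' => absurd h (not_lt.2 h')⟩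
  exact (ENNReal.tendsto_toReal (measure_ne_top μ _)).comp ht

/-- Ham sandwich theorem (continuous version). -/
theorem ham_sandwich (d : ℕ) (hd : 0 < d)
    (μ : Fin d → Measure (EuclideanSpace ℝ (Fin d)))
    (hfin : ∀ i, IsFiniteMeasure (μ i))
    (hac : ∀ i, μ i ≪ volume) :
    ∃ (v : EuclideanSpace ℝ (Fin d)) (α : ℝ), v ≠ 0 ∧
      ∀ i, μ i {x | ⟪x, v⟫ ≤ α} = μ i {x | α ≤ ⟪x, v⟫} := by
  classical
  let S : Set (Option (Fin d) → ℝ) := {y | ∑ o, y o ^ 2 = 1}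
  have hneg : ∀ y ∈ S, -y ∈ S := by
    intro y hy
    have : ∑ o, y o ^ 2 = 1 := hy
    show ∑ o, (-y) o ^ 2 = 1
    simpa using this
  obtain ⟨y, hy, hz⟩ := hs_borsuk_ulam d S rfl
    (fun i y => (μ i).real (hsA y) - (μ i).real (hsA (-y)))
    (fun i => by
      have := hfin i
      have h1 : ContinuousOn (fun y => (μ i).real (hsA y)) S := fun y hy =>
        (hsA_cont (μ i) (hac i) y hy).continuousWithinAt
      exact h1.sub (h1.comp continuous_neg.continuousOn hneg))
    (fun i y _ => by simp)
  have heq : ∀ i, μ i (hsA y) = μ i (hsA (-y)) := by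
    intro i
    have := hfin i
    have h1 := sub_eq_zero.1 (hz i)
    exact (ENNReal.toReal_eq_toReal_iff' (measure_ne_top _ _) (measure_ne_top _ _)).1 h1
  have hA : hsA (-y) = {x | y none ≤ ⟪x, hsv y⟫} := by
    ext x
    simp [hsA, hsv_neg]
  by_cases hv : hsv y = 0
  · have hα : y none ≠ 0 := by
      intro h0
      have h2 : ∀ j, y (some j) = 0 := fun j => by
        have := congrArg (fun w : EuclideanSpace ℝ (Fin d) => w j) hv
        simpa [hsv] using this
      have hy' : ∑ o, y o ^ 2 = 1 := hy
      rw [Fintype.sum_option, h0] at hy'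
      simp [h2] at hy'
    have hμ : ∀ i, μ i = 0 := by
      intro i
      have h1 := heq i
      rw [hA, hsA, hv] at h1
      simp only [inner_zero_right] at h1
      rcases lt_or_gt_of_ne hα with h | h
      · simpa [not_le.2 h, h.le] using h1.symm
      · simpa [not_le.2 h, h.le] using h1
    refine ⟨EuclideanSpace.single ⟨0, hd⟩ 1, 0, by simp, fun i => by rw [hμ i]; simp⟩
  · exact ⟨hsv y, y none, hv, fun i => by rw [← hA]; exact heq i⟩
end

section
/- Let d, k, m, a be positive integers with 2^a ≤ m < 2^{a+1} and d ≥ m + (2^{k−1} − 1)·2^a. Then for any m finite measures μ₁, …, μ_m on ℝ^d, each absolutely continuous with respect to the Lebesgue measure, there exist k affine hyperplanes, given by nonzero vectors v₁, …, v_k ∈ ℝ^d and reals α₁, …, α_k, such that for every sign vector ε ∈ {−1, +1}^k and every i = 1, …, m, the region {x ∈ ℝ^d : ε_j(⟨x, v_j⟩ − α_j) ≥ 0 for all j = 1, …, k} has μ_i-measure equal to μ_i(ℝ^d)/2^k. -/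
namespace GHR

noncomputable section

abbrev Ch (X : Type) := List X →₀ ZMod 2

variable {X : Type}

/-- the basis chain of a list -/
def bs (l : List X) : Ch X := Finsupp.single l 1

/-- linear extension -/
def lin {M : Type} [AddCommGroup M] [Module (ZMod 2) M] (f : List X → M) : Ch X →ₗ[ZMod 2] M :=
  Finsupp.linearCombination (ZMod 2) f

@[simp] lemma lin_bs {M : Type} [AddCommGroup M] [Module (ZMod 2) M] (f : List X → M)
    (l : List X) : lin f (bs l) = f l := by
  simp [lin, bs]

lemma hom_ext {M : Type} [AddCommGroup M] [Module (ZMod 2) M] {f g : Ch X →ₗ[ZMod 2] M}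
    (h : ∀ l, f (bs l) = g (bs l)) : f = g := by
  refine Finsupp.lhom_ext' fun l => ?_
  ext
  exact h l

def cn (x : X) : Ch X →ₗ[ZMod 2] Ch X := lin fun l => bs (x :: l)

@[simp] lemma cn_bs (x : X) (l : List X) : cn x (bs l) = bs (x :: l) := by simp [cn]

def bdl : List X → Ch X
  | [] => 0
  | x :: l => bs l + cn x (bdl l)

def bd : Ch X →ₗ[ZMod 2] Ch X := lin bdl

@[simp] lemma bd_nil : bd (bs ([] : List X)) = 0 := by simp [bd, bdl]
lemma bd_cons (x : X) (l : List X) : bd (bs (x :: l)) = bs l + cn x (bd (bs l)) := by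
  simp [bd, bdl]

lemma bd_cn (x : X) (c : Ch X) : bd (cn x c) = c + cn x (bd c) := by
  have : bd ∘ₗ cn x = LinearMap.id + cn x ∘ₗ bd := by
    apply hom_ext; intro l; simp [bd_cons]
  exact congrArg (fun f => f c) this

lemma add_self_ch (c : Ch X) : c + c = 0 := by
  ext l; simp [CharTwo.add_self_eq_zero]

lemma bd_bd (c : Ch X) : bd (bd c) = 0 := by
  have : (bd ∘ₗ bd : Ch X →ₗ[ZMod 2] Ch X) = 0 := by
    apply hom_ext; intro l
    induction l with
    | nil => simp
    | cons x l ih =>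
      simp only [LinearMap.comp_apply, LinearMap.zero_apply] at ih ⊢
      rw [bd_cons, map_add, bd_cn, ih, map_zero, add_zero, add_self_ch]
  exact congrArg (fun f => f c) this

/-- push-forward -/
def mp (g : X → X) : Ch X →ₗ[ZMod 2] Ch X := lin fun l => bs (l.map g)

@[simp] lemma mp_bs (g : X → X) (l : List X) : mp g (bs l) = bs (l.map g) := by simp [mp]

lemma mp_cn (g : X → X) (x : X) (c : Ch X) : mp g (cn x c) = cn (g x) (mp g c) := by
  have : mp g ∘ₗ cn x = cn (g x) ∘ₗ mp g := by
    apply hom_ext; intro l; simp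
  exact congrArg (fun f => f c) this

lemma bd_mp (g : X → X) (c : Ch X) : bd (mp g c) = mp g (bd c) := by
  have : bd ∘ₗ mp g = mp g ∘ₗ bd := by
    apply hom_ext; intro l
    induction l with
    | nil => simp
    | cons x l ih =>
      simp only [LinearMap.comp_apply, mp_bs, List.map_cons] at ih ⊢
      rw [bd_cons, bd_cons, map_add, mp_cn, ih, mp_bs]
  exact congrArg (fun f => f c) this

lemma mp_mp (g h : X → X) (c : Ch X) : mp g (mp h c) = mp (g ∘ h) c := by
  have : mp g ∘ₗ mp h = mp (g ∘ h) := by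
    apply hom_ext; intro l; simp
  exact congrArg (fun f => f c) this

lemma mp_id (c : Ch X) : mp id c = c := by
  have : mp (id : X → X) = LinearMap.id := by
    apply hom_ext; intro l; simp
  exact congrArg (fun f => f c) this

/-- prism -/
def prl (g : X → X) : List X → Ch X
  | [] => 0
  | x :: l => bs (x :: g x :: l.map g) + cn x (prl g l)

def pr (g : X → X) : Ch X →ₗ[ZMod 2] Ch X := lin (prl g)

lemma pr_nil (g : X → X) : pr g (bs []) = 0 := by simp [pr, prl]
lemma pr_cons (g : X → X) (x : X) (l : List X) :
    pr g (bs (x :: l)) = bs (x :: g x :: l.map g) + cn x (pr g (bs l)) := by simp [pr, prl]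

lemma pr_cn (g : X → X) (x : X) (c : Ch X) :
    pr g (cn x c) = cn x (cn (g x) (mp g c)) + cn x (pr g c) := by
  have : pr g ∘ₗ cn x = cn x ∘ₗ cn (g x) ∘ₗ mp g + cn x ∘ₗ pr g := by
    apply hom_ext; intro l; simp [pr_cons]
  exact congrArg (fun f => f c) this

lemma bd_pr (g : X → X) (c : Ch X) : bd (pr g c) = mp g c + c + pr g (bd c) := by
  have : bd ∘ₗ pr g = mp g + LinearMap.id + pr g ∘ₗ bd := by
    apply hom_ext; intro l
    induction l with
    | nil => simp [pr_nil, add_self_ch]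
    | cons x l ih =>
      simp only [LinearMap.comp_apply, LinearMap.add_apply, LinearMap.id_apply] at ih ⊢
      rw [pr_cons, map_add, bd_cn, ih, bd_cons, bd_cons, bd_cons, (pr g).map_add, pr_cn, ← bd_mp]
      simp only [map_add, mp_bs, cn_bs, List.map_cons]
      have h2 := add_self_ch (bs (x :: l.map g))
      generalize bs (x :: l.map g) = B at *
      have e : ∀ P Q R : Ch X, P = Q + R + R → R + R = 0 → P = Q := by
        intro P Q R h h'; rw [h, add_assoc, h', add_zero]
      refine e _ _ B ?_ h2
      abel
  exact congrArg (fun f => f c) this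

/-- chains supported on lists satisfying a predicate -/
def sup (P : List X → Prop) : Submodule (ZMod 2) (Ch X) := Finsupp.supported (ZMod 2) (ZMod 2) {l | P l}

lemma bs_mem {P : List X → Prop} {l : List X} (h : P l) : bs l ∈ sup P :=
  Finsupp.single_mem_supported _ _ h

lemma sup_map {M : Type} [AddCommGroup M] [Module (ZMod 2) M] {P : List X → Prop}
    (f : Ch X →ₗ[ZMod 2] M) (S : Submodule (ZMod 2) M) (h : ∀ l, P l → f (bs l) ∈ S)
    {c : Ch X} (hc : c ∈ sup P) : f c ∈ S := by
  rw [sup, Finsupp.supported_eq_span_single] at hc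
  have : Submodule.span (ZMod 2) ((fun i => Finsupp.single i (1 : ZMod 2)) '' {l | P l}) ≤ S.comap f := by
    rw [Submodule.span_le]
    rintro _ ⟨l, hl, rfl⟩
    exact h l hl
  exact this hc

lemma sup_mono {P Q : List X → Prop} (h : ∀ l, P l → Q l) : sup P ≤ sup Q :=
  Finsupp.supported_mono h

/-- cup product evaluation -/
def evl : List (X → ZMod 2) → List X → ZMod 2
  | [], [_] => 1
  | s :: S, x :: y :: l => (s x + s y) * evl S (y :: l)
  | _, _ => 0

def ev (S : List (X → ZMod 2)) : Ch X →ₗ[ZMod 2] ZMod 2 := lin (evl S)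

def fvl (s : X → ZMod 2) (S : List (X → ZMod 2)) : List X → ZMod 2
  | [] => 0
  | x :: l => s x * evl S (x :: l)

def fv (s : X → ZMod 2) (S : List (X → ZMod 2)) : Ch X →ₗ[ZMod 2] ZMod 2 := lin (fvl s S)

lemma fv_cn (s : X → ZMod 2) (S : List (X → ZMod 2)) (x : X) (c : Ch X) :
    fv s S (cn x c) = s x * ev S (cn x c) := by
  have : fv s S ∘ₗ cn x = s x • (ev S ∘ₗ cn x) := by
    apply hom_ext; intro l; simp [fv, ev, fvl]
  exact congrArg (fun f => f c) this

lemma stokes_aux (s : X → ZMod 2) (S : List (X → ZMod 2)) (h : ∀ c, ev S (bd c) = 0) (c : Ch X) :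
    fv s S (bd c) = ev (s :: S) c := by
  have : fv s S ∘ₗ bd = ev (s :: S) := by
    apply hom_ext; intro l
    match l with
    | [] => simp [ev, evl]
    | [x] => simp [ev, evl, bd_cons, fv, fvl]
    | x :: y :: l =>
      have h' := h (bs (x :: y :: l))
      rw [LinearMap.comp_apply, bd_cons, map_add, fv_cn]
      rw [bd_cons, map_add] at h'
      have h2 : ev S (cn x (bd (bs (y :: l)))) = ev S (bs (y :: l)) :=
        (CharTwo.add_eq_zero.mp h').symm
      rw [h2]
      simp [fv, ev, fvl, evl]
      ring
  exact congrArg (fun f => f c) this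

lemma ev_bd (S : List (X → ZMod 2)) (c : Ch X) : ev S (bd c) = 0 := by
  cases S with
  | nil =>
    have : ev [] ∘ₗ bd = (0 : Ch X →ₗ[ZMod 2] ZMod 2) := by
      apply hom_ext; intro l
      match l with
      | [] => simp
      | [x] => simp [bd_cons, ev, evl]
      | [x, y] => simp [bd_cons, ev, evl, CharTwo.add_self_eq_zero]
      | x :: y :: z :: l =>
        simp only [LinearMap.comp_apply, LinearMap.zero_apply]
        rw [bd_cons, bd_cons, map_add, map_add, map_add]
        have : ∀ c : Ch X, ev [] (cn x (cn y c)) = 0 := by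
          intro c
          have : ev [] ∘ₗ cn x ∘ₗ cn y = (0 : Ch X →ₗ[ZMod 2] ZMod 2) := by
            apply hom_ext; intro l; simp [ev, evl]
          exact congrArg (fun f => f c) this
        rw [this]
        simp [ev, evl]
    exact congrArg (fun f => f c) this
  | cons s S =>
    have ih := ev_bd S
    rw [← stokes_aux s S ih, bd_bd, map_zero]
termination_by S.length

lemma stokes (s : X → ZMod 2) (S : List (X → ZMod 2)) (c : Ch X) :
    fv s S (bd c) = ev (s :: S) c := stokes_aux s S (ev_bd S) c

end

end GHR

namespace GHR

noncomputable section

def small {E : Type} [PseudoMetricSpace E] (D : Set E) (η : ℝ) (l : List E) : Prop :=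
  (∀ x ∈ l, x ∈ D) ∧ ∀ x ∈ l, ∀ y ∈ l, dist x y ≤ η

lemma small_mono {E : Type} [PseudoMetricSpace E] {D D' : Set E} {η η' : ℝ} (hD : D ⊆ D')
    (hη : η ≤ η') (l : List E) (h : small D η l) : small D' η' l :=
  ⟨fun x hx => hD (h.1 x hx), fun x hx y hy => (h.2 x hx y hy).trans hη⟩

lemma cn_sup {X : Type} (x : X) {P Q : List X → Prop} (h : ∀ l, P l → Q (x :: l)) {c : Ch X}
    (hc : c ∈ sup P) : cn x c ∈ sup Q :=
  sup_map (cn x) _ (fun l hl => by rw [cn_bs]; exact bs_mem (h l hl)) hc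

lemma mp_sup {X : Type} (g : X → X) {P Q : List X → Prop} (h : ∀ l, P l → Q (l.map g)) {c : Ch X}
    (hc : c ∈ sup P) : mp g c ∈ sup Q :=
  sup_map (mp g) _ (fun l hl => by rw [mp_bs]; exact bs_mem (h l hl)) hc

lemma pr_sup_aux {X : Type} (g : X → X) (l : List X) :
    pr g (bs l) ∈ sup (fun l' => ∀ x ∈ l', ∃ y ∈ l, x = y ∨ x = g y) := by
  induction l with
  | nil => rw [pr_nil]; exact Submodule.zero_mem _
  | cons a l ih =>
    rw [pr_cons]
    refine Submodule.add_mem _ (bs_mem ?_) (cn_sup a ?_ ih)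
    · intro x hx
      simp only [List.mem_cons, List.mem_map] at hx ⊢
      rcases hx with rfl | rfl | ⟨y, hy, rfl⟩
      · exact ⟨_, Or.inl rfl, Or.inl rfl⟩
      · exact ⟨_, Or.inl rfl, Or.inr rfl⟩
      · exact ⟨_, Or.inr hy, Or.inr rfl⟩
    · intro l' h x hx
      simp only [List.mem_cons] at hx ⊢
      rcases hx with rfl | hx
      · exact ⟨_, Or.inl rfl, Or.inl rfl⟩
      · obtain ⟨y, hy, h⟩ := h x hx
        exact ⟨y, Or.inr hy, h⟩

lemma fill_aux {E : Type} [NormedAddCommGroup E] [NormedSpace ℝ E] (D : Set E) (p : E)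
    (hp : p ∈ D) (hD : StarConvex ℝ p D) (η τ q : ℝ) (hη : 0 ≤ η) (hτ : 0 ≤ τ) (hq : 0 ≤ q)
    (hq1 : q ≤ 1) (n : ℕ) : ∀ (ρ : ℝ) (_ : 0 ≤ ρ) (_ : (1 - q) ^ n * ρ ≤ τ) (_ : q * ρ ≤ τ) (z : Ch E)
    (_ : z ∈ sup (small (D ∩ Metric.closedBall p ρ) η)) (_ : bd z = 0),
    ∃ w ∈ sup (small D (η + τ)), bd w = z := by
  induction n with
  | zero =>
    intro ρ hρ h1 h2 z hz hz0
    refine ⟨cn p z, cn_sup p ?_ hz, by rw [bd_cn, hz0, map_zero, add_zero]⟩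
    intro l hl
    have hb : ∀ x ∈ l, dist x p ≤ τ := fun x hx =>
      (Metric.mem_closedBall.1 (hl.1 x hx).2).trans (by simpa using h1)
    refine ⟨?_, ?_⟩
    · intro x hx
      rcases List.mem_cons.1 hx with rfl | hx
      · exact hp
      · exact (hl.1 x hx).1
    · intro x hx y hy
      rcases List.mem_cons.1 hx with rfl | hx <;> rcases List.mem_cons.1 hy with rfl | hy
      · rw [dist_self]; linarith
      · rw [dist_comm]; linarith [hb y hy]
      · linarith [hb x (by assumption)]
      · linarith [hl.2 x (by assumption) y (by assumption)]
  | succ n ih =>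
    intro ρ hρ h1 h2 z hz hz0
    let g : E → E := fun x => q • p + (1 - q) • x
    have hgD : ∀ x ∈ D, g x ∈ D := fun x hx => hD hx hq (by linarith) (by ring)
    have hgd : ∀ x y, dist (g x) (g y) = (1 - q) * dist x y := by
      intro x y
      simp only [g, dist_add_left, dist_smul₀]
      rw [Real.norm_of_nonneg (by linarith)]
    have hgp : g p = p := by simp only [g]; rw [← add_smul]; simp
    have hgx : ∀ x, dist x (g x) = q * dist x p := by
      intro x
      rw [dist_eq_norm, dist_eq_norm]
      have : x - g x = q • (x - p) := by simp only [g]; module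
      rw [this, norm_smul, Real.norm_of_nonneg hq]
    have hgle : ∀ x y, dist (g x) (g y) ≤ dist x y := by
      intro x y; rw [hgd]; nlinarith [dist_nonneg (x := x) (y := y)]
    obtain ⟨w, hw, hwz⟩ := ih ((1 - q) * ρ) (mul_nonneg (by linarith) hρ)
      (by rw [← mul_assoc, ← pow_succ]; exact h1) (by nlinarith) (mp g z)
      (mp_sup g (P := small (D ∩ Metric.closedBall p ρ) η) (by
        intro l hl
        refine ⟨?_, ?_⟩
        · intro x hx
          obtain ⟨y, hy, rfl⟩ := List.mem_map.1 hx
          have := hl.1 y hy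
          refine ⟨hgD _ this.1, ?_⟩
          rw [Metric.mem_closedBall]
          have e := hgd y p
          rw [hgp] at e
          rw [e]
          exact mul_le_mul_of_nonneg_left (Metric.mem_closedBall.1 this.2) (by linarith)
        · intro x hx x' hx'
          obtain ⟨y, hy, rfl⟩ := List.mem_map.1 hx
          obtain ⟨y', hy', rfl⟩ := List.mem_map.1 hx'
          exact (hgle _ _).trans (hl.2 y hy y' hy')) hz)
      (by rw [bd_mp, hz0, map_zero])
    refine ⟨pr g z + w, Submodule.add_mem _ ?_ hw, ?_⟩
    · refine sup_map (pr g) _ ?_ hz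
      intro l hl
      refine sup_mono ?_ (pr_sup_aux g l)
      intro l' h'
      have hb : ∀ x ∈ l, dist x (g x) ≤ τ := by
        intro x hx
        rw [hgx]
        exact (mul_le_mul_of_nonneg_left (Metric.mem_closedBall.1 (hl.1 x hx).2) hq).trans h2
      refine ⟨?_, ?_⟩
      · intro x hx
        obtain ⟨y, hy, rfl | rfl⟩ := h' x hx
        · exact (hl.1 _ hy).1
        · exact hgD _ (hl.1 _ hy).1
      · intro x hx x' hx'
        obtain ⟨y, hy, hxy⟩ := h' x hx
        obtain ⟨y', hy', hxy'⟩ := h' x' hx'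
        have hyy := hl.2 y hy y' hy'
        rcases hxy with rfl | rfl <;> rcases hxy' with rfl | rfl
        · linarith
        · linarith [dist_triangle x y' (g y'), hb y' hy']
        · have := dist_triangle (g y) y x'
          rw [dist_comm (g y) y] at this
          linarith [hb y hy]
        · linarith [hgle y y']
    · rw [map_add, bd_pr, hz0, map_zero, add_zero, hwz, add_right_comm, add_self_ch, zero_add]

lemma fill {E : Type} [NormedAddCommGroup E] [NormedSpace ℝ E] (D : Set E) (p : E)
    (hp : p ∈ D) (hD : StarConvex ℝ p D) (R : ℝ) (hR : ∀ x ∈ D, dist x p ≤ R)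
    (η τ : ℝ) (hη : 0 ≤ η) (hτ : 0 < τ) (z : Ch E)
    (hz : z ∈ sup (small D η)) (hz0 : bd z = 0) :
    ∃ w ∈ sup (small D (η + τ)), bd w = z := by
  have hR0 : 0 ≤ R := by simpa using hR p hp
  set q : ℝ := min (1/2) (τ / (R + 1)) with hq
  have hq0 : 0 < q := lt_min (by norm_num) (by positivity)
  have hq1 : q ≤ 1/2 := min_le_left _ _
  have hq2 : q * R ≤ τ := by
    have : q ≤ τ / (R + 1) := min_le_right _ _
    rw [le_div_iff₀ (by positivity)] at this
    nlinarith
  obtain ⟨n, hn⟩ := exists_pow_lt_of_lt_one (y := 1 - q) (show 0 < τ / (R + 1) by positivity) (by linarith)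
  refine fill_aux D p hp hD η τ q hη hτ.le hq0.le (by linarith) n R hR0 ?_ hq2 z ?_ hz0
  · rw [lt_div_iff₀ (by positivity)] at hn
    have : 0 ≤ (1 - q) ^ n := pow_nonneg (by linarith) _
    nlinarith
  · refine sup_mono (fun l hl => small_mono ?_ le_rfl l hl) hz
    intro x hx
    exact ⟨hx, hR x hx⟩

/-! ### product of spheres -/

abbrev Y (k d : ℕ) := Fin k → Fin (d + 1) → ℝ

def hemi (d j : ℕ) : Set (Fin (d + 1) → ℝ) :=
  {x | ∑ l, |x l| = 1 ∧ (∀ l, l.val = j → 0 ≤ x l) ∧ ∀ l, j < l.val → x l = 0}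

def sph (k d : ℕ) : Set (Y k d) := {x | ∀ i, ∑ l, |x i l| = 1}

def DJ {k : ℕ} (d : ℕ) (J : Fin k →₀ ℕ) : Set (Y k d) := {x | ∀ i, x i ∈ hemi d (J i)}

def pole {k : ℕ} (d : ℕ) (J : Fin k →₀ ℕ) : Y k d := fun i l => if l.val = J i then 1 else 0

lemma DJ_sph {k d : ℕ} (J : Fin k →₀ ℕ) : DJ d J ⊆ sph k d := fun _ hx i => (hx i).1

lemma pole_mem {k d : ℕ} (J : Fin k →₀ ℕ) (hJ : ∀ i, J i ≤ d) : pole d J ∈ DJ d J := by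
  intro i
  refine ⟨?_, ?_, ?_⟩
  · rw [Finset.sum_eq_single (⟨J i, by have := hJ i; omega⟩ : Fin (d + 1))]
    · simp [pole]
    · intro b _ hb
      have : b.val ≠ J i := fun h => hb (Fin.ext h)
      simp [pole, this]
    · simp
  · intro l hl; simp [pole, hl]
  · intro l hl; simp [pole, hl.ne']

lemma star_DJ {k d : ℕ} (J : Fin k →₀ ℕ) (hJ : ∀ i, J i ≤ d) : StarConvex ℝ (pole d J) (DJ d J) := by
  intro x hx a b ha hb hab i
  obtain ⟨h1, h2, h3⟩ := hx i
  obtain ⟨g1, g2, g3⟩ := pole_mem J hJ i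
  refine ⟨?_, ?_, ?_⟩
  · have : ∀ l, |(a • pole d J + b • x) i l| = a * |pole d J i l| + b * |x i l| := by
      intro l
      have e : (a • pole d J + b • x) i l = a * pole d J i l + b * x i l := rfl
      rw [e]
      by_cases hl : l.val = J i
      · have := g2 l hl
        have h' := h2 l hl
        rw [abs_of_nonneg this, abs_of_nonneg h', abs_of_nonneg (by positivity)]
      · simp [pole, hl, abs_mul, abs_of_nonneg hb]
    simp_rw [this]
    rw [Finset.sum_add_distrib, ← Finset.mul_sum, ← Finset.mul_sum, h1, g1]
    linarith
  · intro l hl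
    have := g2 l hl
    have h' := h2 l hl
    change 0 ≤ a * pole d J i l + b * x i l
    positivity
  · intro l hl
    change a * pole d J i l + b * x i l = 0
    rw [g3 l hl, h3 l hl]; simp

lemma sph_le {k d : ℕ} {x : Y k d} (hx : x ∈ sph k d) (i l) : |x i l| ≤ 1 := by
  rw [← hx i]
  exact Finset.single_le_sum (f := fun l => |x i l|) (fun _ _ => abs_nonneg _) (Finset.mem_univ l)

lemma sph_dist {k d : ℕ} {x y : Y k d} (hx : x ∈ sph k d) (hy : y ∈ sph k d) : dist x y ≤ 2 := by
  rw [dist_pi_le_iff (by norm_num)]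
  intro i
  rw [dist_pi_le_iff (by norm_num)]
  intro l
  rw [Real.dist_eq]
  have := abs_le.1 (sph_le hx i l)
  have := abs_le.1 (sph_le hy i l)
  rw [abs_le]; constructor <;> linarith

def fl {k d : ℕ} (i : Fin k) (x : Y k d) : Y k d := fun j => if j = i then - x j else x j

lemma fl_fl {k d : ℕ} (i : Fin k) (x : Y k d) : fl i (fl i x) = x := by
  funext j; by_cases h : j = i <;> simp [fl, h]

lemma fl_comm {k d : ℕ} (i j : Fin k) (x : Y k d) : fl i (fl j x) = fl j (fl i x) := by
  funext u; simp only [fl]; split_ifs <;> rfl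

lemma fl_dist {k d : ℕ} (i : Fin k) (x y : Y k d) : dist (fl i x) (fl i y) = dist x y := by
  have key : ∀ x y : Y k d, dist (fl i x) (fl i y) ≤ dist x y := by
    intro x y
    rw [dist_pi_le_iff dist_nonneg]
    intro j
    have : dist (fl i x j) (fl i y j) = dist (x j) (y j) := by
      by_cases h : j = i <;> simp [fl, h, dist_neg_neg]
    rw [this]
    exact dist_le_pi_dist x y j
  refine le_antisymm (key _ _) ?_
  have := key (fl i x) (fl i y)
  rwa [fl_fl, fl_fl] at this

lemma fl_sph {k d : ℕ} (i : Fin k) {x : Y k d} (hx : x ∈ sph k d) : fl i x ∈ sph k d := by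
  intro j
  rw [← hx j]
  by_cases h : j = i <;> simp [fl, h]

def B {k d : ℕ} (i : Fin k) : Ch (Y k d) →ₗ[ZMod 2] Ch (Y k d) := LinearMap.id + mp (fl i)

lemma B_app {k d : ℕ} (i : Fin k) (c : Ch (Y k d)) : B i c = c + mp (fl i) c := rfl

lemma B_comm {k d : ℕ} (i j : Fin k) (c : Ch (Y k d)) : B i (B j c) = B j (B i c) := by
  simp only [B_app, map_add, mp_mp]
  have : (fl i ∘ fl j : Y k d → Y k d) = fl j ∘ fl i := funext fun x => fl_comm i j x
  rw [this]; abel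

lemma B_B {k d : ℕ} (i : Fin k) (c : Ch (Y k d)) : B i (B i c) = 0 := by
  simp only [B_app, map_add, mp_mp]
  have : (fl i ∘ fl i : Y k d → Y k d) = id := funext fun x => fl_fl i x
  rw [this, mp_id, add_comm (mp (fl i) c) c]; exact add_self_ch _

lemma bd_B {k d : ℕ} (i : Fin k) (c : Ch (Y k d)) : bd (B i c) = B i (bd c) := by
  simp only [B_app, map_add, bd_mp]

open Finsupp in
def zJ {k d : ℕ} (h : (Fin k →₀ ℕ) → Ch (Y k d)) (J : Fin k →₀ ℕ) : Ch (Y k d) :=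
  ∑ i, if J i = 0 then 0 else B i (h (J - single i 1))

lemma deg_sub {k : ℕ} (J : Fin k →₀ ℕ) (i : Fin k) (h : J i ≠ 0) :
    (J - Finsupp.single i 1).degree + 1 = J.degree := by
  have : J - Finsupp.single i 1 + Finsupp.single i 1 = J := by
    ext j
    by_cases hj : i = j
    · subst hj; simp; omega
    · simp [Finsupp.single_apply, hj]
  conv_rhs => rw [← this]
  simp [map_add]

lemma DJ_B {k d : ℕ} (J : Fin k →₀ ℕ) (i : Fin k) (h : J i ≠ 0) (x : Y k d)
    (hx : x ∈ DJ d (J - Finsupp.single i 1)) : x ∈ DJ d J ∧ fl i x ∈ DJ d J := by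
  have h0 : ∀ j, j ≠ i → x j ∈ hemi d (J j) := by
    intro j hj
    have := hx j
    simpa [Finsupp.single_apply, hj.symm] using this
  have hi := hx i
  simp only [Finsupp.coe_tsub, Pi.sub_apply, Finsupp.single_eq_same] at hi
  obtain ⟨h1, h2, h3⟩ := hi
  constructor
  · intro j
    by_cases hj : j = i
    · subst hj
      exact ⟨h1, fun l hl => (h3 l (by omega)).ge, fun l hl => h3 l (by omega)⟩
    · exact h0 j hj
  · intro j
    by_cases hj : j = i
    · subst hj
      refine ⟨by simpa [fl] using h1, fun l hl => ?_, fun l hl => ?_⟩ <;> simp [fl, h3 l (by omega)]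
    · simpa [fl, hj] using h0 j hj

lemma B_small {k d : ℕ} (J : Fin k →₀ ℕ) (i : Fin k) (h : J i ≠ 0) (η : ℝ) (c : Ch (Y k d))
    (hc : c ∈ sup (small (DJ d (J - Finsupp.single i 1)) η)) : B i c ∈ sup (small (DJ d J) η) := by
  rw [B_app]
  refine Submodule.add_mem _ (sup_mono (fun l hl => ?_) hc) (mp_sup _ (fun l hl => ?_) hc)
  · exact small_mono (fun x hx => (DJ_B J i h x hx).1) le_rfl l hl
  · refine ⟨?_, ?_⟩
    · intro x hx
      obtain ⟨y, hy, rfl⟩ := List.mem_map.1 hx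
      exact (DJ_B J i h y (hl.1 y hy)).2
    · intro x hx x' hx'
      obtain ⟨y, hy, rfl⟩ := List.mem_map.1 hx
      obtain ⟨y', hy', rfl⟩ := List.mem_map.1 hx'
      rw [fl_dist]; exact hl.2 y hy y' hy'

lemma family (k d : ℕ) (η : ℝ) (hη : 0 < η) (n : ℕ) :
    ∃ h : (Fin k →₀ ℕ) → Ch (Y k d), ∀ J, (∀ i, J i ≤ d) → J.degree ≤ n →
      h J ∈ sup (small (DJ d J) ((J.degree + 1) * η)) ∧ (J = 0 → h J = bs [pole d J]) ∧
      (J ≠ 0 → bd (h J) = zJ h J) := by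
  induction n with
  | zero =>
    refine ⟨fun J => bs [pole d J], fun J hJ hJ0 => ?_⟩
    have : J = 0 := by
      have : J.degree = 0 := by omega
      exact (Finsupp.degree_eq_zero_iff J).1 this
    refine ⟨bs_mem ⟨?_, ?_⟩, fun _ => rfl, fun h => absurd this h⟩
    · intro x hx; rw [List.mem_singleton.1 hx]; exact pole_mem J hJ
    · intro x hx y hy
      rw [List.mem_singleton.1 hx, List.mem_singleton.1 hy, dist_self]; positivity
  | succ n ih =>
    obtain ⟨h, hh⟩ := ih
    have key : ∀ J : Fin k →₀ ℕ, (∀ i, J i ≤ d) → J.degree = n + 1 →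
        ∃ w ∈ sup (small (DJ d J) ((n + 1) * η + η)), bd w = zJ h J := by
      intro J hJ hJn
      have hsub : ∀ i u, (J - Finsupp.single i 1 : Fin k →₀ ℕ) u ≤ d := fun i u => by
        have := hJ u
        simp only [Finsupp.coe_tsub, Pi.sub_apply]; omega
      refine fill (DJ d J) (pole d J) (pole_mem J hJ) (star_DJ J hJ) 2
        (fun x hx => sph_dist (DJ_sph J hx) (DJ_sph J (pole_mem J hJ))) _ _ (by positivity) hη _ ?_ ?_
      · refine Submodule.sum_mem _ fun i _ => ?_
        split_ifs with hi
        · exact Submodule.zero_mem _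
        · have hd := deg_sub J i hi
          refine B_small J i hi _ _ ?_
          have := (hh (J - Finsupp.single i 1) (hsub i) (by omega)).1
          have e : (J - Finsupp.single i 1).degree = n := by omega
          rwa [e] at this
      · rw [zJ, map_sum]
        rcases Nat.eq_zero_or_pos n with hn | hn
        · refine Finset.sum_eq_zero fun i _ => ?_
          split_ifs with hi
          · simp
          · have hd := deg_sub J i hi
            have e : (J - Finsupp.single i 1).degree = 0 := by omega
            have e0 : J - Finsupp.single i 1 = 0 := (Finsupp.degree_eq_zero_iff _).1 e
            rw [(hh _ (hsub i) (by omega)).2.1 e0, bd_B, bd_cons, B_app]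
            simp [add_self_ch]
        · have : ∀ i, bd (if J i = 0 then 0 else B i (h (J - Finsupp.single i 1))) =
              ∑ u, if J i = 0 then 0 else if (J - Finsupp.single i 1 : Fin k →₀ ℕ) u = 0 then 0 else
                B i (B u (h (J - Finsupp.single i 1 - Finsupp.single u 1))) := by
            intro i
            by_cases hi : J i = 0
            · simp [hi]
            · have hd := deg_sub J i hi
              have hne : J - Finsupp.single i 1 ≠ 0 := by
                intro e0; rw [e0] at hd; simp at hd; omega
              simp only [hi, if_false]
              rw [bd_B, (hh _ (hsub i) (by omega)).2.2 hne, zJ, map_sum]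
              refine Finset.sum_congr rfl fun u _ => ?_
              split_ifs <;> simp
          simp_rw [this]
          rw [← Finset.sum_product']
          refine Finset.sum_involution (fun a _ => (a.2, a.1)) ?_ ?_ (by simp) (by simp)
          · rintro ⟨i, u⟩ _
            simp only
            by_cases hiu : i = u
            · subst hiu; exact add_self_ch _
            · have e1 : (J - Finsupp.single i 1 : Fin k →₀ ℕ) u = J u := by
                simp [Finsupp.single_apply, hiu]
              have e2 : (J - Finsupp.single u 1 : Fin k →₀ ℕ) i = J i := by
                simp [Finsupp.single_apply, Ne.symm hiu]
              rw [e1, e2, B_comm u i, tsub_right_comm]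
              split_ifs
              · simp
              · simp
              · simp
              · exact add_self_ch _
          · rintro ⟨i, u⟩ _ hne heq
            simp only [Prod.mk.injEq] at heq
            obtain ⟨rfl, _⟩ := heq
            apply hne
            simp [B_B]
    choose! w hw1 hw2 using key
    refine ⟨fun J => if J.degree = n + 1 then w J else h J, fun J hJ hJn => ?_⟩
    have hz : J.degree ≤ n + 1 → zJ (fun J => if J.degree = n + 1 then w J else h J) J = zJ h J := by
      intro _
      refine Finset.sum_congr rfl fun i _ => ?_
      by_cases hi : J i = 0
      · simp [hi]
      · have := deg_sub J i hi
        have h2 : (J - Finsupp.single i 1).degree ≠ n + 1 := by omega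
        simp [hi, h2]
    rw [hz hJn]
    beta_reduce
    by_cases hJ1 : J.degree = n + 1
    · rw [if_pos hJ1]
      refine ⟨?_, ?_, fun _ => hw2 J hJ hJ1⟩
      · have := hw1 J hJ hJ1
        have e : ((J.degree : ℝ) + 1) * η = (n + 1) * η + η := by rw [hJ1]; push_cast; ring
        rwa [e]
      · rintro rfl; simp at hJ1
    · rw [if_neg hJ1]
      exact hh J hJ (by omega)

end

end GHR

namespace GHR

noncomputable section

lemma sup_eq {X M : Type} [AddCommGroup M] [Module (ZMod 2) M] {P : List X → Prop}
    (f g : Ch X →ₗ[ZMod 2] M) (h : ∀ l, P l → f (bs l) = g (bs l))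
    {c : Ch X} (hc : c ∈ sup P) : f c = g c := by
  have := sup_map (f - g) ⊥ (fun l hl => by simp [h l hl]) hc
  simpa [sub_eq_zero] using this

/-- equivariance of a sign function -/
def Eqv {k d : ℕ} (F : Finset (Fin k)) (s : Y k d → ZMod 2) : Prop :=
  ∀ x ∈ sph k d, ∀ i, s (fl i x) = s x + if i ∈ F then 1 else 0

lemma evl_fl {k d : ℕ} (i : Fin k) (S : List (Finset (Fin k) × (Y k d → ZMod 2)))
    (hS : ∀ s ∈ S, Eqv s.1 s.2) (l : List (Y k d)) (hl : ∀ x ∈ l, x ∈ sph k d) :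
    evl (S.map Prod.snd) (l.map (fl i)) = evl (S.map Prod.snd) l := by
  induction S generalizing l with
  | nil =>
    match l with
    | [] => simp
    | [x] => simp [evl]
    | x :: y :: l => simp [evl]
  | cons s S ih =>
    match l with
    | [] => simp
    | [x] => simp [evl]
    | x :: y :: l =>
      have := ih (fun s hs => hS s (List.mem_cons_of_mem _ hs)) (y :: l)
        (fun x hx => hl x (List.mem_cons_of_mem _ hx))
      simp only [List.map_cons] at this
      simp only [List.map_cons, evl, this]
      rw [hS s (by simp) x (hl x (by simp)), hS s (by simp) y (hl y (by simp))]
      congr 1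
      have := CharTwo.add_self_eq_zero (if i ∈ s.1 then (1 : ZMod 2) else 0)
      linear_combination this

lemma fv_B {k d : ℕ} (i : Fin k) (F : Finset (Fin k)) (s : Y k d → ZMod 2) (hs : Eqv F s)
    (S : List (Finset (Fin k) × (Y k d → ZMod 2)))
    (hS : ∀ s ∈ S, Eqv s.1 s.2) (c : Ch (Y k d)) (hc : c ∈ sup (fun l => ∀ x ∈ l, x ∈ sph k d)) :
    fv s (S.map Prod.snd) (B i c) = (if i ∈ F then 1 else 0) * ev (S.map Prod.snd) c := by
  have : (fv s (S.map Prod.snd) ∘ₗ B i) c =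
      ((if i ∈ F then (1 : ZMod 2) else 0) • ev (S.map Prod.snd)) c := by
    refine sup_eq _ _ ?_ hc
    intro l hl
    cases l with
    | nil =>
      have : evl (S.map Prod.snd) ([] : List (Y k d)) = 0 := by cases S <;> simp [evl]
      rw [LinearMap.smul_apply]
      simp [B_app, fv, fvl, ev, this]
    | cons x l =>
      have h1 := evl_fl i S hS (x :: l) hl
      simp only [List.map_cons] at h1
      have h2 := hs x (hl x (by simp)) i
      simp only [LinearMap.comp_apply, B_app, map_add, mp_bs, fv, lin_bs, fvl, List.map_cons, ev,
        LinearMap.smul_apply, h1, h2, smul_eq_mul]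
      have := CharTwo.add_self_eq_zero (s x)
      linear_combination (evl (S.map Prod.snd) (x :: l)) * this
  rw [LinearMap.smul_apply, smul_eq_mul] at this
  exact this

lemma ev_h {k d : ℕ} (η : ℝ) (n : ℕ) (h : (Fin k →₀ ℕ) → Ch (Y k d))
    (hh : ∀ J, (∀ i, J i ≤ d) → J.degree ≤ n →
      h J ∈ sup (small (DJ d J) ((J.degree + 1) * η)) ∧ (J = 0 → h J = bs [pole d J]) ∧
      (J ≠ 0 → bd (h J) = zJ h J)) (S : List (Finset (Fin k) × (Y k d → ZMod 2)))
    (hS : ∀ s ∈ S, Eqv s.1 s.2) (hn : S.length ≤ n) (J : Fin k →₀ ℕ) (hJ : ∀ i, J i ≤ d)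
    (hJS : J.degree = S.length) :
    ev (S.map Prod.snd) (h J) =
      MvPolynomial.coeff J (S.map fun s => ∑ i ∈ s.1, (MvPolynomial.X i : MvPolynomial (Fin k) (ZMod 2))).prod := by
  induction S generalizing J with
  | nil =>
    have : J = 0 := (Finsupp.degree_eq_zero_iff J).1 (by simpa using hJS)
    rw [(hh J hJ (by simp [this])).2.1 this, this]
    simp [ev, evl]
  | cons s S ih =>
    simp only [List.length_cons] at hn hJS
    have hJ0 : J ≠ 0 := by rintro rfl; simp at hJS
    have hS' : ∀ s ∈ S, Eqv s.1 s.2 := fun s hs => hS s (List.mem_cons_of_mem _ hs)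
    rw [List.map_cons, ← stokes, (hh J hJ (by omega)).2.2 hJ0, zJ, map_sum, List.map_cons,
      List.prod_cons, Finset.sum_mul, MvPolynomial.coeff_sum, ← Finset.sum_subset (Finset.subset_univ s.1)]
    · refine Finset.sum_congr rfl fun i hi => ?_
      rw [MvPolynomial.coeff_X_mul']
      by_cases hJi : J i = 0
      · simp [hJi]
      · have hd := deg_sub J i hJi
        have hsub : ∀ u, (J - Finsupp.single i 1 : Fin k →₀ ℕ) u ≤ d := fun u => by
          have := hJ u
          simp only [Finsupp.coe_tsub, Pi.sub_apply]; omega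
        rw [if_neg hJi, if_pos (by simpa using hJi), fv_B i s.1 s.2 (hS s (by simp)) S hS', if_pos hi,
          one_mul, ih hS' (by omega) _ hsub (by omega)]
        refine sup_mono (fun l hl => ?_) (hh _ hsub (by omega)).1
        exact fun x hx => DJ_sph _ (hl.1 x hx)
    · intro i _ hi
      by_cases hJi : J i = 0
      · simp [hJi]
      · have hd := deg_sub J i hJi
        have hsub : ∀ u, (J - Finsupp.single i 1 : Fin k →₀ ℕ) u ≤ d := fun u => by
          have := hJ u
          simp only [Finsupp.coe_tsub, Pi.sub_apply]; omega
        rw [if_neg hJi, fv_B i s.1 s.2 (hS s (by simp)) S hS', if_neg hi, zero_mul]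
        refine sup_mono (fun l hl => ?_) (hh _ hsub (by omega)).1
        exact fun x hx => DJ_sph _ (hl.1 x hx)

lemma evl_ne {X : Type} (S : List (X → ZMod 2)) (l : List X) (h : evl S l ≠ 0) :
    (∃ x, x ∈ l) ∧ ∀ s ∈ S, ∃ x ∈ l, ∃ y ∈ l, s x ≠ s y := by
  induction S generalizing l with
  | nil =>
    match l with
    | [] => simp [evl] at h
    | x :: l => exact ⟨⟨x, by simp⟩, by simp⟩
  | cons s S ih =>
    match l with
    | [] => simp [evl] at h
    | [x] => simp [evl] at h
    | x :: y :: l =>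
      simp only [evl] at h
      have h1 := left_ne_zero_of_mul h
      obtain ⟨_, h2⟩ := ih _ (right_ne_zero_of_mul h)
      refine ⟨⟨x, by simp⟩, ?_⟩
      intro s' hs'
      rcases List.mem_cons.1 hs' with rfl | hs'
      · refine ⟨x, by simp, y, by simp, fun e => h1 ?_⟩
        rw [e]; exact CharTwo.add_self_eq_zero _
      · obtain ⟨u, hu, v, hv, huv⟩ := h2 s' hs'
        exact ⟨u, List.mem_cons_of_mem _ hu, v, List.mem_cons_of_mem _ hv, huv⟩

lemma exists_rho (n : ℕ) : ∃ ρ : (Fin n → ℝ) → ZMod 2, ∀ x, x ≠ 0 → ρ (-x) = ρ x + 1 := by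
  classical
  refine ⟨fun x => if 0 < toLex x then 0 else 1, fun x hx => ?_⟩
  have h0 : toLex x ≠ 0 := fun h => hx (by simpa using h)
  have hn : toLex (-x) = - toLex x := rfl
  simp only [hn, Left.neg_pos_iff]
  split_ifs with h1 h2 h2
  · exact absurd h1 (lt_asymm h2)
  · decide
  · decide
  · rcases lt_or_gt_of_ne h0 with h | h
    · exact absurd h h1
    · exact absurd h h2

lemma exists_sign {k d : ℕ} (F : Finset (Fin k)) (f : Y k d → ℝ)
    (hf : ∀ x ∈ sph k d, ∀ i, f (fl i x) = if i ∈ F then - f x else f x) :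
    ∃ s : Y k d → ZMod 2, Eqv F s ∧ ∀ x y, s x ≠ s y → f x * f y ≤ 0 := by
  classical
  obtain ⟨ρ, hρ⟩ := exists_rho (d + 1)
  refine ⟨fun x => if 0 < f x then 0 else if f x < 0 then 1 else ∑ i ∈ F, ρ (x i), ?_, ?_⟩
  · intro x hx i
    have hsum : ∑ j ∈ F, ρ (fl i x j) = (∑ j ∈ F, ρ (x j)) + if i ∈ F then 1 else 0 := by
      have : ∀ j, ρ (fl i x j) = ρ (x j) + if j = i then 1 else 0 := by
        intro j
        by_cases hj : j = i
        · have hne : x j ≠ 0 := by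
            intro h0
            have := hx j
            rw [h0] at this
            simp at this
          simp [fl, hj]
          rw [← hj]; exact hρ _ hne
        · simp [fl, hj]
      simp_rw [this, Finset.sum_add_distrib]
      simp
    simp only [hsum, hf x hx i]
    by_cases hi : i ∈ F
    · simp only [hi, if_true]
      rcases lt_trichotomy (f x) 0 with h | h | h
      · have h1 : ¬ (0 < f x) := by linarith
        have h2 : 0 < - f x := by linarith
        simp only [h, h1, h2, if_true, if_false]; decide
      · simp [h]
      · have h1 : ¬ (f x < 0) := by linarith
        have h2 : ¬ (0 < - f x) := by linarith
        have h3 : - f x < 0 := by linarith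
        simp only [h, h2, h3, if_true, if_false]; decide
    · simp [hi]
  · intro x y hxy
    by_contra hc
    push Not at hc
    apply hxy
    rcases pos_and_pos_or_neg_and_neg_of_mul_pos hc with ⟨h1, h2⟩ | ⟨h1, h2⟩
    · simp [h1, h2]
    · simp [h1, h2, h1.not_gt, h2.not_gt]

lemma sph_compact (k d : ℕ) : IsCompact (sph k d) := by
  refine Metric.isCompact_of_isClosed_isBounded ?_ ?_
  · have : sph k d = ⋂ i, {x | ∑ l, |x i l| = 1} := by ext; simp [sph]
    rw [this]
    refine isClosed_iInter fun i => isClosed_eq ?_ continuous_const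
    fun_prop
  · rw [Metric.isBounded_iff]
    exact ⟨2, fun x hx y hy => sph_dist hx hy⟩

open Filter Topology in
theorem borsuk_ulam {k d : ℕ} (L : List (Finset (Fin k) × (Y k d → ℝ)))
    (hc : ∀ s ∈ L, ContinuousOn s.2 (sph k d))
    (hf : ∀ s ∈ L, ∀ x ∈ sph k d, ∀ i, s.2 (fl i x) = if i ∈ s.1 then - s.2 x else s.2 x)
    (J : Fin k →₀ ℕ) (hJ : ∀ i, J i ≤ d)
    (hco : MvPolynomial.coeff J
      (L.map fun s => ∑ i ∈ s.1, (MvPolynomial.X i : MvPolynomial (Fin k) (ZMod 2))).prod ≠ 0) :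
    ∃ x ∈ sph k d, ∀ s ∈ L, s.2 x = 0 := by
  classical
  have hdeg : J.degree = L.length := by
    have hom : (L.map fun s => ∑ i ∈ s.1,
        (MvPolynomial.X i : MvPolynomial (Fin k) (ZMod 2))).prod.IsHomogeneous L.length := by
      clear hco hc hf
      induction L with
      | nil => simpa using MvPolynomial.isHomogeneous_one _ _
      | cons s L ih =>
        rw [List.map_cons, List.prod_cons, List.length_cons, add_comm]
        refine MvPolynomial.IsHomogeneous.mul ?_ ih
        exact MvPolynomial.IsHomogeneous.sum _ _ _ fun i _ => MvPolynomial.isHomogeneous_X _ _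
    by_contra hne
    exact hco (hom.coeff_eq_zero hne)
  have hsgn : ∀ s : Finset (Fin k) × (Y k d → ℝ), ∃ σ : Y k d → ZMod 2, s ∈ L →
      Eqv s.1 σ ∧ ∀ x y, σ x ≠ σ y → s.2 x * s.2 y ≤ 0 := by
    intro s
    by_cases hs : s ∈ L
    · obtain ⟨σ, h⟩ := exists_sign s.1 s.2 (hf s hs)
      exact ⟨σ, fun _ => h⟩
    · exact ⟨0, fun h => absurd h hs⟩
  choose σ hσ using hsgn
  have step : ∀ δ > 0, ∃ x ∈ sph k d, ∀ s ∈ L, ∃ u ∈ sph k d, ∃ v ∈ sph k d,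
      dist u x ≤ δ ∧ dist v x ≤ δ ∧ s.2 u * s.2 v ≤ 0 := by
    intro δ hδ
    obtain ⟨h, hh⟩ := family k d (δ / (L.length + 1)) (by positivity) L.length
    have he := ev_h _ _ h hh (L.map fun s => (s.1, σ s)) (by
      intro s hs
      obtain ⟨s, hs', rfl⟩ := List.mem_map.1 hs
      exact (hσ s hs').1) (by simp) J hJ (by simpa using hdeg)
    rw [List.map_map, List.map_map] at he
    have hne : ev (L.map σ) (h J) ≠ 0 := by
      intro h0
      apply hco
      have e1 : (Prod.snd ∘ fun s => (s.1, σ s)) = σ := rfl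
      rw [e1, h0] at he
      exact he.symm
    have hsm := (hh J hJ hdeg.le).1
    have : ∃ l, small (DJ d J) δ l ∧ evl (L.map σ) l ≠ 0 := by
      by_contra hcon
      push Not at hcon
      apply hne
      refine sup_eq (ev (L.map σ)) 0 (P := small (DJ d J) δ) ?_ ?_
      · intro l hl
        simpa [ev] using hcon l hl
      · have e : ((J.degree : ℝ) + 1) * (δ / (L.length + 1)) = δ := by
          rw [hdeg]; field_simp
        rwa [e] at hsm
    obtain ⟨l, hl, hle⟩ := this
    obtain ⟨⟨x, hx⟩, h2⟩ := evl_ne _ _ hle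
    refine ⟨x, DJ_sph J (hl.1 x hx), fun s hs => ?_⟩
    obtain ⟨u, hu, v, hv, huv⟩ := h2 (σ s) (List.mem_map.2 ⟨s, hs, rfl⟩)
    exact ⟨u, DJ_sph J (hl.1 u hu), v, DJ_sph J (hl.1 v hv), hl.2 u hu x hx, hl.2 v hv x hx,
      (hσ s hs).2 u v huv⟩
  have step' : ∀ n : ℕ, ∃ x ∈ sph k d, ∀ s ∈ L, ∃ u ∈ sph k d, ∃ v ∈ sph k d,
      dist u x ≤ 1 / ((n : ℝ) + 1) ∧ dist v x ≤ 1 / ((n : ℝ) + 1) ∧ s.2 u * s.2 v ≤ 0 :=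
    fun n => step _ (by positivity)
  choose x hx hL using step'
  obtain ⟨x0, hx0, φ, hφ, hlim⟩ := (sph_compact k d).tendsto_subseq hx
  refine ⟨x0, hx0, fun s hs => ?_⟩
  choose u hu v hv h1 h2 h3 using fun n => hL n s hs
  have h0 : Tendsto (fun n => 1 / ((φ n : ℝ) + 1)) atTop (𝓝 0) :=
    tendsto_one_div_add_atTop_nhds_zero_nat.comp hφ.tendsto_atTop
  have key : ∀ w : ℕ → Y k d, (∀ n, w n ∈ sph k d) → (∀ n, dist (w n) (x n) ≤ 1 / ((n : ℝ) + 1)) →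
      Tendsto (fun n => s.2 (w (φ n))) atTop (𝓝 (s.2 x0)) := by
    intro w hw hwx
    have hw0 : Tendsto (fun n => w (φ n)) atTop (𝓝 x0) := by
      rw [tendsto_iff_dist_tendsto_zero] at hlim ⊢
      refine squeeze_zero (fun _ => dist_nonneg) (fun n => ?_) (by have := h0.add hlim; rwa [add_zero] at this)
      exact (dist_triangle _ (x (φ n)) _).trans (add_le_add (hwx _) le_rfl)
    have : Tendsto (fun n => w (φ n)) atTop (𝓝[sph k d] x0) :=
      tendsto_nhdsWithin_iff.2 ⟨hw0, Eventually.of_forall fun n => hw _⟩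
    exact (hc s hs x0 hx0).tendsto.comp this
  have := le_of_tendsto ((key u hu h1).mul (key v hv h2)) (Eventually.of_forall fun n => h3 (φ n))
  nlinarith [mul_self_nonneg (s.2 x0), mul_self_eq_zero.1 (le_antisymm this (mul_self_nonneg _))]

end

end GHR

namespace GHR

noncomputable section

open Finset

def lam {A ι : Type} [CommRing A] (U : Finset ι) (t : ι → A) (x : A) : A :=
  ∏ S ∈ U.powerset, (x + ∑ i ∈ S, t i)

open Classical in
def dpr {A ι : Type} [CommRing A] (U : Finset ι) (t : ι → A) : A :=
  ∏ S ∈ U.powerset, if S = ∅ then 1 else ∑ i ∈ S, t i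

lemma lam_empty {A ι : Type} [CommRing A] (t : ι → A) (x : A) : lam ∅ t x = x := by
  simp [lam]

lemma lam_insert {A ι : Type} [CommRing A] [DecidableEq ι] (U : Finset ι) (a : ι) (ha : a ∉ U) (t : ι → A)
    (x : A) : lam (insert a U) t x = lam U t x * lam U t (x + t a) := by
  rw [lam, prod_powerset_insert ha]
  congr 1
  refine prod_congr rfl fun S hS => ?_
  rw [sum_insert (fun h => ha (mem_powerset.1 hS h))]; ring

lemma dpr_insert {A ι : Type} [CommRing A] [DecidableEq ι] (U : Finset ι) (a : ι) (ha : a ∉ U) (t : ι → A) :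
    dpr (insert a U) t = dpr U t * lam U t (t a) := by
  rw [dpr, prod_powerset_insert ha]
  congr 1
  refine prod_congr rfl fun S hS => ?_
  rw [if_neg (insert_ne_empty _ _), sum_insert (fun h => ha (mem_powerset.1 hS h))]

lemma lam_map {A A' ι : Type} [CommRing A] [CommRing A'] (φ : A →+* A') (U : Finset ι) (t : ι → A) (x : A) :
    φ (lam U t x) = lam U (fun i => φ (t i)) (φ x) := by
  simp [lam, map_prod, map_add, map_sum]

lemma dpr_map {A A' ι : Type} [CommRing A] [CommRing A'] (φ : A →+* A') (U : Finset ι) (t : ι → A) :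
    φ (dpr U t) = dpr U (fun i => φ (t i)) := by
  simp only [dpr, map_prod]
  refine prod_congr rfl fun S _ => ?_
  split_ifs <;> simp

lemma lam_add {A ι : Type} [CommRing A] [CharP A 2] (U : Finset ι) (t : ι → A) (x y : A) :
    lam U t (x + y) = lam U t x + lam U t y := by
  classical
  induction U using Finset.induction_on generalizing x y with
  | empty => simp [lam_empty]
  | insert a U ha ih =>
    simp only [lam_insert U a ha, ih]
    have : (2 : A) = 0 := CharTwo.two_eq_zero
    linear_combination (lam U t x * lam U t y) * this

lemma lam_reindex {A ι κ : Type} [CommRing A] (e : κ ↪ ι) (U : Finset κ) (t : ι → A) (x : A) :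
    lam (U.map e) t x = lam U (fun i => t (e i)) x := by
  classical
  induction U using Finset.induction_on generalizing x with
  | empty => simp [lam_empty]
  | insert a U ha ih =>
    rw [map_insert, lam_insert _ _ (by simpa using ha), lam_insert _ _ ha, ih, ih]

lemma dpr_reindex {A ι κ : Type} [CommRing A] (e : κ ↪ ι) (U : Finset κ) (t : ι → A) :
    dpr (U.map e) t = dpr U (fun i => t (e i)) := by
  classical
  induction U using Finset.induction_on with
  | empty => simp [dpr]
  | insert a U ha ih =>
    rw [map_insert, dpr_insert _ _ (by simpa using ha), dpr_insert _ _ ha, ih, lam_reindex]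

open Polynomial in
lemma coeff_sq {A : Type} [CommRing A] [CharP A 2] (P : A[X]) (n : ℕ) :
    (P ^ 2).coeff n = if 2 ∣ n then (P.coeff (n / 2)) ^ 2 else 0 := by
  have : Fact (Nat.Prime 2) := ⟨Nat.prime_two⟩
  have : ExpChar A 2 := ExpChar.prime Nat.prime_two
  rw [← map_frobenius_expand 2 P, coeff_map, coeff_expand (by norm_num)]
  split_ifs
  · simp [frobenius_def]
  · simp

open Polynomial in
lemma lam_odd {A ι : Type} [CommRing A] [CharP A 2] (U : Finset ι) (t : ι → A) :
    (lam U (fun i => C (t i)) (X : A[X])).coeff 1 = dpr U t ∧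
    ∀ n, ¬ 2 ∣ n → n ≠ 1 → (lam U (fun i => C (t i)) (X : A[X])).coeff n = 0 := by
  classical
  induction U using Finset.induction_on with
  | empty =>
    simp only [lam_empty]
    refine ⟨by simp [dpr], fun n _ hn => ?_⟩
    rw [coeff_X, if_neg (Ne.symm hn)]
  | insert a U ha ih =>
    have e : lam (insert a U) (fun i => C (t i)) (X : A[X]) =
        (lam U (fun i => C (t i)) X) ^ 2 + lam U (fun i => C (t i)) X * C (lam U t (t a)) := by
      rw [lam_insert _ _ ha, lam_add, lam_map]; ring
    rw [e, dpr_insert _ _ ha]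
    refine ⟨?_, fun n hn hn1 => ?_⟩
    · rw [coeff_add, coeff_sq, coeff_mul_C, ih.1]; simp
    · rw [coeff_add, coeff_sq, coeff_mul_C, ih.2 n hn hn1, if_neg hn]; simp

open Polynomial in
lemma lam_top {A ι : Type} [CommRing A] [Nontrivial A] (U : Finset ι) (t : ι → A) :
    (lam U (fun i => C (t i)) (X : A[X])).coeff (2 ^ U.card) = 1 := by
  have hm : ∀ S ∈ U.powerset, (X + ∑ i ∈ S, C (t i) : A[X]).Monic := by
    intro S _
    rw [← map_sum]; exact monic_X_add_C _
  have hmon : (lam U (fun i => C (t i)) (X : A[X])).Monic := monic_prod_of_monic _ _ hm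
  have hd : (lam U (fun i => C (t i)) (X : A[X])).natDegree = 2 ^ U.card := by
    rw [lam, natDegree_prod_of_monic _ _ hm, ← card_powerset, card_eq_sum_ones]
    refine sum_congr rfl fun S _ => ?_
    rw [← map_sum]; exact natDegree_X_add_C _
  rw [← hd]; exact hmon

open Polynomial in
lemma coeff_key {A : Type} [CommRing A] [CharP A 2] (P : A[X]) (n : ℕ) (h1 : P.coeff (2 ^ n) = 1)
    (h2 : ∀ n, ¬ 2 ∣ n → n ≠ 1 → P.coeff n = 0) (a : ℕ) : ∀ r, r < 2 ^ a →
    (P ^ (2 ^ a + r)).coeff (2 ^ (a + n) + r) = P.coeff 1 ^ r := by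
  induction a with
  | zero =>
    intro r hr
    obtain rfl : r = 0 := by simpa using hr
    simp [h1]
  | succ a ih =>
    intro r hr
    have hp : 2 ^ (a + 1) = 2 * 2 ^ a := by ring
    have hp' : 2 ^ (a + 1 + n) = 2 * 2 ^ (a + n) := by ring
    obtain ⟨s, hs⟩ := Nat.even_or_odd' r
    have hsl : s < 2 ^ a := by omega
    have key : ((P ^ (2 ^ a + s)) ^ 2).coeff (2 * (2 ^ (a + n) + s)) = P.coeff 1 ^ (2 * s) := by
      rw [coeff_sq, if_pos (Dvd.intro _ rfl), Nat.mul_div_cancel_left _ (by norm_num), ih s hsl]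
      ring
    rcases hs with rfl | rfl
    · have e1 : 2 ^ (a + 1) + 2 * s = (2 ^ a + s) * 2 := by omega
      have e2 : 2 ^ (a + 1 + n) + 2 * s = 2 * (2 ^ (a + n) + s) := by omega
      rw [e1, e2, pow_mul, key]
    · have e1 : 2 ^ (a + 1) + (2 * s + 1) = 1 + (2 ^ a + s) * 2 := by omega
      have e2 : 2 ^ (a + 1 + n) + (2 * s + 1) = 1 + 2 * (2 ^ (a + n) + s) := by omega
      rw [e1, e2, pow_add, pow_one, pow_mul, coeff_mul,
        sum_eq_single (1, 2 * (2 ^ (a + n) + s)), key, pow_succ']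
      · rintro ⟨i, j⟩ hij hne
        rw [HasAntidiagonal.mem_antidiagonal] at hij
        simp only at hij ⊢
        by_cases hj : 2 ∣ j
        · by_cases hi : i = 1
          · exfalso; apply hne; subst hi; simp only [Prod.mk.injEq, true_and]; omega
          · rw [h2 i (by omega) hi, zero_mul]
        · rw [coeff_sq, if_neg hj, mul_zero]
      · intro h; exact absurd (by simp) h

def Dk (k : ℕ) : MvPolynomial (Fin k) (ZMod 2) := dpr univ MvPolynomial.X

lemma Dk_succ (k : ℕ) : MvPolynomial.finSuccEquiv (ZMod 2) k (Dk (k + 1)) =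
    Polynomial.C (Dk k) * lam (univ : Finset (Fin k)) (fun i => (Polynomial.C (MvPolynomial.X i) :
      Polynomial (MvPolynomial (Fin k) (ZMod 2)))) Polynomial.X := by
  have e1 : (univ : Finset (Fin (k + 1))) = insert 0 (univ.map ⟨Fin.succ, Fin.succ_injective _⟩) := by
    rw [Fin.univ_succ]; simp
  have e2 := dpr_map (MvPolynomial.finSuccEquiv (ZMod 2) k).toRingEquiv.toRingHom univ
    (MvPolynomial.X : Fin (k + 1) → MvPolynomial (Fin (k + 1)) (ZMod 2))
  have e3 := dpr_map (Polynomial.C : MvPolynomial (Fin k) (ZMod 2) →+* _) univ MvPolynomial.X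
  rw [Dk, Dk, e3]
  refine Eq.trans e2 ?_
  rw [e1, dpr_insert _ _ (by simp), dpr_reindex, lam_reindex]
  simp [MvPolynomial.finSuccEquiv_X_zero, MvPolynomial.finSuccEquiv_X_succ]

lemma exists_coeff (k : ℕ) : ∀ a r, r < 2 ^ a → ∃ J : Fin k →₀ ℕ,
    (∀ i, 2 * J i ≤ 2 ^ (a + k) + 2 * r) ∧ MvPolynomial.coeff J (Dk k ^ (2 ^ a + r)) ≠ 0 := by
  induction k with
  | zero =>
    intro a r _
    refine ⟨0, fun i => i.elim0, ?_⟩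
    simp [Dk, dpr]
  | succ k ih =>
    intro a r hr
    have main : ∃ J : Fin k →₀ ℕ, (∀ i, 2 * J i ≤ 2 ^ (a + (k + 1)) + 2 * r) ∧
        MvPolynomial.coeff J (Dk k ^ (2 ^ a + 2 * r)) ≠ 0 := by
      by_cases h : 2 * r < 2 ^ a
      · obtain ⟨J, hJ, hc⟩ := ih a (2 * r) h
        refine ⟨J, fun i => ?_, hc⟩
        have h1 := hJ i
        have h2 : 2 ^ (a + (k + 1)) = 2 * 2 ^ (a + k) := by ring
        have h3 : 2 ^ a ≤ 2 ^ (a + k) := Nat.pow_le_pow_right (by norm_num) (by omega)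
        omega
      · have hp : 2 ^ (a + 1) = 2 * 2 ^ a := by ring
        obtain ⟨J, hJ, hc⟩ := ih (a + 1) (2 * r - 2 ^ a) (by omega)
        refine ⟨J, fun i => ?_, ?_⟩
        · have h1 := hJ i
          have h2 : 2 ^ (a + (k + 1)) = 2 ^ (a + 1 + k) := by ring
          omega
        · have e : 2 ^ (a + 1) + (2 * r - 2 ^ a) = 2 ^ a + 2 * r := by omega
          rwa [e] at hc
    obtain ⟨J, hJ, hc⟩ := main
    refine ⟨J.cons (2 ^ (a + k) + r), fun i => ?_, ?_⟩
    · refine Fin.cases ?_ (fun i => ?_) i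
      · rw [Finsupp.cons_zero]
        have h2 : 2 ^ (a + (k + 1)) = 2 * 2 ^ (a + k) := by ring
        omega
      · rw [Finsupp.cons_succ]; exact hJ i
    · rw [← MvPolynomial.finSuccEquiv_coeff_coeff, map_pow, Dk_succ, mul_pow, ← Polynomial.C_pow,
        Polynomial.coeff_C_mul]
      have ho := lam_odd (univ : Finset (Fin k)) (MvPolynomial.X : Fin k → MvPolynomial (Fin k) (ZMod 2))
      have ht := lam_top (univ : Finset (Fin k)) (MvPolynomial.X : Fin k → MvPolynomial (Fin k) (ZMod 2))
      rw [card_univ, Fintype.card_fin] at ht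
      rw [coeff_key _ k ht ho.2 a r hr, ho.1]
      change MvPolynomial.coeff J (Dk k ^ _ * Dk k ^ r) ≠ 0
      rw [← pow_add, add_assoc, ← two_mul]
      exact hc

end

end GHR

namespace GHR

noncomputable section

open MeasureTheory
open scoped RealInnerProductSpace

def vv {d : ℕ} (y : Fin (d + 1) → ℝ) : EuclideanSpace ℝ (Fin d) :=
  WithLp.toLp 2 fun l => y l.castSucc

def aff {d : ℕ} (y : Fin (d + 1) → ℝ) (p : EuclideanSpace ℝ (Fin d)) : ℝ :=
  ⟪p, vv y⟫ - y (Fin.last d)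

lemma aff_neg {d : ℕ} (y : Fin (d + 1) → ℝ) (p : EuclideanSpace ℝ (Fin d)) :
    aff (-y) p = - aff y p := by
  have : vv (-y) = - vv y := by ext l; simp [vv]
  simp only [aff, this, inner_neg_right, Pi.neg_apply]; ring

lemma cont_vv {d : ℕ} : Continuous (vv : (Fin (d + 1) → ℝ) → EuclideanSpace ℝ (Fin d)) := by
  unfold vv
  refine (PiLp.continuous_toLp 2 _).comp ?_
  fun_prop

lemma cont_aff_left {d : ℕ} (p : EuclideanSpace ℝ (Fin d)) : Continuous fun y => aff y p := by
  unfold aff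
  exact (continuous_const.inner cont_vv).sub (continuous_apply _)

lemma cont_aff {d : ℕ} (y : Fin (d + 1) → ℝ) : Continuous fun p => aff y p := by
  unfold aff
  fun_prop

lemma null_aff {d : ℕ} (y : Fin (d + 1) → ℝ) (hy : y ≠ 0) :
    (volume : Measure (EuclideanSpace ℝ (Fin d))) {p | aff y p = 0} = 0 := by
  by_cases hv : vv y = 0
  · have : {p | aff y p = 0} = (∅ : Set (EuclideanSpace ℝ (Fin d))) := by
      ext p
      simp only [Set.mem_setOf_eq, Set.mem_empty_iff_false, iff_false]
      intro h
      apply hy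
      simp only [aff, hv, inner_zero_right, zero_sub, neg_eq_zero] at h
      funext l
      refine Fin.lastCases h (fun l => ?_) l
      have := congrArg (fun w : EuclideanSpace ℝ (Fin d) => w l) hv
      simpa [vv] using this
    rw [this]; simp
  · rcases Set.eq_empty_or_nonempty {p : EuclideanSpace ℝ (Fin d) | aff y p = 0} with h | ⟨p0, hp0⟩
    · rw [h]; simp
    · have key := Measure.addHaar_affineSubspace (volume : Measure (EuclideanSpace ℝ (Fin d)))
        (AffineSubspace.mk' p0 (ℝ ∙ vv y)ᗮ) (by
          intro htop
          have : p0 + vv y ∈ AffineSubspace.mk' p0 (ℝ ∙ vv y)ᗮ := by rw [htop]; trivial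
          rw [AffineSubspace.mem_mk', vsub_eq_sub, add_sub_cancel_left,
            Submodule.mem_orthogonal_singleton_iff_inner_right] at this
          exact hv (inner_self_eq_zero.1 this))
      refine measure_mono_null ?_ key
      intro p hp
      simp only [SetLike.mem_coe]
      rw [AffineSubspace.mem_mk', vsub_eq_sub, Submodule.mem_orthogonal_singleton_iff_inner_left,
        inner_sub_left]
      simp only [Set.mem_setOf_eq, aff] at hp hp0
      linarith

lemma sph_ne {k d : ℕ} {x : Y k d} (hx : x ∈ sph k d) (j : Fin k) : x j ≠ 0 := by
  intro h0
  have := hx j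
  rw [h0] at this
  simp at this

lemma ae_aff {k d : ℕ} {x : Y k d} (hx : x ∈ sph k d) (μ : Measure (EuclideanSpace ℝ (Fin d)))
    (hac : μ ≪ volume) : ∀ᵐ p ∂μ, ∀ j, aff (x j) p ≠ 0 := by
  rw [ae_all_iff]
  intro j
  rw [ae_iff]
  simp only [not_not]
  exact hac (null_aff _ (sph_ne hx j))

def ff {k d : ℕ} (μ : Measure (EuclideanSpace ℝ (Fin d))) (S : Finset (Fin k)) (x : Y k d) : ℝ :=
  ∫ p, ∏ j ∈ S, Real.sign (aff (x j) p) ∂μ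

lemma ff_fl {k d : ℕ} (μ : Measure (EuclideanSpace ℝ (Fin d))) (S : Finset (Fin k)) (x : Y k d)
    (i : Fin k) : ff μ S (fl i x) = if i ∈ S then - ff μ S x else ff μ S x := by
  classical
  have h : ∀ p j, Real.sign (aff (fl i x j) p) = (if j = i then -1 else 1) * Real.sign (aff (x j) p) := by
    intro p j
    by_cases hj : j = i
    · simp [fl, hj, aff_neg, Real.sign_neg]
    · simp [fl, hj]
  have h2 : ∀ p, ∏ j ∈ S, Real.sign (aff (fl i x j) p) =
      (if i ∈ S then -1 else 1) * ∏ j ∈ S, Real.sign (aff (x j) p) := by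
    intro p
    simp_rw [h, Finset.prod_mul_distrib]
    congr 1
    rw [Finset.prod_ite_eq']
  simp only [ff, h2]
  split_ifs
  · simp [integral_neg]
  · simp

lemma meas_sign : Measurable Real.sign := by
  unfold Real.sign
  refine Measurable.ite measurableSet_Iio measurable_const ?_
  exact Measurable.ite measurableSet_Ioi measurable_const measurable_const

lemma abs_sign_le (r : ℝ) : ‖Real.sign r‖ ≤ 1 := by
  rcases Real.sign_apply_eq r with h | h | h <;> simp [h]

lemma sign_cont {r : ℝ} (hr : r ≠ 0) : ContinuousAt Real.sign r := by
  rcases lt_or_gt_of_ne hr with h | h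
  · refine (continuousAt_const (y := (-1 : ℝ))).congr ?_
    filter_upwards [Iio_mem_nhds h] with s hs
    exact (Real.sign_of_neg hs).symm
  · refine (continuousAt_const (y := (1 : ℝ))).congr ?_
    filter_upwards [Ioi_mem_nhds h] with s hs
    exact (Real.sign_of_pos hs).symm

lemma meas_prod {k d : ℕ} (S : Finset (Fin k)) (x : Y k d) :
    Measurable fun p => ∏ j ∈ S, Real.sign (aff (x j) p) :=
  Finset.measurable_fun_prod _ fun j _ => meas_sign.comp (cont_aff (x j)).measurable

lemma bd_prod {k d : ℕ} (S : Finset (Fin k)) (x : Y k d) (p) :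
    ‖∏ j ∈ S, Real.sign (aff (x j) p)‖ ≤ 1 := by
  rw [norm_prod]
  exact Finset.prod_le_one (fun _ _ => norm_nonneg _) fun _ _ => abs_sign_le _

lemma int_prod {k d : ℕ} (μ : Measure (EuclideanSpace ℝ (Fin d))) [IsFiniteMeasure μ]
    (S : Finset (Fin k)) (x : Y k d) : Integrable (fun p => ∏ j ∈ S, Real.sign (aff (x j) p)) μ :=
  Integrable.of_bound (meas_prod S x).aestronglyMeasurable 1 (Filter.Eventually.of_forall (bd_prod S x))

lemma ff_cont {k d : ℕ} (μ : Measure (EuclideanSpace ℝ (Fin d))) [IsFiniteMeasure μ]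
    (hac : μ ≪ volume) (S : Finset (Fin k)) : ContinuousOn (ff μ S) (sph k d) := by
  intro x0 hx0
  refine continuousWithinAt_of_dominated (bound := fun _ => 1)
    (Filter.Eventually.of_forall fun x => (meas_prod S x).aestronglyMeasurable)
    (Filter.Eventually.of_forall fun x => Filter.Eventually.of_forall (bd_prod S x))
    (integrable_const _) ?_
  filter_upwards [ae_aff hx0 μ hac] with p hp
  refine ContinuousAt.continuousWithinAt ?_
  refine tendsto_finsetProd _ fun j _ => ?_
  have h1 : ContinuousAt (fun x : Y k d => aff (x j) p) x0 :=
    ((cont_aff_left p).comp (continuous_apply j)).continuousAt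
  exact ContinuousAt.comp (g := Real.sign) (sign_cont (hp j)) h1

lemma exists_zero (d k m a : ℕ) (hk : 0 < k)
    (hma : 2 ^ a ≤ m) (hma' : m < 2 ^ (a + 1))
    (hdm : m + (2 ^ (k - 1) - 1) * 2 ^ a ≤ d)
    (μ : Fin m → Measure (EuclideanSpace ℝ (Fin d)))
    (hfin : ∀ i, IsFiniteMeasure (μ i))
    (hac : ∀ i, μ i ≪ volume) :
    ∃ x ∈ sph k d, ∀ i, ∀ S : Finset (Fin k), S ≠ ∅ → ff (μ i) S x = 0 := by
  classical
  obtain ⟨r, rfl⟩ := Nat.exists_eq_add_of_le hma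
  have hp : 2 ^ (a + 1) = 2 * 2 ^ a := by ring
  obtain ⟨J, hJ, hc⟩ := exists_coeff k a r (by omega)
  have hJd : ∀ i, J i ≤ d := by
    intro i
    have h1 := hJ i
    obtain ⟨k', rfl⟩ : ∃ k', k = k' + 1 := ⟨k - 1, by omega⟩
    have h2 : 2 ^ (a + (k' + 1)) = 2 * (2 ^ k' * 2 ^ a) := by ring
    have h3 : (2 ^ (k' + 1 - 1) - 1) * 2 ^ a = 2 ^ k' * 2 ^ a - 2 ^ a := by
      rw [Nat.add_sub_cancel, Nat.sub_mul, one_mul]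
    have h4 : 2 ^ a ≤ 2 ^ k' * 2 ^ a := Nat.le_mul_of_pos_left _ (by positivity)
    omega
  let T : Finset (Fin (2 ^ a + r) × Finset (Fin k)) :=
    Finset.univ ×ˢ (Finset.univ.powerset.filter (fun S => S ≠ ∅))
  let L : List (Finset (Fin k) × (Y k d → ℝ)) := T.toList.map fun q => (q.2, ff (μ q.1) q.2)
  have hprod : (L.map fun s => ∑ i ∈ s.1, (MvPolynomial.X i : MvPolynomial (Fin k) (ZMod 2))).prod =
      Dk k ^ (2 ^ a + r) := by
    simp only [L, List.map_map]
    have e : ((fun s : Finset (Fin k) × (Y k d → ℝ) => ∑ i ∈ s.1,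
        (MvPolynomial.X i : MvPolynomial (Fin k) (ZMod 2))) ∘
        fun q : Fin (2 ^ a + r) × Finset (Fin k) => (q.2, ff (μ q.1) q.2)) =
        fun q => ∑ i ∈ q.2, MvPolynomial.X i := rfl
    rw [e, Finset.prod_map_toList, Finset.prod_product]
    simp only [Finset.prod_const, Finset.card_univ, Fintype.card_fin]
    congr 1
    rw [Dk, dpr, Finset.prod_filter]
    refine Finset.prod_congr rfl fun S _ => ?_
    by_cases hS : S = ∅ <;> simp [hS]
  obtain ⟨x, hx, h⟩ := borsuk_ulam L (by
      intro s hs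
      obtain ⟨q, _, rfl⟩ := List.mem_map.1 hs
      exact ff_cont (μ q.1) (hac _) _) (by
      intro s hs x _ i
      obtain ⟨q, _, rfl⟩ := List.mem_map.1 hs
      exact ff_fl _ _ _ _) J hJd (by rw [hprod]; exact hc)
  refine ⟨x, hx, fun i S hS => ?_⟩
  refine h (S, ff (μ i) S) (List.mem_map.2 ⟨(i, S), ?_, rfl⟩)
  simp [T, hS]

lemma region {k d : ℕ} (μ : Measure (EuclideanSpace ℝ (Fin d))) [IsFiniteMeasure μ]
    (hac : μ ≪ volume) (x : Y k d) (hx : x ∈ sph k d)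
    (h0 : ∀ S : Finset (Fin k), S ≠ ∅ → ff μ S x = 0) (ε : Fin k → ℝ)
    (hε : ∀ j, ε j = 1 ∨ ε j = -1) :
    μ {p | ∀ j, 0 ≤ ε j * aff (x j) p} = μ Set.univ / 2 ^ k := by
  classical
  have hms : MeasurableSet {p | ∀ j, 0 ≤ ε j * aff (x j) p} := by
    have : {p | ∀ j, 0 ≤ ε j * aff (x j) p} = ⋂ j, {p | 0 ≤ ε j * aff (x j) p} := by
      ext; simp
    rw [this]
    refine MeasurableSet.iInter fun j => ?_
    exact measurableSet_le measurable_const ((cont_aff (x j)).measurable.const_mul _)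
  have hae : ({p | ∀ j, 0 ≤ ε j * aff (x j) p}.indicator fun _ => (1 : ℝ)) =ᵐ[μ]
      fun p => (1 / 2 ^ k) * ∑ S ∈ (Finset.univ : Finset (Fin k)).powerset,
        (∏ j ∈ S, ε j) * ∏ j ∈ S, Real.sign (aff (x j) p) := by
    filter_upwards [ae_aff hx μ hac] with p hp
    have e1 : ∑ S ∈ (Finset.univ : Finset (Fin k)).powerset,
        (∏ j ∈ S, ε j) * ∏ j ∈ S, Real.sign (aff (x j) p) =
        ∏ j, (1 + ε j * Real.sign (aff (x j) p)) := by
      rw [Finset.prod_one_add]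
      exact Finset.sum_congr rfl fun S _ => Finset.prod_mul_distrib.symm
    rw [e1]
    have hs : ∀ j, ε j * Real.sign (aff (x j) p) = 1 ∧ 0 ≤ ε j * aff (x j) p ∨
        ε j * Real.sign (aff (x j) p) = -1 ∧ ¬ (0 ≤ ε j * aff (x j) p) := by
      intro j
      rcases lt_or_gt_of_ne (hp j) with h | h
      · rw [Real.sign_of_neg h]
        rcases hε j with e | e <;> rw [e]
        · right; exact ⟨by norm_num, by linarith⟩
        · left; exact ⟨by norm_num, by linarith⟩
      · rw [Real.sign_of_pos h]
        rcases hε j with e | e <;> rw [e]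
        · left; exact ⟨by norm_num, by linarith⟩
        · right; exact ⟨by norm_num, by linarith⟩
    by_cases hall : ∀ j, 0 ≤ ε j * aff (x j) p
    · rw [Set.indicator_of_mem (show p ∈ {p | ∀ j, 0 ≤ ε j * aff (x j) p} from hall)]
      have : ∀ j, 1 + ε j * Real.sign (aff (x j) p) = 2 := by
        intro j
        rcases hs j with h | h
        · rw [h.1]; norm_num
        · exact absurd (hall j) h.2
      simp only [this, Finset.prod_const, Finset.card_univ, Fintype.card_fin]
      field_simp
    · rw [Set.indicator_of_notMem (show p ∉ {p | ∀ j, 0 ≤ ε j * aff (x j) p} from hall)]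
      push Not at hall
      obtain ⟨j, hj⟩ := hall
      have : 1 + ε j * Real.sign (aff (x j) p) = 0 := by
        rcases hs j with h | h
        · exact absurd h.2 (not_le.2 hj)
        · rw [h.1]; norm_num
      rw [Finset.prod_eq_zero (Finset.mem_univ j) this, mul_zero]
  have hreal : μ.real {p | ∀ j, 0 ≤ ε j * aff (x j) p} = μ.real Set.univ / 2 ^ k := by
    rw [← integral_indicator_one hms]
    refine (integral_congr_ae hae).trans ?_
    rw [integral_const_mul, integral_finsetSum _ fun S _ => (int_prod μ S x).const_mul _]
    rw [Finset.sum_eq_single ∅]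
    · simp; ring
    · intro S _ hS
      rw [integral_const_mul]
      have := h0 S hS
      rw [ff] at this
      rw [this, mul_zero]
    · simp
  have hne : μ Set.univ / 2 ^ k ≠ ⊤ := ENNReal.div_ne_top (measure_ne_top _ _) (by positivity)
  rw [← ENNReal.toReal_eq_toReal_iff' (measure_ne_top _ _) hne]
  rw [ENNReal.toReal_div]
  simpa [Measure.real] using hreal

end

end GHR

open MeasureTheory
open scoped RealInnerProductSpace

/-- The Mani-Levitska–Vrećica–Živaljević bound for the
Grünbaum–Hadwiger–Ramos problem. -/
theorem gruenbaum_hadwiger_ramos (d k m a : ℕ)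
    (hd : 0 < d) (hk : 0 < k) (hm : 0 < m) (ha : 0 < a)
    (hma : 2 ^ a ≤ m) (hma' : m < 2 ^ (a + 1))
    (hdm : m + (2 ^ (k - 1) - 1) * 2 ^ a ≤ d)
    (μ : Fin m → Measure (EuclideanSpace ℝ (Fin d)))
    (hfin : ∀ i, IsFiniteMeasure (μ i))
    (hac : ∀ i, μ i ≪ volume) :
    ∃ (v : Fin k → EuclideanSpace ℝ (Fin d)) (α : Fin k → ℝ),
      (∀ j, v j ≠ 0) ∧
      ∀ (ε : Fin k → ℝ), (∀ j, ε j = 1 ∨ ε j = -1) →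
        ∀ i, μ i {x | ∀ j, 0 ≤ ε j * (⟪x, v j⟫ - α j)}
          = μ i Set.univ / 2 ^ k := by
  obtain ⟨x, hx, h⟩ := GHR.exists_zero d k m a hk hma hma' hdm μ hfin hac
  by_cases hv : ∀ j, GHR.vv (x j) ≠ 0
  · refine ⟨fun j => GHR.vv (x j), fun j => x j (Fin.last d), hv, fun ε hε i => ?_⟩
    exact GHR.region (μ i) (hac i) x hx (h i) ε hε
  · push Not at hv
    obtain ⟨j, hj⟩ := hv
    have hzero : ∀ i, μ i Set.univ = 0 := by
      intro i
      have hy : x j (Fin.last d) ≠ 0 := by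
        intro h0
        apply GHR.sph_ne hx j
        funext l
        refine Fin.lastCases h0 (fun l => ?_) l
        have := congrArg (fun w : EuclideanSpace ℝ (Fin d) => w l) hj
        simpa [GHR.vv] using this
      have h1 := h i {j} (Finset.singleton_ne_empty j)
      simp only [GHR.ff, Finset.prod_singleton, GHR.aff, hj, inner_zero_right, zero_sub,
        integral_const, smul_eq_mul, mul_eq_zero, Real.sign_eq_zero_iff, neg_eq_zero, hy,
        or_false] at h1
      exact (measureReal_eq_zero_iff (measure_ne_top _ _)).1 h1
    refine ⟨fun _ => EuclideanSpace.single ⟨0, hd⟩ 1, fun _ => 0, fun _ => by simp, fun ε _ i => ?_⟩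
    rw [hzero i, ENNReal.zero_div]
    exact measure_mono_null (Set.subset_univ _) (hzero i)
end

section
/- Let m and r be positive integers and let μ₁, …, μ_m be probability measures on ℝ, each absolutely continuous with respect to the Lebesgue measure. Then there exist real numbers t₁ ≤ t₂ ≤ … ≤ t_{(r−1)m} and an assignment c : {0, 1, …, (r−1)m} → {1, …, r} of the (r−1)m + 1 resulting intervals (with t₀ = −∞ and t_{(r−1)m+1} = +∞) to r parts A₁, …, A_r, where A_j is the union of the intervals [t_k, t_{k+1}] with c(k) = j, such that μ_i(A_j) = 1/r for every i = 1, …, m and every j = 1, …, r. -/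
set_option linter.unusedSectionVars false
namespace Neck
open Finsupp

abbrev Ch (X : Type*) := List X →₀ ℤ

section
variable {X Y : Type*}

noncomputable def cn (x : X) : Ch X →ₗ[ℤ] Ch X := Finsupp.lmapDomain ℤ ℤ (List.cons x)

lemma cn_single (x : X) (l : List X) (a : ℤ) : cn x (single l a) = single (x :: l) a := by
  simp [cn]

noncomputable def dl : List X → Ch X
  | [] => 0
  | x :: l => single l 1 - cn x (dl l)

noncomputable def d : Ch X →ₗ[ℤ] Ch X := Finsupp.linearCombination ℤ dl

lemma d_single (l : List X) : d (single l 1) = dl l := by simp [d]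

lemma d_cn (x : X) (c : Ch X) : d (cn x c) = c - cn x (d c) := by
  have : d ∘ₗ cn x = LinearMap.id - cn x ∘ₗ d := by
    apply Finsupp.lhom_ext'
    intro l
    apply LinearMap.ext_ring
    simp [cn_single, d_single, dl]
  exact LinearMap.congr_fun this c

lemma d_dl (l : List X) : d (dl l) = 0 := by
  induction l with
  | nil => simp [dl]
  | cons x l ih => simp [dl, d_single, d_cn, ih]

lemma d_d (c : Ch X) : d (d c) = 0 := by
  have : (d ∘ₗ d : Ch X →ₗ[ℤ] Ch X) = 0 := by
    apply Finsupp.lhom_ext'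
    intro l
    apply LinearMap.ext_ring
    simp [d_single, d_dl]
  exact LinearMap.congr_fun this c

noncomputable def sd (b : List X → Y) : ℕ → Ch X →ₗ[ℤ] Ch Y
  | 0 => (Finsupp.lapply ([] : List X)).smulRight (single [] 1)
  | n + 1 => Finsupp.linearCombination ℤ (fun σ => cn (b σ) (sd b n (dl σ)))

lemma sd_succ_single (b : List X → Y) (n : ℕ) (σ : List X) :
    sd b (n+1) (single σ 1) = cn (b σ) (sd b n (dl σ)) := by simp [sd]

lemma d_sd (b : List X → Y) (n : ℕ) (c : Ch X) : d (sd b (n+1) c) = sd b n (d c) := by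
  induction n generalizing c with
  | zero =>
    have : d ∘ₗ sd b 1 = sd b 0 ∘ₗ d := by
      apply Finsupp.lhom_ext'
      intro l
      apply LinearMap.ext_ring
      have h0 : ∀ c : Ch X, d (sd b 0 c) = 0 := by
        intro c; simp [sd, d, dl]
      simp [sd_succ_single, d_single, d_cn, h0]
    exact LinearMap.congr_fun this c
  | succ n ih =>
    have : d ∘ₗ sd b (n+2) = sd b (n+1) ∘ₗ d := by
      apply Finsupp.lhom_ext'
      intro l
      apply LinearMap.ext_ring
      simp [sd_succ_single, d_single, d_cn, ih, d_dl]
    exact LinearMap.congr_fun this c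

noncomputable def mp (g : X → Y) : Ch X →ₗ[ℤ] Ch Y := Finsupp.lmapDomain ℤ ℤ (List.map g)

lemma mp_single (g : X → Y) (l : List X) (a : ℤ) : mp g (single l a) = single (l.map g) a := by
  simp [mp]

lemma mp_cn (g : X → Y) (x : X) (c : Ch X) : mp g (cn x c) = cn (g x) (mp g c) := by
  have : mp g ∘ₗ cn x = cn (g x) ∘ₗ mp g := by
    apply Finsupp.lhom_ext'
    intro l
    apply LinearMap.ext_ring
    simp [cn_single, mp_single]
  exact LinearMap.congr_fun this c

lemma mp_dl (g : X → Y) (l : List X) : mp g (dl l) = dl (l.map g) := by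
  induction l with
  | nil => simp [dl]
  | cons x l ih => simp [dl, mp_single, mp_cn, ih]

lemma mp_d (g : X → Y) (c : Ch X) : mp g (d c) = d (mp g c) := by
  have : mp g ∘ₗ d = d ∘ₗ mp g := by
    apply Finsupp.lhom_ext'
    intro l
    apply LinearMap.ext_ring
    simp [d_single, mp_single, mp_dl]
  exact LinearMap.congr_fun this c

/-! supports -/
abbrev Sp (S : Set (List X)) : Submodule ℤ (Ch X) := Finsupp.supported ℤ ℤ S

lemma Sp_ind {M : Type*} [AddCommGroup M] {S : Set (List X)} {L : Ch X →ₗ[ℤ] M}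
    {T : Submodule ℤ M} (h : ∀ σ ∈ S, L (single σ 1) ∈ T) {c : Ch X} (hc : c ∈ Sp S) :
    L c ∈ T := by
  have : Sp S ≤ T.comap L := by
    rw [Sp, Finsupp.supported_eq_span_single, Submodule.span_le]
    rintro _ ⟨σ, hσ, rfl⟩
    exact h σ hσ
  exact this hc

lemma single_mem {S : Set (List X)} {σ : List X} (h : σ ∈ S) (a : ℤ) : single σ a ∈ Sp S :=
  Finsupp.single_mem_supported _ _ h

lemma cn_mem {S T : Set (List X)} {x : X} (h : ∀ σ ∈ S, x :: σ ∈ T) {c : Ch X} (hc : c ∈ Sp S) :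
    cn x c ∈ Sp T :=
  Sp_ind (fun σ hσ => by rw [cn_single]; exact single_mem (h σ hσ) 1) hc

lemma mp_mem {S : Set (List X)} {T : Set (List Y)} {g : X → Y} (h : ∀ σ ∈ S, σ.map g ∈ T)
    {c : Ch X} (hc : c ∈ Sp S) : mp g c ∈ Sp T :=
  Sp_ind (fun σ hσ => by rw [mp_single]; exact single_mem (h σ hσ) 1) hc

lemma dl_mem (σ : List X) : dl σ ∈ Sp {τ | τ.Sublist σ ∧ τ.length + 1 = σ.length} := by
  induction σ with
  | nil => simp [dl]
  | cons x l ih =>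
    rw [dl]
    refine Submodule.sub_mem _ (single_mem ?_ 1) (cn_mem ?_ ih)
    · simp
    · rintro τ ⟨h1, h2⟩
      simp [h1, h2]

lemma mp_sd {S : Set (List X)} (hS : ∀ σ ∈ S, ∀ τ : List X, τ.Sublist σ → τ ∈ S)
    (b : List X → Y) (g : X → X) (g' : Y → Y) (hb : ∀ σ ∈ S, σ ≠ [] → b (σ.map g) = g' (b σ))
    (n : ℕ) (c : Ch X) (hc : c ∈ Sp S) : mp g' (sd b n c) = sd b n (mp g c) := by
  induction n generalizing c with
  | zero =>
    have : mp g' ∘ₗ sd b 0 = sd b 0 ∘ₗ mp g := by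
      apply Finsupp.lhom_ext'
      intro l
      apply LinearMap.ext_ring
      cases l <;> simp [sd, mp_single]
    exact LinearMap.congr_fun this c
  | succ n ih =>
    have : (mp g' ∘ₗ sd b (n+1) - sd b (n+1) ∘ₗ mp g) c ∈ (⊥ : Submodule ℤ (Ch Y)) := by
      refine Sp_ind ?_ hc
      intro σ hσ
      simp only [LinearMap.sub_apply, LinearMap.comp_apply, sd_succ_single, mp_single, mp_cn,
        Submodule.mem_bot]
      by_cases h : σ = []
      · subst h; simp [dl]
      · rw [hb σ hσ h, ih (dl σ), mp_dl, sub_self]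
        exact Finsupp.supported_mono (fun τ hτ => hS σ hσ τ hτ.1) (dl_mem σ)
    simpa [sub_eq_zero] using this

/-- generic support lemma for `sd`: `P n σ τ` closed under cone. -/
lemma sd_mem (b : List X → Y) (P : ℕ → List X → List Y → Prop)
    (h0 : P 0 [] [])
    (hs : ∀ n σ σ' τ, σ.length = n + 1 → σ'.Sublist σ → σ'.length = n → P n σ' τ →
      P (n+1) σ (b σ :: τ)) (n : ℕ) (σ : List X) (hσ : σ.length = n) :
    sd b n (single σ 1) ∈ Sp {τ | P n σ τ} := by
  induction n generalizing σ with
  | zero =>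
    rw [List.length_eq_zero_iff] at hσ
    subst hσ
    simp only [sd, LinearMap.smulRight_apply, Finsupp.lapply_apply, Finsupp.single_eq_same, one_smul]
    exact single_mem h0 1
  | succ n ih =>
    rw [sd_succ_single]
    have : sd b n (dl σ) ∈ Sp {τ | P (n+1) σ (b σ :: τ)} := by
      refine Sp_ind ?_ (dl_mem σ)
      rintro σ' ⟨h1, h2⟩
      have h3 : σ'.length = n := by omega
      have := ih σ' h3
      refine Finsupp.supported_mono ?_ this
      intro τ hτ
      exact hs n σ σ' τ hσ h1 h3 hτ
    exact cn_mem (fun τ hτ => hτ) this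

end

/-! cocycles -/
section
variable {p : ℕ} [NeZero p]

def al (a b : ZMod p) : ℤ := (b - a).val
def be (a b c : ZMod p) : ℤ := if p ≤ (b - a).val + (c - b).val then 1 else 0

lemma be_eq (a b c : ZMod p) : (p : ℤ) * be a b c = al a b + al b c - al a c := by
  have h : c - a = (b - a) + (c - b) := by ring
  unfold be al
  rw [h]
  split_ifs with h1
  · rw [ZMod.val_add_of_le h1]; push_cast [Nat.cast_sub h1]; ring
  · rw [ZMod.val_add_of_lt (not_le.1 h1)]; push_cast; ring

lemma be_cocycle (a b c e : ZMod p) : be b c e - be a c e + be a b e - be a b c = 0 := by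
  have hp : (p : ℤ) ≠ 0 := by exact_mod_cast NeZero.ne p
  apply mul_left_cancel₀ hp
  have h1 := be_eq b c e
  have h2 := be_eq a c e
  have h3 := be_eq a b e
  have h4 := be_eq a b c
  linear_combination h1 - h2 + h3 - h4

def El : List (ZMod p) → ℤ
  | [] => 0
  | [_] => 1
  | [_, _] => 0
  | a :: b :: c :: l => be a b c * El (c :: l)

def Ol : List (ZMod p) → ℤ
  | [] => 0
  | [_] => 0
  | a :: b :: l => al a b * El (b :: l)

noncomputable def E : Ch (ZMod p) →ₗ[ℤ] ℤ := Finsupp.linearCombination ℤ El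
noncomputable def O : Ch (ZMod p) →ₗ[ℤ] ℤ := Finsupp.linearCombination ℤ Ol

lemma E_single (l : List (ZMod p)) : E (single l 1) = El l := by simp [E]
lemma O_single (l : List (ZMod p)) : O (single l 1) = Ol l := by simp [O]

lemma E_cn3 (a b c : ZMod p) (x : Ch (ZMod p)) :
    E (cn a (cn b (cn c x))) = be a b c * E (cn c x) := by
  have : E ∘ₗ cn a ∘ₗ cn b ∘ₗ cn c = be a b c • (E ∘ₗ cn c) := by
    apply Finsupp.lhom_ext'
    intro l
    apply LinearMap.ext_ring
    simp [cn_single, E_single, El]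
  simpa using LinearMap.congr_fun this x

lemma O_cn2 (a b : ZMod p) (x : Ch (ZMod p)) :
    O (cn a (cn b x)) = al a b * E (cn b x) := by
  have : O ∘ₗ cn a ∘ₗ cn b = al a b • (E ∘ₗ cn b) := by
    apply Finsupp.lhom_ext'
    intro l
    apply LinearMap.ext_ring
    simp [cn_single, E_single, O_single, Ol]
  simpa using LinearMap.congr_fun this x

lemma E_dl (l : List (ZMod p)) : E (dl l) = 0 := by
  match l with
  | [] => simp [dl]
  | [a] => simp [dl, E_single, El]
  | [a, b] => simp [dl, E_single, El, cn_single]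
  | [a, b, c] => simp [dl, E_single, El, cn_single]
  | a :: b :: c :: e :: l =>
    have ih := E_dl (c :: e :: l)
    have h1 : dl (c :: e :: l) = single (e :: l) 1 - cn c (dl (e :: l)) := rfl
    have h2 : dl (a :: b :: c :: e :: l) = single (b :: c :: e :: l) 1 -
      cn a (single (c :: e :: l) 1 - cn b (single (e :: l) 1 - cn c (dl (e :: l)))) := rfl
    rw [h1, map_sub, E_single] at ih
    rw [h2]
    simp only [map_sub, E_cn3, cn_single, E_single, El]
    linear_combination (El (e :: l)) * be_cocycle a b c e + be a b c * ih

lemma O_dl (a b : ZMod p) (l : List (ZMod p)) : O (dl (a :: b :: l)) = p * El (a :: b :: l) := by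
  match l with
  | [] => simp [dl, O_single, Ol, El, cn_single]
  | c :: l =>
    have ih := E_dl (b :: c :: l)
    have h1 : dl (b :: c :: l) = single (c :: l) 1 - cn b (dl (c :: l)) := rfl
    have h2 : dl (a :: b :: c :: l) = single (b :: c :: l) 1 -
      cn a (single (c :: l) 1 - cn b (dl (c :: l))) := rfl
    rw [h1, map_sub, E_single] at ih
    rw [h2]
    simp only [map_sub, O_cn2, cn_single, O_single, El, Ol]
    linear_combination (-El (c :: l)) * be_eq a b c - al a b * ih

def Kl : List (ZMod p) → ZMod p
  | [] => 0
  | a :: l => a * El (a :: l)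

noncomputable def K : Ch (ZMod p) →ₗ[ℤ] ZMod p := Finsupp.linearCombination ℤ Kl
lemma K_single (l : List (ZMod p)) : K (single l 1) = Kl l := by simp [K]

lemma K_cn (a : ZMod p) (x : Ch (ZMod p)) :
    K (cn a x) = a * (E (cn a x) : ℤ) := by
  have : K ∘ₗ cn a = (LinearMap.mulLeft ℤ a) ∘ₗ (Int.castAddHom (ZMod p)).toIntLinearMap ∘ₗ (E ∘ₗ cn a) := by
    apply Finsupp.lhom_ext'
    intro l
    apply LinearMap.ext_ring
    simp [cn_single, E_single, K_single, Kl]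
  simpa using LinearMap.congr_fun this x

lemma K_dl (l : List (ZMod p)) : K (dl l) = (Ol l : ℤ) := by
  match l with
  | [] => simp [dl, Ol]
  | [a] => simp [dl, Ol, K_single, Kl]
  | a :: b :: l =>
    have ih := E_dl (a :: b :: l)
    have h1 : dl (a :: b :: l) = single (b :: l) 1 - cn a (dl (b :: l)) := rfl
    rw [h1, map_sub, E_single] at ih
    have ih' : ((El (b :: l) : ℤ) : ZMod p) = ((E (cn a (dl (b::l))) : ℤ) : ZMod p) := by
      rw [sub_eq_zero.1 ih]
    rw [h1]
    simp only [map_sub, K_cn, K_single, Kl, Ol, al]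
    push_cast
    rw [← ih', ZMod.natCast_zmod_val]
    ring

lemma K_d (c : Ch (ZMod p)) : K (d c) = (O c : ℤ) := by
  have : K ∘ₗ d = (Int.castAddHom (ZMod p)).toIntLinearMap ∘ₗ O := by
    apply Finsupp.lhom_ext'
    intro l
    apply LinearMap.ext_ring
    simp [d_single, O_single, K_dl]
  simpa using LinearMap.congr_fun this c

lemma O_d (c : Ch (ZMod p)) (hc : c ∈ Sp {l : List (ZMod p) | 2 ≤ l.length}) : O (d c) = p * E c := by
  have : (O ∘ₗ d - (p : ℤ) • E : Ch (ZMod p) →ₗ[ℤ] ℤ) c ∈ (⊥ : Submodule ℤ ℤ) := by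
    refine Sp_ind ?_ hc
    intro σ hσ
    match σ, hσ with
    | a :: b :: l, _ => simp [d_single, O_dl, E_single]
    | [], h => simp at h
    | [a], h => simp at h
  simpa [sub_eq_zero] using this

abbrev g1 : ZMod p → ZMod p := fun a => a + 1

lemma El_map (l : List (ZMod p)) : El (l.map g1) = El l := by
  match l with
  | [] => simp
  | [a] => simp [El]
  | [a, b] => simp [El]
  | a :: b :: c :: l =>
    have ih := El_map (c :: l)
    simp only [List.map_cons, El] at ih ⊢
    rw [ih]; simp [be]

lemma Ol_map (l : List (ZMod p)) : Ol (l.map g1) = Ol l := by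
  match l with
  | [] => simp
  | [a] => simp [Ol]
  | a :: b :: l =>
    have ih := El_map (b :: l)
    simp only [List.map_cons, Ol] at ih ⊢
    rw [ih]; simp [al]

lemma O_mp (c : Ch (ZMod p)) : O (mp g1 c) = O c := by
  have : O ∘ₗ mp (g1 (p := p)) = O := by
    apply Finsupp.lhom_ext'
    intro l
    apply LinearMap.ext_ring
    simp only [LinearMap.comp_apply, Finsupp.lsingle_apply, mp_single, O_single, Ol_map]
  exact LinearMap.congr_fun this c

lemma K_mp (c : Ch (ZMod p)) : K (mp g1 c) = K c + (E c : ℤ) := by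
  have : K ∘ₗ mp (g1 (p := p)) = K + (Int.castAddHom (ZMod p)).toIntLinearMap ∘ₗ E := by
    apply Finsupp.lhom_ext'
    intro l
    apply LinearMap.ext_ring
    simp only [LinearMap.comp_apply, Finsupp.lsingle_apply, mp_single, K_single, LinearMap.add_apply, E_single]
    cases l with
    | nil => simp [Kl, El]
    | cons a l =>
      have := El_map (a :: l)
      simp only [List.map_cons] at this
      simp only [List.map_cons, Kl, this]
      simp; ring
  simpa using LinearMap.congr_fun this c

lemma El_degen (l : List (ZMod p)) (h : ¬ l.IsChain (· ≠ ·)) : El l = 0 := by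
  match l with
  | [] => simp at h
  | [a] => simp at h
  | [a, b] => simp [El]
  | a :: b :: c :: l =>
    simp only [El]
    by_cases h1 : (c :: l).IsChain (· ≠ ·)
    · simp only [List.isChain_cons_cons, h1, and_true] at h
      have : be a b c = 0 := by
        have h2 := fun x : ZMod p => ZMod.val_lt x
        rw [not_and_or, not_not, not_not] at h
        rcases h with h | h <;> subst h <;> simp [be, h2]
      simp [this]
    · simp [El_degen _ h1]

lemma Ol_degen (l : List (ZMod p)) (h : ¬ l.IsChain (· ≠ ·)) : Ol l = 0 := by
  match l with
  | [] => simp at h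
  | [a] => simp at h
  | a :: b :: l =>
    simp only [Ol]
    by_cases h1 : (b :: l).IsChain (· ≠ ·)
    · simp only [List.isChain_cons_cons, h1, and_true, not_not] at h
      simp [al, h]
    · simp [El_degen _ h1]

/-- The alternating operators. -/
noncomputable def DD {X : Type*} (p : ℕ) (g : X → X) (k : ℕ) : Ch X →ₗ[ℤ] Ch X :=
  if Even k then mp g - LinearMap.id else ∑ j ∈ Finset.range p, (mp g)^j

theorem key (hp : 1 < p) (f : ℕ → Ch (ZMod p)) (hlen : ∀ k, f k ∈ Sp {l : List (ZMod p) | l.length = k + 1})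
    (h0 : d (f 0) = single [] 1) (N : ℕ) (hd : ∀ k < N, d (f (k+1)) = DD p g1 k (f k)) :
    ¬ f N ∈ Sp {l : List (ZMod p) | ¬ l.IsChain (· ≠ ·)} := by
  have main : ∀ k ≤ N, (Even k → ((E (f k) : ℤ) : ZMod p) = 1) ∧
      (¬ Even k → ((O (f k) : ℤ) : ZMod p) = 1) := by
    intro k
    induction k with
    | zero =>
      intro _
      refine ⟨fun _ => ?_, fun h => by simp at h⟩
      have : (E - Finsupp.lapply [] ∘ₗ d : Ch (ZMod p) →ₗ[ℤ] ℤ) (f 0) ∈ (⊥ : Submodule ℤ ℤ) := by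
        refine Sp_ind ?_ (hlen 0)
        intro σ hσ
        match σ, hσ with
        | [a], _ => simp [d_single, E_single, El, dl]
        | [], h => simp at h
        | a :: b :: l, h => simp at h
      simp [h0, sub_eq_zero] at this
      simp [this]
    | succ k ih =>
      intro hk
      obtain ⟨i1, i2⟩ := ih (by omega)
      have hd' := hd k (by omega)
      constructor
      · intro he
        have hk' : ¬ Even k := by rwa [Nat.even_add_one] at he
        have hO := O_d (f (k+1)) (Finsupp.supported_mono (by intro l hl; simp at hl ⊢; omega) (hlen (k+1)))
        have hj : ∀ j : ℕ, ∀ c : Ch (ZMod p), O (((mp g1)^j) c) = O c := by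
          intro j
          induction j with
          | zero => simp
          | succ j ih => intro c; rw [pow_succ]; simp [ih, O_mp]
        rw [hd', DD, if_neg hk'] at hO
        simp [hj, NeZero.ne p] at hO
        rw [← hO]; exact i2 hk'
      · intro he
        have hk' : Even k := by rwa [Nat.even_add_one, not_not] at he
        rw [← K_d, hd', DD, if_pos hk']
        simp [K_mp, i1 hk']
  intro hN
  have hE : E (f N) ∈ (⊥ : Submodule ℤ ℤ) :=
    Sp_ind (fun σ hσ => by simp [E_single, El_degen σ hσ]) hN
  have hO : O (f N) ∈ (⊥ : Submodule ℤ ℤ) :=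
    Sp_ind (fun σ hσ => by simp [O_single, Ol_degen σ hσ]) hN
  simp at hE hO
  have : Fact (1 < p) := ⟨hp⟩
  have := main N le_rfl
  rw [hE, hO] at this
  simp only [Int.cast_zero, zero_ne_one, imp_false, not_not] at this
  exact this.1 this.2
end
end Neck

set_option linter.unusedSectionVars false
namespace Neck
open Finsupp

section bary
variable {W : Type*} [NormedAddCommGroup W] [NormedSpace ℝ W]

noncomputable def bar (σ : List W) : W := (σ.length : ℝ)⁻¹ • σ.sum

lemma list_sum_norm_le (σ : List W) (v : W) (D : ℝ) (h : ∀ w ∈ σ, ‖w - v‖ ≤ D) :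
    ‖σ.sum - (σ.length : ℝ) • v‖ ≤ σ.length * D := by
  induction σ with
  | nil => simp
  | cons a l ih =>
    have h1 := ih (fun w hw => h w (by simp [hw]))
    have h2 := h a (by simp)
    have : (a :: l).sum - ((a :: l).length : ℝ) • v = (a - v) + (l.sum - (l.length : ℝ) • v) := by
      simp [add_smul]; abel
    rw [this]
    refine (norm_add_le _ _).trans ?_
    simp; linarith

lemma bar_mem {C : Set W} (hC : Convex ℝ C) (σ : List W) (hσ : σ ≠ []) (h : ∀ w ∈ σ, w ∈ C) :
    bar σ ∈ C := by
  have : bar σ = ∑ i : Fin σ.length, (σ.length : ℝ)⁻¹ • σ.get i := by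
    rw [bar, ← Finset.smul_sum]
    congr 1
    simp [Fin.sum_univ_getElem]
  rw [this]
  have hl : (σ.length : ℝ) ≠ 0 := by simpa using hσ
  refine hC.sum_mem (fun i _ => by positivity) ?_ (fun i _ => h _ (List.get_mem _ _))
  simp [hl]

lemma bar_dist (N : ℕ) (σ : List W) (hl : σ.length ≤ N + 1) (D : ℝ) (hD : 0 ≤ D)
    (h : ∀ x ∈ σ, ∀ y ∈ σ, dist x y ≤ D) (v : W) (hv : v ∈ σ) :
    dist v (bar σ) ≤ (N / (N + 1) : ℝ) * D := by
  obtain ⟨s, t, rfl⟩ := List.append_of_mem hv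
  set σ := s ++ v :: t
  have hn : (σ.length : ℝ) = ((s ++ t).length : ℝ) + 1 := by simp [σ]; ring
  have h1 := list_sum_norm_le (s ++ t) v D (fun w hw => by
    rw [← dist_eq_norm]; apply h _ _ _ hv
    simp [σ] at hw ⊢; tauto)
  have h2 : σ.sum - (σ.length : ℝ) • v = (s ++ t).sum - ((s ++ t).length : ℝ) • v := by
    rw [hn, add_smul]; simp [σ]; abel
  rw [← h2] at h1
  have hpos : (0 : ℝ) < σ.length := by rw [hn]; positivity
  have h3 : bar σ - v = (σ.length : ℝ)⁻¹ • (σ.sum - (σ.length : ℝ) • v) := by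
    rw [bar, smul_sub, smul_smul, inv_mul_cancel₀ hpos.ne', one_smul]
  rw [dist_comm, dist_eq_norm, h3, norm_smul, norm_inv, Real.norm_natCast]
  have h4 : ((s++t).length : ℝ) ≤ N := by
    have : (σ.length : ℝ) ≤ N + 1 := by exact_mod_cast hl
    linarith
  calc (σ.length : ℝ)⁻¹ * ‖σ.sum - (σ.length : ℝ) • v‖
      ≤ (σ.length : ℝ)⁻¹ * ((s++t).length * D) := by gcongr
    _ = (((s++t).length : ℝ) / (((s++t).length : ℝ) + 1)) * D := by rw [hn]; field_simp
    _ ≤ (N / (N + 1) : ℝ) * D := by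
      gcongr ?_ * _
      rw [div_le_div_iff₀ (by positivity) (by positivity)]
      nlinarith

lemma sd_small (N : ℕ) (D : ℝ) (hD : 0 ≤ D) (n : ℕ) (σ : List W) (hσ : σ.length = n) (hn : n ≤ N + 1)
    (h : ∀ x ∈ σ, ∀ y ∈ σ, dist x y ≤ D) :
    sd bar n (single σ 1) ∈ Sp {τ : List W | τ.length = n ∧
      (∀ x ∈ τ, x ∈ convexHull ℝ {v | v ∈ σ}) ∧
      ∀ x ∈ τ, ∀ y ∈ τ, dist x y ≤ (N / (N + 1) : ℝ) * D} := by
  have := sd_mem (X := W) bar (fun n σ τ => n ≤ N + 1 → (∀ x ∈ σ, ∀ y ∈ σ, dist x y ≤ D) →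
    (τ.length = n ∧
      (∀ x ∈ τ, x ∈ convexHull ℝ {v | v ∈ σ}) ∧
      ∀ x ∈ τ, ∀ y ∈ τ, dist x y ≤ (N / (N + 1) : ℝ) * D)) (by simp) ?_ n σ hσ
  · refine Finsupp.supported_mono ?_ this
    intro τ hτ
    exact hτ hn h
  · intro n σ σ' τ hl hs hl' hP hn hdist
    obtain ⟨h1, h2, h3⟩ := hP (by omega) (fun x hx y hy => hdist x (hs.subset hx) y (hs.subset hy))
    have hsub : ∀ x ∈ τ, x ∈ convexHull ℝ {v | v ∈ σ} := fun x hx =>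
      convexHull_mono (fun v hv => hs.subset hv) (h2 x hx)
    have hb : bar σ ∈ convexHull ℝ {v | v ∈ σ} :=
      bar_mem (convex_convexHull _ _) σ (by intro h; simp [h] at hl)
        (fun w hw => subset_convexHull _ _ hw)
    have hball : ∀ x ∈ τ, dist x (bar σ) ≤ (N / (N + 1) : ℝ) * D := by
      intro x hx
      have : convexHull ℝ {v | v ∈ σ} ⊆ Metric.closedBall (bar σ) ((N / (N + 1) : ℝ) * D) :=
        convexHull_min (fun v hv => bar_dist N σ (by omega) D hD hdist v hv) (convex_closedBall _ _)
      exact this (hsub x hx)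
    refine ⟨by simp [h1], ?_, ?_⟩
    · intro x hx
      rcases List.mem_cons.1 hx with rfl | hx
      · exact hb
      · exact hsub x hx
    · intro x hx y hy
      rcases List.mem_cons.1 hx with rfl | hx <;> rcases List.mem_cons.1 hy with rfl | hy
      · simp; positivity
      · rw [dist_comm]; exact hball y hy
      · exact hball x hx
      · exact h3 x hx y hy

end bary

section bss
variable (p N : ℕ) 

abbrev V := ZMod p × Fin (N+1) → ℝ

noncomputable def rot : V p N →ₗ[ℝ] V p N := LinearMap.funLeft ℝ ℝ (fun x => (x.1 - 1, x.2))

variable {p N}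
lemma rot_apply (v : V p N) (j : ZMod p) (l : Fin (N+1)) : rot p N v (j, l) = v (j - 1, l) := rfl

variable [NeZero p]

def Face (c : Fin (N+1) → ZMod p) : Set (V p N) :=
  {v | (∀ x, 0 ≤ v x) ∧ ∑ x, v x = 1 ∧ ∀ j l, j ≠ c l → v (j, l) = 0}

lemma Face_convex (c : Fin (N+1) → ZMod p) : Convex ℝ (Face c) := by
  intro v hv w hw a b ha hb hab
  refine ⟨fun x => ?_, ?_, fun j l h => ?_⟩
  · have := hv.1 x; have := hw.1 x
    simp only [Pi.add_apply, Pi.smul_apply, smul_eq_mul]; positivity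
  · simp only [Pi.add_apply, Pi.smul_apply, smul_eq_mul, Finset.sum_add_distrib, ← Finset.mul_sum,
      hv.2.1, hw.2.1, mul_one, hab]
  · simp [hv.2.2 j l h, hw.2.2 j l h]

lemma Face_compact (c : Fin (N+1) → ZMod p) : IsCompact (Face c) := by
  refine IsCompact.of_isClosed_subset (isCompact_Icc (a := (0 : V p N)) (b := 1)) ?_ ?_
  · have : Face c = (⋂ x, {v : V p N | 0 ≤ v x}) ∩ {v | ∑ x, v x = 1} ∩
      ⋂ j, ⋂ l, ⋂ (_ : j ≠ c l), {v | v (j, l) = 0} := by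
      ext v; simp [Face, and_assoc]
    rw [this]
    refine ((isClosed_iInter fun x => isClosed_le continuous_const (continuous_apply x)).inter
      (isClosed_eq (by fun_prop) continuous_const)).inter ?_
    exact isClosed_iInter fun j => isClosed_iInter fun l => isClosed_iInter fun _ =>
      isClosed_eq (continuous_apply _) continuous_const
  · intro v hv
    refine ⟨fun x => hv.1 x, fun x => ?_⟩
    rw [Pi.one_apply, ← hv.2.1]
    exact Finset.single_le_sum (fun y _ => hv.1 y) (Finset.mem_univ x)

lemma rot_Face {c : Fin (N+1) → ZMod p} {v : V p N} (hv : v ∈ Face c) :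
    rot p N v ∈ Face (fun l => c l + 1) := by
  refine ⟨fun x => hv.1 _, ?_, fun j l h => ?_⟩
  · rw [← hv.2.1]
    exact Fintype.sum_equiv ((Equiv.subRight (1 : ZMod p)).prodCongr (Equiv.refl _)) _ _ (fun x => rfl)
  · rw [rot_apply]
    exact hv.2.2 _ _ (fun h' => h (by simp only [← h']; ring))

variable (p N) in
noncomputable def ee (k : ℕ) : V p N := Pi.single (0, Fin.ofNat (N+1) k) 1

variable (p N) in
noncomputable def hh : ℕ → Ch (V p N)
  | 0 => single [ee p N 0] 1
  | k + 1 => cn (ee p N (k+1)) (DD p (rot p N) k (hh k))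

lemma rot_iter (j : ℕ) (v : V p N) : (rot p N)^[j] v = fun x => v (x.1 - j, x.2) := by
  induction j with
  | zero => simp
  | succ j ih =>
    rw [Function.iterate_succ_apply', ih]
    funext ⟨a, l⟩
    rw [rot_apply]; push_cast; congr 2; ring

lemma mp_pow {X : Type*} (g : X → X) (j : ℕ) : (mp g)^j = mp (g^[j]) := by
  induction j with
  | zero => 
    apply Finsupp.lhom_ext'
    intro l
    apply LinearMap.ext_ring
    simp [mp_single]
  | succ j ih =>
    rw [pow_succ, ih]
    apply Finsupp.lhom_ext'
    intro l
    apply LinearMap.ext_ring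
    simp [mp_single]

lemma mp_rot_pow : (mp (rot p N))^p = 1 := by
  rw [mp_pow]
  have : (rot p N)^[p] = id := by
    funext v; rw [rot_iter]; simp
  rw [this]
  apply Finsupp.lhom_ext'
  intro l
  apply LinearMap.ext_ring
  simp [mp_single]

lemma DD_DD (k : ℕ) (c : Ch (V p N)) : DD p (rot p N) (k+1) (DD p (rot p N) k c) = 0 := by
  have h1 := geom_sum_mul (mp (rot p N)) p
  have h2 := mul_geom_sum (mp (rot p N)) p
  rw [mp_rot_pow, sub_self] at h1 h2
  by_cases h : Even k
  · rw [DD, DD, if_pos h, if_neg (by rw [Nat.even_add_one, not_not]; exact h)]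
    exact LinearMap.congr_fun h1 c
  · rw [DD, DD, if_neg h, if_pos (by rw [Nat.even_add_one]; exact h)]
    exact LinearMap.congr_fun h2 c

lemma mp_pow_comm {X Y : Type*} (L : Ch X →ₗ[ℤ] Ch Y) (g : X → X) (g' : Y → Y) (M : Submodule ℤ (Ch X))
    (hM : ∀ c ∈ M, mp g c ∈ M)
    (h : ∀ c ∈ M, mp g' (L c) = L (mp g c)) (k : ℕ) (c : Ch X) (hc : c ∈ M) :
    L (DD p g k c) = DD p g' k (L c) := by
  have hj : ∀ j : ℕ, ∀ c ∈ M, ((mp g')^j) (L c) = L ((mp g ^ j) c) := by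
    intro j
    induction j with
    | zero => simp
    | succ j ih => intro c hc; simp [pow_succ, h c hc, ih _ (hM c hc)]
  unfold DD
  split_ifs
  · simp [h c hc]
  · simp [hj _ c hc]

lemma DD_mem {X : Type*} (g : X → X) (M : Submodule ℤ (Ch X))
    (hM : ∀ c ∈ M, mp g c ∈ M) (k : ℕ) (c : Ch X) (hc : c ∈ M) : DD p g k c ∈ M := by
  have hj : ∀ j : ℕ, ((mp g)^j) c ∈ M := by
    intro j
    induction j with
    | zero => simpa
    | succ j ih => rw [pow_succ']; exact hM _ ih
  unfold DD
  split_ifs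
  · exact M.sub_mem (hM c hc) hc
  · rw [LinearMap.sum_apply]
    exact M.sum_mem (fun j _ => hj j)

lemma d_DD {X : Type*} (g : X → X) (k : ℕ) (c : Ch X) : d (DD p g k c) = DD p g k (d c) :=
  mp_pow_comm d g g ⊤ (by simp) (fun c _ => mp_d g c) k c trivial

lemma d_hh (k : ℕ) : d (hh p N (k+1)) = DD p (rot p N) k (hh p N k) := by
  induction k with
  | zero =>
    have h : d (hh p N 0) = single [] 1 := by simp [hh, d_single, dl]
    change d (cn (ee p N 1) (DD p (rot p N) 0 (hh p N 0))) = _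
    rw [d_cn, d_DD, h]
    simp [DD, mp_single]
  | succ k ih =>
    rw [hh, d_cn, d_DD, ih, DD_DD]
    simp

lemma d_hh0 : d (hh p N 0) = single [] 1 := by
  simp [hh, d_single, dl]

lemma hh_len (k : ℕ) : hh p N k ∈ Sp {σ : List (V p N) | σ.length = k + 1} := by
  induction k with
  | zero => exact single_mem (by simp) 1
  | succ k ih =>
    rw [hh]
    refine cn_mem (S := {σ : List (V p N) | σ.length = k + 1}) (by simp) (DD_mem _ _ ?_ _ _ ih)
    intro c hc
    exact mp_mem (by simp) hc

lemma ee_mem (c : Fin (N+1) → ZMod p) (k : ℕ) (h : c (Fin.ofNat (N+1) k) = 0) : ee p N k ∈ Face c := by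
  refine ⟨fun x => ?_, by simp [ee], fun j l hj => ?_⟩
  · by_cases hx : x = (0, Fin.ofNat (N+1) k)
    · simp [ee, hx]
    · rw [ee, Pi.single_eq_of_ne hx]
  · rw [ee, Pi.single_eq_of_ne]
    rintro ⟨⟩
    exact hj h.symm

lemma hh_face (k : ℕ) (hk : k ≤ N) : hh p N k ∈ Sp {σ : List (V p N) | 
    ∃ c, ∀ v ∈ σ, v ∈ Face c ∧ ∀ j l, k < l.val → v (j, l) = 0} := by
  induction k with
  | zero =>
    refine single_mem (S := {σ : List (V p N) | ∃ c, ∀ v ∈ σ, v ∈ Face c ∧ ∀ j l, 0 < l.val → v (j, l) = 0})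
      ⟨fun _ => 0, ?_⟩ 1
    simp only [List.mem_singleton]
    rintro v rfl
    refine ⟨ee_mem _ _ rfl, fun j l hl => ?_⟩
    rw [ee, Pi.single_eq_of_ne]
    rintro ⟨⟩
    simp at hl
  | succ k ih =>
    rw [hh]
    refine cn_mem ?_ (DD_mem _ _ ?_ _ _ (ih (by omega)))
    · rintro σ ⟨c, hc⟩
      refine ⟨Function.update c (Fin.ofNat (N+1) (k+1)) 0, ?_⟩
      have hv : (Fin.ofNat (N+1) (k+1)).val = k + 1 := by
        simp [Fin.ofNat, Nat.mod_eq_of_lt (show k + 1 < N + 1 by omega)]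
      intro v hvm
      rcases List.mem_cons.1 hvm with rfl | hvm
      · refine ⟨ee_mem _ _ (by simp), fun j l hl => ?_⟩
        rw [ee, Pi.single_eq_of_ne]
        rintro ⟨⟩
        omega
      · obtain ⟨h1, h2⟩ := hc v hvm
        refine ⟨⟨h1.1, h1.2.1, fun j l hj => ?_⟩, fun j l hl => h2 j l (by omega)⟩
        by_cases hl : l = Fin.ofNat (N+1) (k+1)
        · apply h2; rw [hl, hv]; omega
        · rw [Function.update_of_ne hl] at hj
          exact h1.2.2 j l hj
    · intro x hx
      refine mp_mem ?_ hx
      rintro σ ⟨c, hc⟩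
      refine ⟨fun l => c l + 1, ?_⟩
      intro v hv
      obtain ⟨w, hw, rfl⟩ := List.mem_map.1 hv
      exact ⟨rot_Face (hc w hw).1, fun j l hl => (hc w hw).2 _ _ hl⟩

end bss
end Neck

set_option linter.unusedSectionVars false
namespace Neck
open Finsupp

section lab
variable {p m : ℕ} [Fact p.Prime]

noncomputable def mean (A : Finset (ZMod p)) : ZMod p := (∑ a ∈ A, a) / (A.card : ZMod p)

lemma mean_shift (A : Finset (ZMod p)) (h : A.Nonempty) (h' : A ≠ Finset.univ) :
    mean (A.image (· + 1)) = mean A + 1 := by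
  have hinj : Function.Injective (fun a : ZMod p => a + 1) := add_left_injective 1
  have hc : (A.card : ZMod p) ≠ 0 := by
    intro h0
    rw [ZMod.natCast_eq_zero_iff] at h0
    have h1 : A.card < p := by
      have := Finset.card_lt_card (Finset.ssubset_univ_iff.2 h')
      rw [Finset.card_univ] at this
      rwa [ZMod.card] at this
    exact absurd (Nat.le_of_dvd h.card_pos h0) (by omega)
  rw [mean, mean, Finset.card_image_of_injective _ hinj, Finset.sum_image (fun a _ b _ h => hinj h),
    Finset.sum_add_distrib]
  field_simp
  simp

open Classical in
noncomputable def pick (i0 : Fin m) (S : Finset (Fin m)) : Fin m :=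
  if h : S.Nonempty then h.choose else i0

lemma pick_mem (i0 : Fin m) (S : Finset (Fin m)) (h : S.Nonempty) : pick i0 S ∈ S := by
  rw [pick, dif_pos h]; exact h.choose_spec

noncomputable def ss (i0 : Fin m) (A : Fin m → Finset (ZMod p)) : ZMod p :=
  mean (A (pick i0 (Finset.univ.filter fun i => (A i).Nonempty)))

lemma ss_shift (i0 : Fin m) (A : Fin m → Finset (ZMod p)) (h : ∃ i, (A i).Nonempty)
    (h' : ∀ i, A i ≠ Finset.univ) :
    ss i0 (fun i => (A i).image (· + 1)) = ss i0 A + 1 := by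
  unfold ss
  simp only [Finset.image_nonempty]
  apply mean_shift _ _ (h' _)
  have := pick_mem i0 (Finset.univ.filter fun i => (A i).Nonempty) (by
    obtain ⟨i, hi⟩ := h
    exact ⟨i, by simp [hi]⟩)
  simpa using this

variable {N : ℕ}

open Classical in
noncomputable def AA (G : V p N → ZMod p → Fin m → ℝ) (ε : ℝ) (σ : List (V p N)) (i : Fin m) :
    Finset (ZMod p) := Finset.univ.filter fun j => ∃ v ∈ σ, ε ≤ G v j i

lemma AA_mono (G : V p N → ZMod p → Fin m → ℝ) (ε : ℝ) {σ σ' : List (V p N)} (h : σ'.Sublist σ) (i : Fin m) :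
    AA G ε σ' i ⊆ AA G ε σ i := by
  intro j hj
  simp only [AA, Finset.mem_filter, Finset.mem_univ, true_and] at hj ⊢
  obtain ⟨v, hv, h1⟩ := hj
  exact ⟨v, h.subset hv, h1⟩

lemma AA_rot (G : V p N → ZMod p → Fin m → ℝ) (hrot : ∀ v j i, G (rot p N v) (j+1) i = G v j i)
    (ε : ℝ) (σ : List (V p N)) :
    AA G ε (σ.map (rot p N)) = fun i => (AA G ε σ i).image (· + 1) := by
  funext i
  ext j
  simp only [AA, Finset.mem_filter, Finset.mem_univ, true_and, Finset.mem_image, List.mem_map]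
  constructor
  · rintro ⟨_, ⟨v, hv, rfl⟩, h⟩
    refine ⟨j - 1, ⟨v, hv, ?_⟩, by ring⟩
    rw [← hrot]; simpa using h
  · rintro ⟨j, ⟨v, hv, h⟩, rfl⟩
    exact ⟨_, ⟨v, hv, rfl⟩, by rwa [hrot]⟩

/-- small lists in a face -/
def TT (p N : ℕ) [NeZero p] (D : ℝ) : Set (List (V p N)) :=
  {σ | (∃ c, ∀ v ∈ σ, v ∈ Face c) ∧ ∀ x ∈ σ, ∀ y ∈ σ, dist x y ≤ D}

lemma TT_sub (D : ℝ) : ∀ σ ∈ TT p N D, ∀ τ : List (V p N), τ.Sublist σ → τ ∈ TT p N D := by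
  rintro σ ⟨⟨c, hc⟩, h⟩ τ hτ
  exact ⟨⟨c, fun v hv => hc v (hτ.subset hv)⟩, fun x hx y hy => h x (hτ.subset hx) y (hτ.subset hy)⟩

lemma rot_dist (v w : V p N) : dist (rot p N v) (rot p N w) ≤ dist v w := by
  rw [dist_pi_le_iff dist_nonneg]
  intro x
  exact dist_le_pi_dist v w (x.1 - 1, x.2)

lemma TT_rot (D : ℝ) : ∀ σ ∈ TT p N D, σ.map (rot p N) ∈ TT p N D := by
  rintro σ ⟨⟨c, hc⟩, h⟩
  refine ⟨⟨fun l => c l + 1, ?_⟩, ?_⟩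
  · intro v hv
    obtain ⟨w, hw, rfl⟩ := List.mem_map.1 hv
    exact rot_Face (hc w hw)
  · intro x hx y hy
    obtain ⟨x', hx', rfl⟩ := List.mem_map.1 hx
    obtain ⟨y', hy', rfl⟩ := List.mem_map.1 hy
    exact (rot_dist x' y').trans (h x' hx' y' hy')

/-- iterated subdivision -/
noncomputable def SS (p N : ℕ) [NeZero p] (n M : ℕ) : Ch (V p N) →ₗ[ℤ] Ch (V p N) := (sd bar n)^M

lemma d_SS (n M : ℕ) (c : Ch (V p N)) : d (SS p N (n+1) M c) = SS p N n M (d c) := by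
  induction M generalizing c with
  | zero => simp [SS]
  | succ M ih =>
    simp only [SS, pow_succ, Module.End.mul_apply] at ih ⊢
    rw [ih, d_sd]

lemma bar_rot (σ : List (V p N)) : bar (σ.map (rot p N)) = rot p N (bar σ) := by
  simp [bar, map_list_sum]

lemma rot_SS (n M : ℕ) (c : Ch (V p N)) : mp (rot p N) (SS p N n M c) = SS p N n M (mp (rot p N) c) := by
  induction M generalizing c with
  | zero => simp [SS]
  | succ M ih =>
    simp only [SS, pow_succ, Module.End.mul_apply] at ih ⊢
    rw [ih, mp_sd (S := Set.univ) (by simp) bar (rot p N) (rot p N) (fun σ _ _ => bar_rot σ) n c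
      (by simp [Sp])]

lemma SS_mem (n M : ℕ) (hn : n ≤ N + 1) (D : ℝ) (hD : 0 ≤ D) (c : Ch (V p N))
    (hc : c ∈ Sp (TT p N D ∩ {σ | σ.length = n})) :
    SS p N n M c ∈ Sp (TT p N ((N / (N+1) : ℝ)^M * D) ∩ {σ | σ.length = n}) := by
  induction M with
  | zero => simpa [SS] using hc
  | succ M ih =>
    simp only [SS, pow_succ', Module.End.mul_apply] at ih ⊢
    refine Sp_ind ?_ ih
    rintro σ ⟨⟨⟨c, hc⟩, hd⟩, hl⟩
    have := sd_small N _ (by positivity) n σ hl hn hd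
    refine Finsupp.supported_mono ?_ this
    rintro τ ⟨h1, h2, h3⟩
    refine ⟨⟨⟨c, fun v hv => ?_⟩, ?_⟩, h1⟩
    · exact convexHull_min (fun v hv => hc v hv) (Face_convex c) (h2 v hv)
    · simpa [mul_assoc] using h3

lemma SS_len (n M : ℕ) (c : Ch (V p N)) (hc : c ∈ Sp {σ : List (V p N) | σ.length = n}) :
    SS p N n M c ∈ Sp {σ : List (V p N) | σ.length = n} := by
  induction M with
  | zero => simpa [SS] using hc
  | succ M ih =>
    simp only [SS, pow_succ', Module.End.mul_apply] at ih ⊢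
    refine Sp_ind ?_ ih
    intro σ hσ
    exact sd_mem bar (fun n σ τ => τ.length = n) rfl (by
      intro n σ σ' τ _ _ _ h; simp [h]) n σ hσ

lemma bss_aux (i0 : Fin m) (hN : N = (p - 1) * m) (G : V p N → ZMod p → Fin m → ℝ)
    (hrot : ∀ v j i, G (rot p N v) (j+1) i = G v j i) (ε δ : ℝ) (hδ : 0 < δ)
    (hne : ∀ σ ∈ TT p N δ, σ ≠ [] → ∃ i, (AA G ε σ i).Nonempty)
    (hpr : ∀ σ ∈ TT p N δ, σ ≠ [] → ∀ i, AA G ε σ i ≠ Finset.univ) : False := by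
  classical
  obtain ⟨M, hM⟩ : ∃ M : ℕ, (N / (N+1) : ℝ)^M * 1 ≤ δ := by
    obtain ⟨M, hM⟩ := exists_pow_lt_of_lt_one hδ (show (N / (N+1) : ℝ) < 1 by
      rw [div_lt_one (by positivity)]; linarith)
    exact ⟨M, by linarith⟩
  set lb : List (V p N) → ZMod p := fun σ => ss i0 (AA G ε σ) with hlb
  set f : ℕ → Ch (ZMod p) := fun k => sd lb (k+1) (SS p N (k+1) M (hh p N k)) with hf
  have hS : ∀ k ≤ N, SS p N (k+1) M (hh p N k) ∈ Sp (TT p N δ ∩ {σ | σ.length = k + 1}) := by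
    intro k hk
    have h1 := hh_face (p := p) k hk
    have h2 := hh_len (p := p) (N := N) k
    have h3 : hh p N k ∈ Sp (TT p N 1 ∩ {σ | σ.length = k + 1}) := by
      rw [Sp, Finsupp.supported_inter]
      refine ⟨?_, h2⟩
      refine Finsupp.supported_mono ?_ h1
      rintro σ ⟨c, hc⟩
      refine ⟨⟨c, fun v hv => (hc v hv).1⟩, ?_⟩
      intro x hx y hy
      have hI : ∀ v ∈ σ, ∀ z, v z ∈ Set.Icc (0:ℝ) 1 := by
        intro v hv z
        have := (hc v hv).1
        refine ⟨this.1 z, ?_⟩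
        rw [← this.2.1]
        exact Finset.single_le_sum (fun y _ => this.1 y) (Finset.mem_univ z)
      rw [dist_pi_le_iff zero_le_one]
      intro z
      have a := hI x hx z
      have b := hI y hy z
      rw [Real.dist_eq, abs_le]
      constructor <;> linarith [a.1, a.2, b.1, b.2]
    refine Finsupp.supported_mono ?_ (SS_mem (k+1) M (by omega) 1 zero_le_one _ h3)
    rintro σ ⟨⟨h1, h2⟩, h3⟩
    exact ⟨⟨h1, fun x hx y hy => (h2 x hx y hy).trans hM⟩, h3⟩
  have hp := (Fact.out : p.Prime).one_lt
  refine key hp f ?_ ?_ N ?_ ?_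
  · intro k
    refine Sp_ind ?_ (SS_len (k+1) M _ (hh_len k))
    intro σ hσ
    exact sd_mem lb (fun n σ τ => τ.length = n) rfl (by
      intro n σ σ' τ _ _ _ h; simp [h]) (k+1) σ hσ
  · simp only [hf]
    rw [d_sd, d_SS, d_hh0]
    have : ∀ M, SS p N 0 M (single [] 1) = single [] 1 := by
      intro M
      induction M with
      | zero => simp [SS]
      | succ M ih =>
        simp only [SS, pow_succ, Module.End.mul_apply] at ih ⊢
        have : sd bar 0 (single ([] : List (V p N)) 1) = single [] 1 := by simp [sd]
        rw [this, ih]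
    rw [this]
    simp [sd]
  · intro k hk
    simp only [hf]
    rw [d_sd, d_SS, d_hh]
    rw [mp_pow_comm (SS p N (k+1) M) (rot p N) (rot p N) ⊤ (by simp) (fun c _ => rot_SS _ _ _) k _ trivial]
    refine mp_pow_comm (sd lb (k+1)) (rot p N) g1 (Sp (TT p N δ)) ?_ ?_ k _
      (Finsupp.supported_mono Set.inter_subset_left (hS k hk.le))
    · intro c hc
      exact mp_mem (TT_rot δ) hc
    · intro c hc
      refine mp_sd (TT_sub δ) lb (rot p N) g1 ?_ _ c hc
      intro σ hσ hσ'
      simp only [hlb]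
      rw [AA_rot G hrot, ss_shift i0 _ (hne σ hσ hσ') (hpr σ hσ hσ')]
  · refine Sp_ind ?_ (hS N le_rfl)
    rintro σ ⟨hσ, hl⟩
    have := sd_mem lb (fun n σ τ => σ ∈ TT p N δ → (τ.length = n ∧ (τ.IsChain (· ≠ ·) →
      n ≤ ∑ i, (AA G ε σ i).card ∧ ∀ h ∈ τ.head?, h = lb σ))) (by simp) ?_ (N+1) σ hl
    · refine Finsupp.supported_mono ?_ this
      intro τ hτ hch
      have h1 := ((hτ hσ).2 hch).1
      have h2 : ∑ i, (AA G ε σ i).card ≤ ∑ i : Fin m, (p - 1) := by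
        apply Finset.sum_le_sum
        intro i _
        have := Finset.card_lt_card (Finset.ssubset_univ_iff.2
          (hpr σ hσ (by rintro rfl; simp at hl) i))
        rw [Finset.card_univ, ZMod.card] at this
        omega
      rw [Finset.sum_const, Finset.card_univ, Fintype.card_fin, smul_eq_mul, mul_comm, ← hN] at h2
      omega
    · intro n σ σ' τ hl hs hl' hP hσ
      obtain ⟨h1, h2⟩ := hP (TT_sub δ σ hσ σ' hs)
      refine ⟨by simp [h1], fun hch => ⟨?_, by simp⟩⟩
      match τ, h1, h2, hch with
      | [], h1, _, _ =>
        simp at h1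
        subst h1
        obtain ⟨i, hi⟩ := hne σ hσ (by rintro rfl; simp at hl)
        have := Finset.single_le_sum (f := fun i => (AA G ε σ i).card) (fun _ _ => Nat.zero_le _) (Finset.mem_univ i)
        have h5 := hi.card_pos
        omega
      | a :: τ, h1, h2, hch =>
        rw [List.isChain_cons_cons] at hch
        obtain ⟨h3, h4⟩ := h2 hch.2
        have h4 := h4 a (by simp)
        have hne' : AA G ε σ' ≠ AA G ε σ := by
          intro h; apply hch.1; rw [h4]; simp [hlb, h]
        obtain ⟨i, hi⟩ := Function.ne_iff.1 hne'
        have : ∑ i, (AA G ε σ' i).card < ∑ i, (AA G ε σ i).card := by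
          refine Finset.sum_lt_sum (fun i _ => Finset.card_le_card (AA_mono G ε hs i)) ⟨i, Finset.mem_univ _, ?_⟩
          exact Finset.card_lt_card ((AA_mono G ε hs i).ssubset_of_ne hi)
        omega

theorem bss (i0 : Fin m) (hN : N = (p - 1) * m) (G : V p N → ZMod p → Fin m → ℝ) (hG : Continuous G)
    (hrot : ∀ v j i, G (rot p N v) (j+1) i = G v j i)
    (hsum : ∀ c : Fin (N+1) → ZMod p, ∀ v ∈ Face c, ∀ i, ∑ j, G v j i = 0) :
    ∃ c : Fin (N+1) → ZMod p, ∃ v ∈ Face c, G v = 0 := by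
  by_contra hcon
  push Not at hcon
  have hG' : ∀ j i, Continuous fun v => G v j i := fun j i => by fun_prop
  set Q : Set (V p N) := ⋃ c, Face c with hQ
  have hQc : IsCompact Q := isCompact_iUnion Face_compact
  have hQn : Q.Nonempty := ⟨ee p N 0, Set.mem_iUnion.2 ⟨fun _ => 0, ee_mem _ _ rfl⟩⟩
  set φ : V p N → ℝ := fun v => ∑ j, ∑ i, max (G v j i) 0 with hφ
  have hφc : Continuous φ := by
    refine continuous_finsetSum _ fun j _ => continuous_finsetSum _ fun i _ => (hG' j i).max continuous_const
  obtain ⟨v0, hv0, hmin⟩ := hQc.exists_isMinOn hQn hφc.continuousOn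
  have hpos : ∀ v ∈ Q, 0 < φ v := by
    intro v hv
    obtain ⟨c, hc⟩ := Set.mem_iUnion.1 hv
    have hnz := hcon c v hc
    obtain ⟨j, i, hji⟩ : ∃ j i, 0 < G v j i := by
      by_contra hno
      push Not at hno
      apply hnz
      funext j i
      exact (Finset.sum_eq_zero_iff_of_nonpos (fun j _ => hno j i)).1 (hsum c v hc i) j (Finset.mem_univ j)
    refine Finset.sum_pos' (fun j _ => Finset.sum_nonneg fun i _ => le_max_right _ _) ⟨j, Finset.mem_univ _, ?_⟩
    exact Finset.sum_pos' (fun i _ => le_max_right _ _) ⟨i, Finset.mem_univ _, lt_max_of_lt_left hji⟩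
  have hp0 : (0 : ℝ) < p := by exact_mod_cast (Fact.out : p.Prime).pos
  have hm0 : (0 : ℝ) < m := by exact_mod_cast i0.pos
  set ε := φ v0 / (2 * p * m) with hε
  have hε0 : 0 < ε := div_pos (hpos v0 hv0) (by positivity)
  have hlarge : ∀ v ∈ Q, ∃ j i, ε ≤ G v j i := by
    intro v hv
    by_contra hno
    push Not at hno
    have h1 : φ v ≤ ∑ j : ZMod p, ∑ i : Fin m, ε :=
      Finset.sum_le_sum fun j _ => Finset.sum_le_sum fun i _ => max_le (hno j i).le hε0.le
    have h2 : φ v0 ≤ φ v := hmin hv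
    simp only [Finset.sum_const, Finset.card_univ, Fintype.card_fin, ZMod.card, nsmul_eq_mul] at h1
    have h3 : (p : ℝ) * (m * ε) = φ v0 / 2 := by rw [hε]; field_simp
    have := hpos v0 hv0
    linarith
  have huc := hQc.uniformContinuousOn_of_continuous hG.continuousOn
  rw [Metric.uniformContinuousOn_iff] at huc
  obtain ⟨δ, hδ, hδ'⟩ := huc ε hε0
  refine bss_aux i0 hN G hrot ε (δ/2) (by positivity) ?_ ?_
  · rintro σ ⟨⟨c, hc⟩, hd⟩ hσ
    obtain ⟨v, hv⟩ := List.exists_mem_of_ne_nil σ hσ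
    obtain ⟨j, i, h⟩ := hlarge v (Set.mem_iUnion.2 ⟨c, hc v hv⟩)
    exact ⟨i, j, by simp only [AA, Finset.mem_filter, Finset.mem_univ, true_and]; exact ⟨v, hv, h⟩⟩
  · rintro σ ⟨⟨c, hc⟩, hd⟩ hσ i huniv
    obtain ⟨v, hv⟩ := List.exists_mem_of_ne_nil σ hσ
    have hall : ∀ j, 0 < G v j i := by
      intro j
      have hj : j ∈ AA G ε σ i := by rw [huniv]; exact Finset.mem_univ j
      simp only [AA, Finset.mem_filter, Finset.mem_univ, true_and] at hj
      obtain ⟨w, hw, h⟩ := hj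
      have h1 := hδ' v (Set.mem_iUnion.2 ⟨c, hc v hv⟩) w (Set.mem_iUnion.2 ⟨c, hc w hw⟩)
        (by have := hd v hv w hw; linarith)
      have h2 := (dist_le_pi_dist (G v j) (G w j) i).trans ((dist_le_pi_dist (G v) (G w) j))
      rw [Real.dist_eq] at h2
      have := neg_abs_le (G v j i - G w j i)
      linarith
    have := hsum c v (hc v hv) i
    have h2 : 0 < ∑ j, G v j i := Finset.sum_pos (fun j _ => hall j) ⟨0, Finset.mem_univ _⟩
    linarith

end lab
end Neck

set_option linter.unusedSectionVars false
namespace Neck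
open MeasureTheory

lemma cdf_cont (ν : Measure ℝ) [IsProbabilityMeasure ν] [NullSingletonClass ν] :
    Continuous (ProbabilityTheory.cdf ν) := by
  rw [continuous_iff_continuousAt]
  intro a
  have hm := (ProbabilityTheory.cdf ν).mono
  rw [hm.continuousAt_iff_leftLim_eq_rightLim, StieltjesFunction.rightLim_eq]
  have h := (ProbabilityTheory.cdf ν).measure_singleton a
  rw [ProbabilityTheory.measure_cdf, measure_singleton, eq_comm, ENNReal.ofReal_eq_zero] at h
  exact le_antisymm (hm.leftLim_le le_rfl) (by linarith)

section prime
variable {p N m : ℕ} [NeZero p]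

def TS (v : V p N) (k : ℕ) : ℝ := ∑ l : Fin (N+1), if l.val < k then ∑ j, v (j, l) else 0

lemma TS_zero (v : V p N) : TS v 0 = 0 := by simp [TS]

lemma TS_last {c : Fin (N+1) → ZMod p} {v : V p N} (hv : v ∈ Face c) : TS v (N+1) = 1 := by
  rw [TS, ← hv.2.1, Fintype.sum_prod_type_right]
  apply Finset.sum_congr rfl
  intro l _
  rw [if_pos l.isLt]

lemma TS_succ (v : V p N) (l : Fin (N+1)) :
    TS v (l.val+1) = TS v l.val + ∑ j, v (j, l) := by
  have : ∑ j, v (j, l) = ∑ l' : Fin (N+1), if l' = l then ∑ j, v (j, l') else 0 := by simp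
  rw [this, TS, TS, ← Finset.sum_add_distrib]
  apply Finset.sum_congr rfl
  intro l' _
  rcases lt_trichotomy l'.val l.val with h | h | h
  · have h' : l' ≠ l := by rintro rfl; omega
    simp [h, h', Nat.lt_succ_of_lt h]
  · have h' : l' = l := Fin.ext h
    subst h'; simp
  · have h' : l' ≠ l := by rintro rfl; omega
    simp [h', show ¬ l'.val < l.val by omega, show ¬ l'.val < l.val + 1 by omega]

lemma Face_col {c : Fin (N+1) → ZMod p} {v : V p N} (hv : v ∈ Face c) (l : Fin (N+1)) :
    ∑ j, v (j, l) = v (c l, l) :=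
  Finset.sum_eq_single (c l) (fun j _ hj => hv.2.2 j l hj) (by simp)

lemma TS_mono {c : Fin (N+1) → ZMod p} {v : V p N} (hv : v ∈ Face c) : Monotone (TS v) := by
  intro a b hab
  apply Finset.sum_le_sum
  intro l _
  have : 0 ≤ ∑ j, v (j, l) := Finset.sum_nonneg fun j _ => hv.1 _
  split_ifs with h1 h2
  · exact le_rfl
  · omega
  · exact this
  · exact le_rfl

lemma TS_cont (k : ℕ) : Continuous fun v : V p N => TS v k := by
  unfold TS
  refine continuous_finsetSum _ fun l _ => ?_
  split_ifs <;> fun_prop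

lemma TS_rot (v : V p N) (k : ℕ) : TS (rot p N v) k = TS v k := by
  unfold TS
  apply Finset.sum_congr rfl
  intro l _
  have : ∑ j, rot p N v (j, l) = ∑ j, v (j, l) :=
    Fintype.sum_equiv (Equiv.subRight (1 : ZMod p)) _ _ (fun x => rfl)
  rw [this]

end prime

theorem prime_split (p m : ℕ) [Fact p.Prime] (i0 : Fin m) (F : Fin m → ℝ → ℝ) (hF : ∀ i, Continuous (F i))
    (h0 : ∀ i, F i 0 = 0) (h1 : ∀ i, F i 1 = 1) :
    ∃ (T : ℕ → ℝ) (c : Fin ((p-1)*m+1) → ZMod p), Monotone T ∧ T 0 = 0 ∧ T ((p-1)*m+1) = 1 ∧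
      ∀ i j, ∑ l : Fin ((p-1)*m+1), (if c l = j then F i (T (l.val+1)) - F i (T l.val) else 0) = 1 / p := by
  set N := (p-1)*m with hN
  set G : V p N → ZMod p → Fin m → ℝ := fun v j i =>
    ∑ l : Fin (N+1), (F i (TS v l.val + v (j, l)) - F i (TS v l.val)) - 1 / p with hGdef
  have hterm : ∀ c : Fin (N+1) → ZMod p, ∀ v ∈ Face c, ∀ i j l,
      F i (TS v l.val + v (j, l)) - F i (TS v l.val) =
      if c l = j then F i (TS v (l.val+1)) - F i (TS v l.val) else 0 := by
    intro c v hv i j l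
    split_ifs with h
    · rw [TS_succ, Face_col hv, h]
    · rw [hv.2.2 j l (fun h' => h h'.symm)]; simp
  have q1 : Continuous G := by
    refine continuous_pi fun j => continuous_pi fun i => ?_
    refine (continuous_finsetSum _ fun l _ => ?_).sub continuous_const
    exact ((hF i).comp ((TS_cont _).add (continuous_apply _))).sub ((hF i).comp (TS_cont _))
  have q2 : ∀ v j i, G (rot p N v) (j+1) i = G v j i := by
    intro v j i
    simp only [hGdef, TS_rot, rot_apply, add_sub_cancel_right]
  have q3 : ∀ c : Fin (N+1) → ZMod p, ∀ v ∈ Face c, ∀ i, ∑ j, G v j i = 0 := by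
    intro c v hv i
    have hp : (p : ℝ) ≠ 0 := by exact_mod_cast (Fact.out : p.Prime).ne_zero
    simp only [hGdef, Finset.sum_sub_distrib (f := fun j => ∑ l : Fin (N+1), (F i (TS v l.val + v (j, l)) - F i (TS v l.val)))]
    rw [Finset.sum_comm]
    simp only [hterm c v hv, Finset.sum_ite_eq, Finset.mem_univ, if_true]
    have := Fin.sum_univ_eq_sum_range (fun l => F i (TS v (l+1)) - F i (TS v l)) (N+1)
    rw [this, Finset.sum_range_sub (fun l => F i (TS v l)), TS_last hv, TS_zero, h0, h1]
    simp [hp, ZMod.card]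
  obtain ⟨c, v, hv, hz⟩ := bss i0 hN G q1 q2 q3
  · refine ⟨TS v, c, TS_mono hv, TS_zero v, TS_last hv, ?_⟩
    intro i j
    have := congrFun (congrFun hz j) i
    simp only [hGdef, Pi.zero_apply, sub_eq_zero] at this
    rw [← this]
    exact Finset.sum_congr rfl fun l _ => (hterm c v hv i j l).symm

/-- cut-set formulation -/
def Fair (m r : ℕ) : Prop := ∀ μ : Fin m → Measure ℝ, (∀ i, IsProbabilityMeasure (μ i)) →
  (∀ i, μ i ≪ volume) → ∃ (S : Finset ℝ) (χ : ℝ → Fin r), S.card ≤ (r-1)*m ∧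
    (∀ x y, x ≤ y → (∀ s ∈ S, s ∉ Set.Icc x y) → χ x = χ y) ∧
    ∀ i j, μ i (χ ⁻¹' {j}) = 1 / r

lemma fair_one (m : ℕ) : Fair m 1 := by
  intro μ hp _
  refine ⟨∅, fun _ => 0, by simp, by simp, ?_⟩
  intro i j
  have : (fun _ : ℝ => (0 : Fin 1)) ⁻¹' {j} = Set.univ := by
    ext x; simp [Subsingleton.elim j 0]
  rw [this]; simp

lemma meas_of_const {r : ℕ} (S : Finset ℝ) (χ : ℝ → Fin r)
    (h : ∀ x y, x ≤ y → (∀ s ∈ S, s ∉ Set.Icc x y) → χ x = χ y) (j : Fin r) :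
    MeasurableSet (χ ⁻¹' {j}) := by
  have hopen : IsOpen (χ ⁻¹' {j} \ (S : Set ℝ)) := by
    rw [Metric.isOpen_iff]
    rintro x ⟨hx, hxS⟩
    obtain ⟨ε, hε, hb⟩ := Metric.isOpen_iff.1 (S.finite_toSet.isClosed.isOpen_compl) x hxS
    refine ⟨ε, hε, fun y hy => ⟨?_, hb hy⟩⟩
    have hcv : ∀ s ∈ S, s ∉ Set.uIcc x y := by
      intro s hs hs'
      have hsub := (convex_ball x ε).ordConnected.uIcc_subset (Metric.mem_ball_self hε) hy
      exact hb (hsub hs') hs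
    rcases le_total x y with hxy | hxy
    · rw [Set.uIcc_of_le hxy] at hcv
      rw [Set.mem_preimage, ← h x y hxy hcv]; exact hx
    · rw [Set.uIcc_of_ge hxy] at hcv
      rw [Set.mem_preimage, h y x hxy hcv]; exact hx
  rw [← Set.sdiff_union_inter (χ ⁻¹' {j}) (S : Set ℝ)]
  exact hopen.measurableSet.union (S.finite_toSet.inter_of_right _).measurableSet

lemma fair_mul (m a b : ℕ) (ha : 0 < a) (hb : 0 < b) (hA : Fair m a) (hB : Fair m b) : Fair m (a*b) := by
  intro μ hp hac
  obtain ⟨S, χ, hS, hc, hμ⟩ := hA μ hp hac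
  have hmeas := meas_of_const S χ hc
  have ha0 : (a : ENNReal) ≠ 0 := by exact_mod_cast ha.ne'
  have haT : (a : ENNReal) ≠ ⊤ := ENNReal.natCast_ne_top a
  have hB' := fun j : Fin a => hB (fun i => (a : ENNReal) • (μ i).restrict (χ ⁻¹' {j})) (fun i => ⟨by
      simp [hμ, ENNReal.mul_inv_cancel ha0 haT]⟩) (fun i => by
      refine Measure.AbsolutelyContinuous.trans ?_ (hac i)
      exact (Measure.smul_absolutelyContinuous).trans Measure.absolutelyContinuous_restrict)
  choose S' χ' hS' hc' hμ' using hB'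
  refine ⟨S ∪ Finset.univ.biUnion S', fun x => finProdFinEquiv (χ x, χ' (χ x) x), ?_, ?_, ?_⟩
  · have h1 : (Finset.univ.biUnion S').card ≤ a * ((b-1)*m) := by
      refine (Finset.card_biUnion_le_card_mul _ _ _ (fun j _ => hS' j)).trans ?_
      simp
    refine (Finset.card_union_le _ _).trans ?_
    obtain ⟨a, rfl⟩ : ∃ a', a = a' + 1 := ⟨a - 1, by omega⟩
    obtain ⟨b, rfl⟩ : ∃ b', b = b' + 1 := ⟨b - 1, by omega⟩
    have : (a+1)*(b+1) - 1 = a + (a+1)*b := by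
      rw [show (a+1)*(b+1) = a + (a+1)*b + 1 by ring]; rfl
    rw [this]
    simp only [Nat.add_sub_cancel] at hS h1
    nlinarith
  · intro x y hxy hs
    have e1 : χ x = χ y := hc x y hxy fun s h => hs s (by simp [h])
    have e2 : χ' (χ x) x = χ' (χ x) y := hc' (χ x) x y hxy fun s h => hs s (by
      simp only [Finset.mem_union, Finset.mem_biUnion, Finset.mem_univ, true_and]; exact Or.inr ⟨_, h⟩)
    simp only [e2]; rw [e1]
  · intro i jk
    obtain ⟨⟨j, k⟩, rfl⟩ := finProdFinEquiv.surjective jk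
    have hset : (fun x => finProdFinEquiv (χ x, χ' (χ x) x)) ⁻¹' {finProdFinEquiv (j, k)} =
        (χ' j ⁻¹' {k}) ∩ (χ ⁻¹' {j}) := by
      ext x
      simp only [Set.mem_preimage, Set.mem_singleton_iff, EmbeddingLike.apply_eq_iff_eq, Prod.mk.injEq,
        Set.mem_inter_iff]
      constructor
      · rintro ⟨rfl, h⟩; exact ⟨h, rfl⟩
      · rintro ⟨h, rfl⟩; exact ⟨rfl, h⟩
    rw [hset]
    have := hμ' j i k
    rw [Measure.smul_apply, Measure.restrict_apply' (hmeas j), smul_eq_mul] at this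
    have h2 : μ i (χ' j ⁻¹' {k} ∩ χ ⁻¹' {j}) = (a : ENNReal)⁻¹ * (1 / b) := by
      rw [← this, ← mul_assoc, ENNReal.inv_mul_cancel ha0 haT, one_mul]
    rw [h2]
    push_cast
    rw [one_div, one_div, ENNReal.mul_inv (Or.inl ha0) (Or.inl haT)]

lemma fair_prime (m p : ℕ) (hm : 0 < m) (hp : p.Prime) : Fair m p := by
  classical
  have : Fact p.Prime := ⟨hp⟩
  intro μ hprob hac
  have hθm : Measurable Real.sigmoid := Real.sigmoid_monotone.measurable
  set ν : Fin m → Measure ℝ := fun i => (μ i).map Real.sigmoid with hν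
  have hνp : ∀ i, IsProbabilityMeasure (ν i) := fun i => Measure.isProbabilityMeasure_map hθm.aemeasurable
  have hνa : ∀ i, NullSingletonClass (ν i) := fun i => ⟨fun x => by
    rw [hν]
    simp only
    rw [Measure.map_apply hθm (measurableSet_singleton x)]
    apply hac i
    exact (Set.subsingleton_singleton.preimage Real.sigmoid_injective).measure_zero _⟩
  set F : Fin m → ℝ → ℝ := fun i => ProbabilityTheory.cdf (ν i) with hF
  have q1 : ∀ i, F i 0 = 0 := by
    intro i
    simp only [hF, ProbabilityTheory.cdf_eq_real, measureReal_def, hν]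
    rw [Measure.map_apply hθm measurableSet_Iic]
    have : Real.sigmoid ⁻¹' Set.Iic 0 = ∅ := by
      ext x; simpa using Real.sigmoid_pos x
    simp [this]
  have q2 : ∀ i, F i 1 = 1 := by
    intro i
    simp only [hF, ProbabilityTheory.cdf_eq_real, measureReal_def, hν]
    rw [Measure.map_apply hθm measurableSet_Iic]
    have : Real.sigmoid ⁻¹' Set.Iic 1 = Set.univ := by
      ext x; simpa using Real.sigmoid_le_one x
    simp [this]
  have key := prime_split p m ⟨0, hm⟩ F (fun i => cdf_cont (ν i)) q1 q2
  obtain ⟨N, hN⟩ : ∃ N, N = (p-1)*m := ⟨_, rfl⟩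
  rw [← hN] at key ⊢
  obtain ⟨T, c, hT, hT0, hT1, hsum⟩ := key
  have hex : ∀ x : ℝ, ∃ l : Fin (N+1), T l.val < Real.sigmoid x ∧ Real.sigmoid x ≤ T (l.val+1) := by
    intro x
    have hx : ∃ k, Real.sigmoid x ≤ T k := ⟨N+1, by rw [hT1]; exact Real.sigmoid_le_one x⟩
    have h1 := Nat.find_spec hx
    have h2 := fun k => Nat.find_min (H := hx) (m := k)
    have h3 : Nat.find hx ≤ N+1 := Nat.find_min' hx (by rw [hT1]; exact Real.sigmoid_le_one x)
    have h4 : Nat.find hx ≠ 0 := by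
      intro h; rw [h, hT0] at h1; exact absurd (Real.sigmoid_pos x) (not_lt.2 h1)
    refine ⟨⟨Nat.find hx - 1, by omega⟩, ?_, ?_⟩
    · exact not_le.1 (h2 _ (by simp only; omega))
    · simp only; rwa [Nat.sub_add_cancel (by omega)]
  choose L hL1 hL2 using hex
  have huniq : ∀ x (l : Fin (N+1)), T l.val < Real.sigmoid x → Real.sigmoid x ≤ T (l.val+1) → l = L x := by
    intro x l h1 h2
    apply Fin.ext
    rcases lt_trichotomy l.val (L x).val with h | h | h
    · have := hT (show l.val + 1 ≤ (L x).val by omega)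
      have := hL1 x; linarith
    · exact h
    · have := hT (show (L x).val + 1 ≤ l.val by omega)
      have := hL2 x; linarith
  let e : ZMod p ≃ Fin p := Fintype.equivFinOfCardEq (ZMod.card p)
  refine ⟨((Finset.Icc 1 N).image T).preimage Real.sigmoid (Real.sigmoid_injective.injOn),
    fun x => e (c (L x)), ?_, ?_, ?_⟩
  · calc _ ≤ ((Finset.Icc 1 N).image T).card :=
          Finset.card_le_card_of_injOn Real.sigmoid (fun x hx => by simpa using hx) Real.sigmoid_injective.injOn
      _ ≤ (Finset.Icc 1 N).card := Finset.card_image_le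
      _ = N := by simp
  · intro x y hxy hs
    by_cases hy : Real.sigmoid y ≤ T ((L x).val+1)
    · simp only []
      rw [← huniq y (L x) ((hL1 x).trans_le (Real.sigmoid_monotone hxy)) hy]
    · exfalso
      push Not at hy
      have hr : T ((L x).val+1) ∈ Set.range Real.sigmoid := by
        rw [Real.range_sigmoid]
        exact ⟨(Real.sigmoid_pos x).trans_le (hL2 x), hy.trans (Real.sigmoid_lt_one y)⟩
      obtain ⟨z, hz⟩ := hr
      refine hs z ?_ ⟨?_, ?_⟩
      · rw [Finset.mem_preimage, hz]
        refine Finset.mem_image_of_mem _ (Finset.mem_Icc.2 ⟨by omega, ?_⟩)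
        by_contra hlt
        have : (L x).val + 1 = N + 1 := by have := (L x).isLt; omega
        rw [this, hT1] at hy
        exact absurd (Real.sigmoid_lt_one y) (not_lt.2 hy.le)
      · rw [← Real.sigmoid_le_iff, hz]; exact hL2 x
      · rw [← Real.sigmoid_le_iff, hz]; exact hy.le
  · intro i j'
    obtain ⟨j, rfl⟩ := e.surjective j'
    have hset : (fun x => e (c (L x))) ⁻¹' {e j} =
        ⋃ l ∈ Finset.univ.filter (fun l => c l = j), Real.sigmoid ⁻¹' Set.Ioc (T l.val) (T (l.val+1)) := by
      ext x
      simp only [Set.mem_preimage, Set.mem_singleton_iff, EmbeddingLike.apply_eq_iff_eq, Finset.mem_filter,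
        Finset.mem_univ, true_and, Set.mem_iUnion, Set.mem_Ioc, exists_prop]
      constructor
      · intro h; exact ⟨L x, h, hL1 x, hL2 x⟩
      · rintro ⟨l, h, h1, h2⟩; rwa [← huniq x l h1 h2]
    have hreal : (μ i).real ((fun x => e (c (L x))) ⁻¹' {e j}) = 1 / p := by
      rw [hset, measureReal_biUnion_finset, ← hsum i j, ← Finset.sum_filter]
      · apply Finset.sum_congr rfl
        intro l _
        have h1 : (μ i).real (Real.sigmoid ⁻¹' Set.Ioc (T l.val) (T (l.val+1))) =
            (ν i).real (Set.Ioc (T l.val) (T (l.val+1))) := by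
          rw [measureReal_def, measureReal_def, hν]
          simp only
          rw [Measure.map_apply hθm measurableSet_Ioc]
        rw [h1, ← Set.Iic_sdiff_Iic, measureReal_sdiff (Set.Iic_subset_Iic.2 (hT (by omega))) measurableSet_Iic]
        simp only [hF, ProbabilityTheory.cdf_eq_real]
      · intro l _ l' _ hne
        rw [Function.onFun, Set.disjoint_left]
        intro x hx hx'
        exact hne ((huniq x l hx.1 hx.2).trans (huniq x l' hx'.1 hx'.2).symm)
      · intro l _
        exact hθm measurableSet_Ioc
    have hp0 : (0:ℝ) < p := by exact_mod_cast hp.pos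
    rw [← ENNReal.ofReal_toReal (measure_ne_top (μ i) _), ← measureReal_def, hreal,
      ENNReal.ofReal_div_of_pos hp0]
    simp

lemma fair (m r : ℕ) (hm : 0 < m) (hr : 0 < r) : Fair m r := by
  induction r using induction_on_primes with
  | zero => omega
  | one => exact fair_one m
  | prime_mul p n hp ih =>
    have hn : 0 < n := Nat.pos_of_mul_pos_left hr
    exact fair_mul m p n hp.pos hn (fair_prime m p hm hp) (ih hn)

end Neck

open MeasureTheory

/-- Alon's necklace splitting theorem (continuous version): `m` measures on `ℝ`
can be split fairly among `r` thieves using `(r-1)m` cuts. -/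
theorem necklace_splitting (m r : ℕ) (hm : 0 < m) (hr : 0 < r)
    (μ : Fin m → Measure ℝ)
    (hprob : ∀ i, IsProbabilityMeasure (μ i))
    (hac : ∀ i, μ i ≪ volume) :
    ∃ (t : Fin ((r - 1) * m) → ℝ) (c : Fin ((r - 1) * m + 1) → Fin r),
      Monotone t ∧
      ∀ (i : Fin m) (j : Fin r),
        μ i (⋃ k, ⋃ (_ : c k = j),
          {x : ℝ | (∀ l : Fin ((r - 1) * m), (l : ℕ) < (k : ℕ) → t l ≤ x) ∧
                   (∀ l : Fin ((r - 1) * m), (k : ℕ) ≤ (l : ℕ) → x ≤ t l)})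
          = 1 / r := by
  classical
  obtain ⟨S, χ, hS, hχ, hμ⟩ := Neck.fair m r hm hr μ hprob hac
  obtain ⟨U, hSU, hU⟩ := Infinite.exists_superset_card_eq S _ hS
  set t := U.orderEmbOfFin hU with ht
  have hmem : ∀ l, t l ∈ U := fun l => U.orderEmbOfFin_mem hU l
  have hsur : ∀ s ∈ U, ∃ l, t l = s := by
    intro s hs
    have : s ∈ Set.range t := by rw [ht, Finset.range_orderEmbOfFin]; exact hs
    exact this
  set I : Fin ((r-1)*m+1) → Set ℝ := fun k =>
    {x : ℝ | (∀ l : Fin ((r - 1) * m), (l : ℕ) < (k : ℕ) → t l ≤ x) ∧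
                   (∀ l : Fin ((r - 1) * m), (k : ℕ) ≤ (l : ℕ) → x ≤ t l)} with hI
  have hconst : ∀ k, ∀ x ∈ I k, ∀ y ∈ I k, x ∉ U → y ∉ U → χ x = χ y := by
    have key : ∀ k, ∀ x ∈ I k, ∀ y ∈ I k, x ∉ U → y ∉ U → x ≤ y → χ x = χ y := by
      intro k x hx y hy hxU hyU hxy
      refine hχ x y hxy ?_
      rintro s hs ⟨h1, h2⟩
      obtain ⟨l, rfl⟩ := hsur s (hSU hs)
      rcases lt_or_ge l.val k.val with h | h
      · exact hxU (by rw [le_antisymm h1 (hx.1 l h)]; exact hmem l)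
      · exact hyU (by rw [← le_antisymm h2 (hy.2 l h)]; exact hmem l)
    intro k x hx y hy hxU hyU
    rcases le_total x y with h | h
    · exact key k x hx y hy hxU hyU h
    · exact (key k y hy x hx hyU hxU h).symm
  have hcov : ∀ x, ∃ k, x ∈ I k := by
    intro x
    have hx : ∃ k : ℕ, ∀ l : Fin ((r-1)*m), k ≤ l.val → x ≤ t l :=
      ⟨(r-1)*m, fun l hl => absurd l.isLt (by omega)⟩
    have h1 := Nat.find_spec hx
    have h3 : Nat.find hx ≤ (r-1)*m := Nat.find_min' hx (fun l hl => absurd l.isLt (by omega))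
    refine ⟨⟨Nat.find hx, by omega⟩, ?_, h1⟩
    intro l hl
    have h2 := Nat.find_min (H := hx) (m := Nat.find hx - 1) (by simp only at hl; omega)
    push Not at h2
    obtain ⟨l', h4, h5⟩ := h2
    refine le_trans (t.monotone ?_) h5.le
    rw [Fin.le_def]
    simp only at hl
    omega
  let c : Fin ((r-1)*m+1) → Fin r := fun k =>
    if h : ∃ x, x ∈ I k ∧ x ∉ U then χ h.choose else ⟨0, hr⟩
  have hc : ∀ k, ∀ x ∈ I k, x ∉ U → c k = χ x := by
    intro k x hx hxU
    have h : ∃ x, x ∈ I k ∧ x ∉ U := ⟨x, hx, hxU⟩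
    simp only [c, dif_pos h]
    exact hconst k _ h.choose_spec.1 x hx h.choose_spec.2 hxU
  refine ⟨t, c, t.monotone, ?_⟩
  intro i j
  rw [← hμ i j]
  apply measure_congr
  have hnull : ∀ᵐ x ∂(μ i), x ∉ (U : Set ℝ) := by
    rw [ae_iff]
    simp only [not_not]
    exact hac i (U.finite_toSet.measure_zero _)
  filter_upwards [hnull] with x hx
  have hx' : x ∉ U := hx
  apply propext
  change (x ∈ ⋃ k, ⋃ (_ : c k = j), I k) ↔ x ∈ χ ⁻¹' {j}
  simp only [Set.mem_iUnion, exists_prop, Set.mem_preimage, Set.mem_singleton_iff]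
  constructor
  · rintro ⟨k, h1, h2⟩
    rw [← hc k x h2 hx', h1]
  · intro h
    obtain ⟨k, hk⟩ := hcov x
    exact ⟨k, by rw [hc k x hk hx', h], hk⟩
end
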